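/- There exist absolute constants c > 0 and c0 > 0 such that the following holds. Let X be sufficiently large and let y satisfy c0 ≤ y ≤ (log X)^{5/9}. Then there exist at least X^{1 − 1/log log X} values x ∈ [X, 2X] such that S(x+y) − S(x) ≥ c · y^{1/10}, i.e. the interval (x, x+y] contains at least c·y^{1/10} integers expressible as a sum of two squares. -/

import Mathlib

/-- `n` is a positive integer expressible as a sum of two squares. -/
def IsSumTwoSquares (n : ℕ) : Prop := 0 < n ∧ ∃ a b : ℕ, n = a ^ 2 + b ^ 2

/-- `Scount x` counts the positive integers `n ≤ x` expressible as a sum of two squares. -/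
noncomputable def Scount (x : ℝ) : ℕ := {n : ℕ | (n : ℝ) ≤ x ∧ IsSumTwoSquares n}.ncard

open Finset

section
open Finset

/-- elementary symmetric sums -/
noncomputable def esy (g : ℕ → ℝ) (B : Finset ℕ) (n : ℕ) : ℝ :=
  ∑ S ∈ B.powersetCard n, ∏ p ∈ S, g p

/-- truncated inclusion-exclusion -/
noncomputable def trc (g : ℕ → ℝ) (B : Finset ℕ) (n : ℕ) : ℝ :=
  ∑ k ∈ range (n + 1), (-1 : ℝ) ^ k * esy g B k

lemma esy_zero (g : ℕ → ℝ) (B : Finset ℕ) : esy g B 0 = 1 := by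
  simp [esy]

lemma esy_insert (g : ℕ → ℝ) (B : Finset ℕ) (p : ℕ) (hp : p ∉ B) (n : ℕ) :
    esy g (insert p B) (n + 1) = esy g B (n + 1) + g p * esy g B n := by
  unfold esy
  rw [powersetCard_succ_insert hp, sum_union]
  · congr 1
    rw [sum_image, mul_sum]
    · apply sum_congr rfl
      intro S hS
      rw [prod_insert]
      intro h
      exact hp ((mem_powersetCard.1 hS).1 h)
    · intro S hS T hT h
      have hS' : p ∉ S := fun h => hp ((mem_powersetCard.1 hS).1 h)
      have hT' : p ∉ T := fun h => hp ((mem_powersetCard.1 hT).1 h)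
      rw [← erase_insert hS', ← erase_insert hT', h]
  · rw [disjoint_left]
    intro S hS hS2
    rw [mem_image] at hS2
    obtain ⟨T, hT, rfl⟩ := hS2
    exact hp ((mem_powersetCard.1 hS).1 (mem_insert_self _ _))

lemma esy_nonneg (g : ℕ → ℝ) (B : Finset ℕ) (hg : ∀ p ∈ B, 0 ≤ g p) (n : ℕ) :
    0 ≤ esy g B n := by
  apply sum_nonneg
  intro S hS
  exact prod_nonneg fun p hp => hg p ((mem_powersetCard.1 hS).1 hp)

lemma esy_le (g : ℕ → ℝ) (B : Finset ℕ) (hg : ∀ p ∈ B, 0 ≤ g p) (n : ℕ) :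
    esy g B n ≤ (∑ p ∈ B, g p) ^ n / n.factorial := by
  induction B using Finset.induction_on generalizing n with
  | empty =>
    cases n with
    | zero => simp [esy]
    | succ n => rw [esy, powersetCard_eq_empty.2 (by simp)]; simp
  | insert p B hp ih =>
    cases n with
    | zero => simp [esy_zero]
    | succ n =>
      have hB : ∀ q ∈ B, 0 ≤ g q := fun q hq => hg q (mem_insert_of_mem hq)
      have hgp := hg p (mem_insert_self _ _)
      rw [esy_insert g B p hp, sum_insert hp]
      set s := ∑ q ∈ B, g q
      have hs : 0 ≤ s := sum_nonneg hB
      have h1 := ih hB (n+1)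
      have h2 := mul_le_mul_of_nonneg_left (ih hB n) hgp
      refine (add_le_add h1 h2).trans ?_
      have hbin : s ^ (n+1) + (n+1) * s ^ n * g p ≤ (g p + s) ^ (n+1) := by
        clear h1 h2 ih
        induction n with
        | zero => simp; linarith
        | succ m ihm =>
          have := mul_le_mul_of_nonneg_left ihm (add_nonneg hgp hs)
          rw [pow_succ (g p + s) (m+1), mul_comm ((g p + s)^(m+1))]
          refine le_trans ?_ this
          push_cast
          have e : (g p + s) * (s ^ (m + 1) + (↑m + 1) * s ^ m * g p) - (s ^ (m + 1 + 1) + (↑m + 1 + 1) * s ^ (m + 1) * g p) = (m+1) * s^m * (g p)^2 := by ring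
          have : 0 ≤ ((m:ℝ)+1) * s^m * (g p)^2 := by positivity
          linarith
      rw [Nat.factorial_succ]
      push_cast
      have hf : (0:ℝ) < n.factorial := by positivity
      have e : s ^ (n+1) / ((↑n + 1) * (n.factorial:ℝ)) + g p * (s ^ n / n.factorial)
        = (s ^ (n+1) + (n+1) * s ^ n * g p) / ((n+1) * n.factorial) := by
        field_simp
      rw [e]
      gcongr

lemma trc_insert (g : ℕ → ℝ) (B : Finset ℕ) (p : ℕ) (hp : p ∉ B) (n : ℕ) :
    trc g (insert p B) (n + 1) = trc g B (n + 1) - g p * trc g B n := by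
  unfold trc
  rw [sum_range_succ', sum_range_succ' _ (n+1)]
  simp only [esy_insert g B p hp, esy_zero]
  rw [mul_sum]
  have : ∀ k ∈ range (n+1), (-1:ℝ)^(k+1) * (esy g B (k+1) + g p * esy g B k)
     = (-1:ℝ)^(k+1) * esy g B (k+1) - g p * ((-1)^k * esy g B k) := by
    intro k _; ring
  rw [sum_congr rfl this, sum_sub_distrib]
  ring

lemma prod_one_sub_mem (g : ℕ → ℝ) (B : Finset ℕ) (hg : ∀ p ∈ B, 0 ≤ g p ∧ g p ≤ 1) :
    0 ≤ ∏ p ∈ B, (1 - g p) ∧ ∏ p ∈ B, (1 - g p) ≤ 1 := by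
  constructor
  · exact prod_nonneg fun p hp => by linarith [(hg p hp).2]
  · exact prod_le_one (fun p hp => by linarith [(hg p hp).2]) (fun p hp => by linarith [(hg p hp).1])

lemma bonferroni (g : ℕ → ℝ) (B : Finset ℕ) (hg : ∀ p ∈ B, 0 ≤ g p ∧ g p ≤ 1) (n : ℕ) :
    0 ≤ (-1 : ℝ) ^ n * (trc g B n - ∏ p ∈ B, (1 - g p)) ∧
    (-1 : ℝ) ^ n * (trc g B n - ∏ p ∈ B, (1 - g p)) ≤ esy g B (n + 1) := by
  induction B using Finset.induction_on generalizing n with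
  | empty =>
    have : trc g ∅ n = 1 := by
      unfold trc
      rw [sum_range_succ']
      simp [esy]
      apply sum_eq_zero
      intro k hk
      rw [powersetCard_eq_empty.2] <;> simp
    rw [this, esy, powersetCard_eq_empty.2 (by simp)]
    simp
  | insert p B hp ih =>
    have hB : ∀ q ∈ B, 0 ≤ g q ∧ g q ≤ 1 := fun q hq => hg q (mem_insert_of_mem hq)
    have hgp := hg p (mem_insert_self _ _)
    have hV := prod_one_sub_mem g B hB
    rw [prod_insert hp, esy_insert g B p hp]
    cases n with
    | zero =>
      have h0 : ∀ B, trc g B 0 = 1 := by intro B; simp [trc, esy_zero]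
      have h1 := ih hB 0
      rw [h0] at h1 ⊢
      simp only [esy_zero] 
      simp at h1 ⊢
      constructor
      · nlinarith [h1.1, hgp.1, hgp.2]
      · nlinarith [h1.1, h1.2, hgp.1, hgp.2]
    | succ n =>
      rw [trc_insert g B p hp]
      have h1 := ih hB (n+1)
      have h2 := ih hB n
      set V := ∏ p ∈ B, (1 - g p)
      have e : (-1:ℝ)^(n+1) * (trc g B (n+1) - g p * trc g B n - (1 - g p) * V)
        = (-1:ℝ)^(n+1) * (trc g B (n+1) - V) + g p * ((-1:ℝ)^n * (trc g B n - V)) := by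
        rw [pow_succ]; ring
      rw [e]
      constructor
      · have := mul_nonneg hgp.1 h2.1
        linarith [h1.1]
      · have := mul_le_mul_of_nonneg_left h2.2 hgp.1
        linarith [h1.2]

/-- indicator of an event family -/
noncomputable def ind1 {τ : Type} (E : ℕ → τ → Prop) (t : τ) (p : ℕ) : ℝ :=
  open Classical in if E p t then 1 else 0

lemma ind1_mem {τ : Type} (E : ℕ → τ → Prop) (t : τ) (p : ℕ) :
    0 ≤ ind1 E t p ∧ ind1 E t p ≤ 1 := by
  unfold ind1; split_ifs <;> simp

/-- `F` is a linear combination of products of indicators, with value `G` on the model `g`. -/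
def SvRep {τ : Type} (E : ℕ → τ → Prop) (g : ℕ → ℝ) (U : Finset ℕ) (Y Z : ℝ) (F : τ → ℝ) (G : ℝ) :
    Prop :=
  ∃ (ι : Type) (I : Finset ι) (c : ι → ℝ) (S : ι → Finset ℕ),
    (∀ i ∈ I, S i ⊆ U ∧ (∏ p ∈ S i, (p : ℝ)) ≤ Y) ∧ ∑ i ∈ I, |c i| ≤ Z ∧
    (∀ t, F t = ∑ i ∈ I, c i * ∏ p ∈ S i, ind1 E t p) ∧ G = ∑ i ∈ I, c i * ∏ p ∈ S i, g p

lemma SvRep.mul {τ : Type} {E : ℕ → τ → Prop} {g : ℕ → ℝ} {U U' : Finset ℕ} {Y Z Y' Z' : ℝ}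
    {F F' : τ → ℝ} {G G' : ℝ} (h : SvRep E g U Y Z F G) (h' : SvRep E g U' Y' Z' F' G')
    (hU : Disjoint U U') (hY : 0 ≤ Y) (hZ : 0 ≤ Z) :
    SvRep E g (U ∪ U') (Y * Y') (Z * Z') (fun t => F t * F' t) (G * G') := by
  obtain ⟨ι, I, c, S, h1, h2, h3, h4⟩ := h
  obtain ⟨ι', I', c', S', h1', h2', h3', h4'⟩ := h'
  have hd : ∀ i ∈ I, ∀ j ∈ I', Disjoint (S i) (S' j) := fun i hi j hj =>
    disjoint_of_subset_left (h1 i hi).1 (disjoint_of_subset_right (h1' j hj).1 hU)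
  refine ⟨ι × ι', I ×ˢ I', fun x => c x.1 * c' x.2, fun x => S x.1 ∪ S' x.2, ?_, ?_, ?_, ?_⟩
  · rintro ⟨i, j⟩ hij
    rw [mem_product] at hij
    refine ⟨union_subset_union (h1 i hij.1).1 (h1' j hij.2).1, ?_⟩
    simp only
    rw [prod_union (hd i hij.1 j hij.2)]
    exact mul_le_mul (h1 i hij.1).2 (h1' j hij.2).2 (prod_nonneg fun _ _ => by positivity) hY
  · rw [sum_product]
    simp only [abs_mul]
    rw [← sum_mul_sum]
    exact mul_le_mul h2 h2' (sum_nonneg fun _ _ => abs_nonneg _) hZ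
  · intro t
    simp only
    rw [h3, h3', sum_mul_sum, sum_product]
    apply sum_congr rfl; intro i hi
    apply sum_congr rfl; intro j hj
    rw [prod_union (hd i hi j hj)]; ring
  · rw [h4, h4', sum_mul_sum, sum_product]
    apply sum_congr rfl; intro i hi
    apply sum_congr rfl; intro j hj
    rw [prod_union (hd i hi j hj)]; ring

lemma SvRep.sub {τ : Type} {E : ℕ → τ → Prop} {g : ℕ → ℝ} {U : Finset ℕ} {Y Z Z' : ℝ}
    {F F' : τ → ℝ} {G G' : ℝ} (h : SvRep E g U Y Z F G) (h' : SvRep E g U Y Z' F' G') :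
    SvRep E g U Y (Z + Z') (fun t => F t - F' t) (G - G') := by
  obtain ⟨ι, I, c, S, h1, h2, h3, h4⟩ := h
  obtain ⟨ι', I', c', S', h1', h2', h3', h4'⟩ := h'
  refine ⟨ι ⊕ ι', I.disjSum I', Sum.elim c (fun j => - c' j), Sum.elim S S', ?_, ?_, ?_, ?_⟩
  · rintro (i | j) hij
    · exact h1 i (by simpa using hij)
    · exact h1' j (by simpa using hij)
  · rw [sum_disjSum]
    simp
    linarith
  · intro t
    rw [sum_disjSum]
    simp only [Sum.elim_inl, Sum.elim_inr, h3, h3', neg_mul, sum_neg_distrib]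
    ring
  · rw [sum_disjSum]
    simp only [Sum.elim_inl, Sum.elim_inr, h4, h4', neg_mul, sum_neg_distrib]
    ring

lemma SvRep.mono {τ : Type} {E : ℕ → τ → Prop} {g : ℕ → ℝ} {U : Finset ℕ} {Y Z Y' Z' : ℝ}
    {F : τ → ℝ} {G : ℝ} (h : SvRep E g U Y Z F G) (hY : Y ≤ Y') (hZ : Z ≤ Z') :
    SvRep E g U Y' Z' F G := by
  obtain ⟨ι, I, c, S, h1, h2, h3, h4⟩ := h
  exact ⟨ι, I, c, S, fun i hi => ⟨(h1 i hi).1, (h1 i hi).2.trans hY⟩, h2.trans hZ, h3, h4⟩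

lemma SvRep.apply {τ : Type} {E : ℕ → τ → Prop} {g : ℕ → ℝ} {U : Finset ℕ} {Y Z : ℝ}
    {F : τ → ℝ} {G : ℝ} (h : SvRep E g U Y Z F G) (T : Finset τ) (φ : τ → ℝ) (M Err : ℝ)
    (hErr : 0 ≤ Err)
    (hm : ∀ S ⊆ U, (∏ p ∈ S, (p : ℝ)) ≤ Y →
      |∑ t ∈ T, φ t * ∏ p ∈ S, ind1 E t p - M * ∏ p ∈ S, g p| ≤ Err) :
    |∑ t ∈ T, φ t * F t - M * G| ≤ Z * Err := by
  obtain ⟨ι, I, c, S, h1, h2, h3, h4⟩ := h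
  have e : ∑ t ∈ T, φ t * F t - M * G =
      ∑ i ∈ I, c i * (∑ t ∈ T, φ t * ∏ p ∈ S i, ind1 E t p - M * ∏ p ∈ S i, g p) := by
    simp only [mul_sub, sum_sub_distrib, h3, h4, mul_sum]
    rw [sum_comm]
    congr 1
    · apply sum_congr rfl; intro i _
      apply sum_congr rfl; intro t _; ring
    · apply sum_congr rfl; intro i _; ring
  rw [e]
  calc _ ≤ ∑ i ∈ I, |c i * (∑ t ∈ T, φ t * ∏ p ∈ S i, ind1 E t p - M * ∏ p ∈ S i, g p)| :=
        abs_sum_le_sum_abs _ _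
    _ ≤ ∑ i ∈ I, |c i| * Err := by
        apply sum_le_sum; intro i hi
        rw [abs_mul]
        exact mul_le_mul_of_nonneg_left (hm _ (h1 i hi).1 (h1 i hi).2) (abs_nonneg _)
    _ ≤ Z * Err := by
        rw [← sum_mul]; exact mul_le_mul_of_nonneg_right h2 hErr

lemma sum_choose_le (b n : ℕ) : ∑ k ∈ range (n + 1), b.choose k ≤ (b + 1) ^ n := by
  induction n with
  | zero => simp
  | succ n ih =>
    rw [sum_range_succ, pow_succ]
    have h1 : b.choose (n+1) ≤ b * b.choose n := by
      have := Nat.choose_succ_right_eq b n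
      calc b.choose (n+1) ≤ b.choose (n+1) * (n+1) := Nat.le_mul_of_pos_right _ (by omega)
        _ = b.choose n * (b - n) := this
        _ ≤ b.choose n * b := Nat.mul_le_mul_left _ (by omega)
        _ = _ := mul_comm _ _
    have h2 : b.choose n ≤ ∑ k ∈ range (n + 1), b.choose k :=
      single_le_sum (f := fun k => b.choose k) (fun _ _ => Nat.zero_le _) (by simp)
    nlinarith

lemma prod_le_pow_of_card {B S : Finset ℕ} {z : ℝ} {n : ℕ} (hz : 1 ≤ z) (hB : ∀ p ∈ B, (p:ℝ) ≤ z)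
    (hS : S ⊆ B) (hc : S.card ≤ n) : ∏ p ∈ S, (p : ℝ) ≤ z ^ n := by
  calc ∏ p ∈ S, (p : ℝ) ≤ ∏ p ∈ S, z := prod_le_prod (fun _ _ => by positivity) fun p hp => hB p (hS hp)
    _ = z ^ S.card := by simp
    _ ≤ z ^ n := pow_le_pow_right₀ hz hc

lemma card_block_le {B : Finset ℕ} {z : ℝ} (hz : 1 ≤ z) (hB : ∀ p ∈ B, 2 ≤ p ∧ (p:ℝ) ≤ z) :
    (B.card : ℝ) + 1 ≤ z := by
  have h1 : B ⊆ Icc 2 ⌊z⌋₊ := by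
    intro p hp
    rw [mem_Icc]
    exact ⟨(hB p hp).1, Nat.le_floor (hB p hp).2⟩
  have h2 := card_le_card h1
  rw [Nat.card_Icc] at h2
  have h3 : 1 ≤ ⌊z⌋₊ := Nat.le_floor (by simpa using hz)
  have h4 : B.card + 1 ≤ ⌊z⌋₊ := by omega
  calc (B.card : ℝ) + 1 = ((B.card + 1 : ℕ) : ℝ) := by push_cast; ring
    _ ≤ (⌊z⌋₊ : ℝ) := by exact_mod_cast h4
    _ ≤ z := Nat.floor_le (by linarith)

lemma rep_trc {τ : Type} (E : ℕ → τ → Prop) (g : ℕ → ℝ) {B : Finset ℕ} {z : ℝ} (hz : 1 ≤ z)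
    (hB : ∀ p ∈ B, 2 ≤ p ∧ (p:ℝ) ≤ z) (n : ℕ) :
    SvRep E g B (z ^ n) (z ^ n) (fun t => trc (ind1 E t) B n) (trc g B n) := by
  refine ⟨(_ : ℕ) × Finset ℕ, (range (n+1)).sigma (fun k => B.powersetCard k),
    fun x => (-1) ^ x.1, fun x => x.2, ?_, ?_, ?_, ?_⟩
  · rintro ⟨k, S⟩ h
    simp only [mem_sigma, mem_range, mem_powersetCard] at h
    exact ⟨h.2.1, prod_le_pow_of_card hz (fun p hp => (hB p hp).2) h.2.1 (by simp; omega)⟩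
  · simp only [abs_pow, abs_neg, abs_one, one_pow, sum_const, card_sigma, card_powersetCard, nsmul_eq_mul, mul_one]
    have h1 := sum_choose_le B.card n
    have h2 := card_block_le hz hB
    calc ((∑ k ∈ range (n+1), B.card.choose k : ℕ) : ℝ) ≤ ((B.card + 1) ^ n : ℕ) := by exact_mod_cast h1
      _ = ((B.card : ℝ) + 1) ^ n := by push_cast; ring
      _ ≤ z ^ n := by gcongr
  · intro t
    simp only [trc, esy, sum_sigma, mul_sum]
  · simp only [trc, esy, sum_sigma, mul_sum]

lemma rep_esy {τ : Type} (E : ℕ → τ → Prop) (g : ℕ → ℝ) {B : Finset ℕ} {z : ℝ} (hz : 1 ≤ z)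
    (hB : ∀ p ∈ B, 2 ≤ p ∧ (p:ℝ) ≤ z) (n : ℕ) :
    SvRep E g B (z ^ n) (z ^ n) (fun t => esy (ind1 E t) B n) (esy g B n) := by
  refine ⟨Finset ℕ, B.powersetCard n, fun x => 1, fun x => x, ?_, ?_, ?_, ?_⟩
  · rintro S h
    simp only [mem_powersetCard] at h
    exact ⟨h.1, prod_le_pow_of_card hz (fun p hp => (hB p hp).2) h.1 h.2.le⟩
  · simp only [abs_one, sum_const, card_powersetCard, nsmul_eq_mul, mul_one]
    have h1 : B.card.choose n ≤ (B.card+1)^n :=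
      (single_le_sum (f := fun k => B.card.choose k) (fun _ _ => Nat.zero_le _) (by simp)).trans
      (sum_choose_le B.card n)
    have h2 := card_block_le hz hB
    calc ((B.card.choose n : ℕ) : ℝ) ≤ ((B.card + 1) ^ n : ℕ) := by exact_mod_cast h1
      _ = ((B.card : ℝ) + 1) ^ n := by push_cast; ring
      _ ≤ z ^ n := by gcongr
  · intro t
    simp only [esy, one_mul]
  · simp only [esy, one_mul]

section main
variable {τ : Type} (E : ℕ → τ → Prop) (g : ℕ → ℝ) (B : ℕ → Finset ℕ) (z : ℕ → ℝ) (k : ℕ → ℕ)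

noncomputable def bup (g : ℕ → ℝ) (B : ℕ → Finset ℕ) (k : ℕ → ℕ) (m : ℕ) : ℝ :=
  ∏ i ∈ range m, trc g (B i) (2 * k i)

noncomputable def blow (g : ℕ → ℝ) (B : ℕ → Finset ℕ) (k : ℕ → ℕ) : ℕ → ℝ
  | 0 => 1
  | (m+1) => blow g B k m * trc g (B m) (2 * k m) - bup g B k m * esy g (B m) (2 * k m + 1)

lemma rep_bup (m : ℕ) (hz : ∀ i < m, 1 ≤ z i) (hB : ∀ i < m, ∀ p ∈ B i, 2 ≤ p ∧ (p:ℝ) ≤ z i)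
    (hd : ∀ i < m, ∀ j < m, i ≠ j → Disjoint (B i) (B j)) :
    SvRep E g ((range m).biUnion B) (∏ i ∈ range m, z i ^ (2 * k i + 1)) (∏ i ∈ range m, z i ^ (2 * k i + 1))
      (fun t => bup (ind1 E t) B k m) (bup g B k m) := by
  induction m with
  | zero =>
    refine ⟨Unit, {()}, fun _ => 1, fun _ => ∅, ?_, ?_, ?_, ?_⟩ <;> simp [bup]
  | succ m ih =>
    have ih := ih (fun i hi => hz i (by omega)) (fun i hi => hB i (by omega))
      (fun i hi j hj => hd i (by omega) j (by omega))
    have hpos : 0 ≤ ∏ i ∈ range m, z i ^ (2 * k i + 1) :=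
      prod_nonneg fun i hi => pow_nonneg (by linarith [hz i (by simp at hi; omega)]) _
    have h1 := (rep_trc E g (hz m (by omega)) (hB m (by omega)) (2 * k m)).mono
      (pow_le_pow_right₀ (hz m (by omega)) (Nat.le_succ _)) (pow_le_pow_right₀ (hz m (by omega)) (Nat.le_succ _))
    have h2 := ih.mul h1 (by
      rw [disjoint_biUnion_left]
      intro i hi
      simp at hi
      exact hd i (by omega) m (by omega) (by omega)) hpos hpos
    have e1 : (range (m+1)).biUnion B = (range m).biUnion B ∪ B m := by
      rw [range_add_one, biUnion_insert, union_comm]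
    rw [e1, prod_range_succ]
    simpa only [bup, prod_range_succ] using h2

lemma rep_blow (m : ℕ) (hz : ∀ i < m, 1 ≤ z i) (hB : ∀ i < m, ∀ p ∈ B i, 2 ≤ p ∧ (p:ℝ) ≤ z i)
    (hd : ∀ i < m, ∀ j < m, i ≠ j → Disjoint (B i) (B j)) :
    SvRep E g ((range m).biUnion B) (∏ i ∈ range m, z i ^ (2 * k i + 1))
      ((m + 1) * ∏ i ∈ range m, z i ^ (2 * k i + 1))
      (fun t => blow (ind1 E t) B k m) (blow g B k m) := by
  induction m with
  | zero =>
    refine ⟨Unit, {()}, fun _ => 1, fun _ => ∅, ?_, ?_, ?_, ?_⟩ <;> simp [blow]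
  | succ m ih =>
    have ih := ih (fun i hi => hz i (by omega)) (fun i hi => hB i (by omega))
      (fun i hi j hj => hd i (by omega) j (by omega))
    have hu := rep_bup E g B z k m (fun i hi => hz i (by omega)) (fun i hi => hB i (by omega))
      (fun i hi j hj => hd i (by omega) j (by omega))
    have hpos : 0 ≤ ∏ i ∈ range m, z i ^ (2 * k i + 1) :=
      prod_nonneg fun i hi => pow_nonneg (by linarith [hz i (by simp at hi; omega)]) _
    have h1 := (rep_trc E g (hz m (by omega)) (hB m (by omega)) (2 * k m)).mono
      (pow_le_pow_right₀ (hz m (by omega)) (Nat.le_succ _)) (pow_le_pow_right₀ (hz m (by omega)) (Nat.le_succ _))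
    have h1' := rep_esy E g (hz m (by omega)) (hB m (by omega)) (2 * k m + 1)
    have hdis : Disjoint ((range m).biUnion B) (B m) := by
      rw [disjoint_biUnion_left]
      intro i hi
      simp at hi
      exact hd i (by omega) m (by omega) (by omega)
    have h2 := (ih.mul h1 hdis hpos (by positivity)).sub (hu.mul h1' hdis hpos hpos)
    have e1 : (range (m+1)).biUnion B = (range m).biUnion B ∪ B m := by
      rw [range_add_one, biUnion_insert, union_comm]
    rw [e1, prod_range_succ]
    refine SvRep.mono h2 le_rfl (le_of_eq ?_)
    simp only [Nat.succ_eq_add_one]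
    push_cast; ring

lemma trc_even_bounds (B : Finset ℕ) (hg : ∀ p ∈ B, 0 ≤ g p ∧ g p ≤ 1) (k : ℕ) :
    ∏ p ∈ B, (1 - g p) ≤ trc g B (2 * k) ∧
      trc g B (2 * k) - esy g B (2 * k + 1) ≤ ∏ p ∈ B, (1 - g p) := by
  have := bonferroni g B hg (2 * k)
  rw [pow_mul] at this
  norm_num at this
  constructor <;> linarith [this.1, this.2]

lemma bup_blow_sandwich (m : ℕ) (hg : ∀ i < m, ∀ p ∈ B i, 0 ≤ g p ∧ g p ≤ 1) :
    ∏ i ∈ range m, ∏ p ∈ B i, (1 - g p) ≤ bup g B k m ∧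
    blow g B k m ≤ ∏ i ∈ range m, ∏ p ∈ B i, (1 - g p) ∧
    0 ≤ ∏ i ∈ range m, ∏ p ∈ B i, (1 - g p) := by
  induction m with
  | zero => simp [bup, blow]
  | succ m ih =>
    obtain ⟨i1, i2, i3⟩ := ih (fun i hi => hg i (by omega))
    have h := trc_even_bounds g (B m) (hg m (by omega)) (k m)
    have h0 := prod_one_sub_mem g (B m) (hg m (by omega))
    have he := esy_nonneg g (B m) (fun p hp => (hg m (by omega) p hp).1) (2 * k m + 1)
    have e : bup g B k (m+1) = bup g B k m * trc g (B m) (2 * k m) := by simp [bup, prod_range_succ]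
    rw [e, prod_range_succ, blow]
    set P := ∏ i ∈ range m, ∏ p ∈ B i, (1 - g p)
    set V := ∏ p ∈ B m, (1 - g p)
    set u := trc g (B m) (2 * k m)
    set s := esy g (B m) (2 * k m + 1)
    refine ⟨mul_le_mul i1 h.1 h0.1 (i3.trans i1), ?_, mul_nonneg i3 h0.1⟩
    have hu : 0 ≤ u := h0.1.trans h.1
    have a1 : blow g B k m * u ≤ P * u := mul_le_mul_of_nonneg_right i2 hu
    have a2 : P * s ≤ bup g B k m * s := mul_le_mul_of_nonneg_right i1 he
    have a3 : P * (u - s) ≤ P * V := mul_le_mul_of_nonneg_left h.2 i3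
    nlinarith

lemma bup_blow_model (m : ℕ) (hg : ∀ i < m, ∀ p ∈ B i, 0 ≤ g p ∧ g p ≤ 1) (ε : ℕ → ℝ)
    (hε0 : ∀ i < m, 0 ≤ ε i)
    (hε : ∀ i < m, esy g (B i) (2 * k i + 1) ≤ ε i * ∏ p ∈ B i, (1 - g p))
    (h2 : ∏ i ∈ range m, (1 + ε i) ≤ 2) :
    bup g B k m ≤ (∏ i ∈ range m, (1 + ε i)) * ∏ i ∈ range m, ∏ p ∈ B i, (1 - g p) ∧
    (2 - ∏ i ∈ range m, (1 + ε i)) * ∏ i ∈ range m, ∏ p ∈ B i, (1 - g p) ≤ blow g B k m := by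
  induction m with
  | zero => simp [bup, blow]; norm_num
  | succ m ih =>
    have hQ1 : 1 ≤ ∏ i ∈ range m, (1 + ε i) := by
      calc (1:ℝ) = ∏ i ∈ range m, (1:ℝ) := by simp
        _ ≤ _ := prod_le_prod (fun _ _ => by norm_num) (fun i hi => by linarith [hε0 i (by simp at hi; omega)])
    have hεm := hε0 m (by omega)
    rw [prod_range_succ] at h2
    have h2' : ∏ i ∈ range m, (1 + ε i) ≤ 2 := by nlinarith
    obtain ⟨i1, i2⟩ := ih (fun i hi => hg i (by omega)) (fun i hi => hε0 i (by omega)) (fun i hi => hε i (by omega)) h2'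
    obtain ⟨j1, j2, j3⟩ := bup_blow_sandwich g B k m (fun i hi => hg i (by omega))
    have h := trc_even_bounds g (B m) (hg m (by omega)) (k m)
    have h0 := prod_one_sub_mem g (B m) (hg m (by omega))
    have he := esy_nonneg g (B m) (fun p hp => (hg m (by omega) p hp).1) (2 * k m + 1)
    have hem := hε m (by omega)
    have e : bup g B k (m+1) = bup g B k m * trc g (B m) (2 * k m) := by simp [bup, prod_range_succ]
    rw [e, prod_range_succ, prod_range_succ, blow]
    set P := ∏ i ∈ range m, ∏ p ∈ B i, (1 - g p)
    set V := ∏ p ∈ B m, (1 - g p)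
    set u := trc g (B m) (2 * k m)
    set s := esy g (B m) (2 * k m + 1)
    set Q := ∏ i ∈ range m, (1 + ε i)
    have hu : 0 ≤ u := h0.1.trans h.1
    have hV := h0.1
    have hu2 : u ≤ (1 + ε m) * V := by linarith [h.2]
    have hQP : 0 ≤ Q * P := by positivity
    constructor
    · calc bup g B k m * u ≤ (Q * P) * ((1 + ε m) * V) := mul_le_mul i1 hu2 hu hQP
        _ = _ := by ring
    · have a1 : (2 - Q) * P * V ≤ blow g B k m * u :=
        (mul_le_mul_of_nonneg_left h.1 (mul_nonneg (by linarith) j3)).trans (mul_le_mul_of_nonneg_right i2 hu)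
      have a2 : bup g B k m * s ≤ (Q * P) * (ε m * V) := mul_le_mul i1 hem he hQP
      nlinarith

/-- The Brun–Hooley sieve. -/
theorem brun_hooley (m : ℕ) (hz : ∀ i < m, 1 ≤ z i)
    (hB : ∀ i < m, ∀ p ∈ B i, 2 ≤ p ∧ (p:ℝ) ≤ z i)
    (hd : ∀ i < m, ∀ j < m, i ≠ j → Disjoint (B i) (B j))
    (hg : ∀ i < m, ∀ p ∈ B i, 0 ≤ g p ∧ g p ≤ 1) (ε : ℕ → ℝ)
    (hε0 : ∀ i < m, 0 ≤ ε i)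
    (hε : ∀ i < m, esy g (B i) (2 * k i + 1) ≤ ε i * ∏ p ∈ B i, (1 - g p))
    (δ : ℝ) (hδ : δ ≤ 1)
    (h2 : ∏ i ∈ range m, (1 + ε i) ≤ 1 + δ)
    (T : Finset τ) (φ : τ → ℝ) (hφ : ∀ t ∈ T, 0 ≤ φ t) (M Err : ℝ) (hM : 0 ≤ M) (hErr : 0 ≤ Err)
    (hm : ∀ S ⊆ (range m).biUnion B, (∏ p ∈ S, (p : ℝ)) ≤ ∏ i ∈ range m, z i ^ (2 * k i + 1) →
      |∑ t ∈ T, φ t * ∏ p ∈ S, ind1 E t p - M * ∏ p ∈ S, g p| ≤ Err) :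
    |∑ t ∈ T, φ t * ∏ p ∈ (range m).biUnion B, (1 - ind1 E t p)
        - M * ∏ p ∈ (range m).biUnion B, (1 - g p)|
      ≤ δ * (M * ∏ p ∈ (range m).biUnion B, (1 - g p))
        + (m + 1) * (∏ i ∈ range m, z i ^ (2 * k i + 1)) * Err := by
  have hdd : Set.PairwiseDisjoint (↑(range m)) B := by
    intro i hi j hj hij
    simp at hi hj
    exact hd i hi j hj hij
  simp only [prod_biUnion hdd]
  have hY : 0 ≤ ∏ i ∈ range m, z i ^ (2 * k i + 1) :=
      prod_nonneg fun i hi => pow_nonneg (by linarith [hz i (by simp at hi; omega)]) _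
  have r1 := (rep_bup E g B z k m hz hB hd).apply T φ M Err hErr hm
  have r2 := (rep_blow E g B z k m hz hB hd).apply T φ M Err hErr hm
  have hi : ∀ t, ∀ i < m, ∀ p ∈ B i, 0 ≤ ind1 E t p ∧ ind1 E t p ≤ 1 := fun t _ _ p _ => ind1_mem E t p
  have s1 := fun t => bup_blow_sandwich (ind1 E t) B k m (hi t)
  obtain ⟨m1, m2⟩ := bup_blow_model g B k m hg ε hε0 hε (by linarith)
  obtain ⟨_, _, hV⟩ := bup_blow_sandwich g B k m hg
  set V := ∏ i ∈ range m, ∏ p ∈ B i, (1 - g p)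
  have u1 : ∑ t ∈ T, φ t * ∏ i ∈ range m, ∏ p ∈ B i, (1 - ind1 E t p) ≤ ∑ t ∈ T, φ t * bup (ind1 E t) B k m :=
    sum_le_sum fun t ht => mul_le_mul_of_nonneg_left (s1 t).1 (hφ t ht)
  have u2 : ∑ t ∈ T, φ t * blow (ind1 E t) B k m ≤ ∑ t ∈ T, φ t * ∏ i ∈ range m, ∏ p ∈ B i, (1 - ind1 E t p) :=
    sum_le_sum fun t ht => mul_le_mul_of_nonneg_left (s1 t).2.1 (hφ t ht)
  have m1' : M * bup g B k m ≤ M * ((1 + δ) * V) :=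
    mul_le_mul_of_nonneg_left (m1.trans (mul_le_mul_of_nonneg_right h2 hV)) hM
  have m2' : M * ((1 - δ) * V) ≤ M * blow g B k m :=
    mul_le_mul_of_nonneg_left (le_trans (mul_le_mul_of_nonneg_right (by linarith) hV) m2) hM
  rw [abs_le] at r1 r2 ⊢
  have hx : 0 ≤ (m:ℝ) * (∏ i ∈ range m, z i ^ (2 * k i + 1)) * Err := by positivity
  constructor <;> nlinarith [r1.1, r1.2, r2.1, r2.2]

end main
end

section
open Finset

/-- the nontrivial character mod 4, real-valued -/
noncomputable def chi (n : ℕ) : ℝ := ((ZMod.χ₄ (n : ZMod 4) : ℤ) : ℝ)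

lemma chi_eq (n : ℕ) : chi n = if n % 2 = 0 then 0 else if n % 4 = 1 then 1 else -1 := by
  unfold chi
  rw [ZMod.χ₄_nat_eq_if_mod_four]
  split_ifs <;> simp

lemma chi_mul (m n : ℕ) : chi (m * n) = chi m * chi n := by
  unfold chi; push_cast; rw [map_mul]; push_cast; ring

lemma chi_one : chi 1 = 1 := by simp [chi_eq]

lemma chi_zero : chi 0 = 0 := by simp [chi_eq]

lemma chi_abs (n : ℕ) : |chi n| ≤ 1 := by
  rw [chi_eq]; split_ifs <;> simp

lemma chi_le (n : ℕ) : chi n ≤ 1 := (abs_le.1 (chi_abs n)).2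

lemma chi_ge (n : ℕ) : -1 ≤ chi n := (abs_le.1 (chi_abs n)).1

lemma abel_id (c φ : ℕ → ℝ) (n : ℕ) :
    ∑ i ∈ range n, c i * φ i = (∑ i ∈ range n, c i) * φ n +
      ∑ i ∈ range n, (∑ j ∈ range (i + 1), c j) * (φ i - φ (i + 1)) := by
  induction n with
  | zero => simp
  | succ n ih =>
    rw [sum_range_succ, ih, sum_range_succ (fun i => (∑ j ∈ range (i + 1), c j) * (φ i - φ (i + 1))),
      sum_range_succ c]
    ring

lemma abel_upper (c φ : ℕ → ℝ) (B : ℝ) (hc : ∀ k, ∑ i ∈ range k, c i ≤ B)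
    (hφ : Antitone φ) (hφ0 : ∀ i, 0 ≤ φ i) (n : ℕ) : ∑ i ∈ range n, c i * φ i ≤ B * φ 0 := by
  rw [abel_id]
  have h1 : ∑ i ∈ range n, (∑ j ∈ range (i + 1), c j) * (φ i - φ (i + 1)) ≤
      ∑ i ∈ range n, B * (φ i - φ (i + 1)) := sum_le_sum fun i _ =>
    mul_le_mul_of_nonneg_right (hc _) (by linarith [hφ (Nat.le_succ i)])
  rw [← mul_sum, sum_range_sub'] at h1
  have h2 := mul_le_mul_of_nonneg_right (hc n) (hφ0 n)
  linarith

lemma abel_bound (c φ : ℕ → ℝ) (B : ℝ) (hc : ∀ k, |∑ i ∈ range k, c i| ≤ B)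
    (hφ : Antitone φ) (hφ0 : ∀ i, 0 ≤ φ i) (n : ℕ) : |∑ i ∈ range n, c i * φ i| ≤ B * φ 0 := by
  rw [abs_le]
  constructor
  · have := abel_upper (fun i => - c i) φ B (fun k => by
      rw [sum_neg_distrib]; linarith [(abs_le.1 (hc k)).1]) hφ hφ0 n
    simp only [neg_mul, sum_neg_distrib] at this
    linarith
  · exact abel_upper c φ B (fun k => (abs_le.1 (hc k)).2) hφ hφ0 n

lemma chi_sum (n : ℕ) : ∑ i ∈ range n, chi i = if n % 4 = 2 ∨ n % 4 = 3 then 1 else 0 := by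
  induction n with
  | zero => simp
  | succ n ih =>
    rw [sum_range_succ, ih, chi_eq]
    have : n % 4 = 0 ∨ n % 4 = 1 ∨ n % 4 = 2 ∨ n % 4 = 3 := by omega
    rcases this with h | h | h | h
    · have a : n % 2 = 0 := by omega
      have b : (n+1) % 4 = 1 := by omega
      simp [h, a, b]
    · have a : n % 2 = 1 := by omega
      have b : (n+1) % 4 = 2 := by omega
      simp [h, a, b]
    · have a : n % 2 = 0 := by omega
      have b : (n+1) % 4 = 3 := by omega
      simp [h, a, b]
    · have a : n % 2 = 1 := by omega
      have b : (n+1) % 4 = 0 := by omega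
      simp [h, a, b]

lemma chi_sum_shift (a k : ℕ) : |∑ i ∈ range k, chi (a + i)| ≤ 1 := by
  have h : ∑ i ∈ range k, chi (a + i) = ∑ i ∈ range (a + k), chi i - ∑ i ∈ range a, chi i := by
    rw [sum_range_add]; ring
  rw [h, chi_sum, chi_sum]
  split_ifs <;> simp

lemma sum_Ioc_range (f : ℕ → ℝ) (a b : ℕ) : ∑ n ∈ Ioc a b, f n = ∑ i ∈ range (b - a), f (a + 1 + i) := by
  have : Ioc a b = Ico (a+1) (b+1) := by ext; simp
  rw [this, sum_Ico_eq_sum_range, Nat.add_sub_add_right]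

lemma chi_abel (φ : ℕ → ℝ) (a b : ℕ) (hφ : ∀ m n, a + 1 ≤ m → m ≤ n → φ n ≤ φ m)
    (hφ0 : ∀ m, a + 1 ≤ m → 0 ≤ φ m) : |∑ n ∈ Ioc a b, chi n * φ n| ≤ φ (a + 1) := by
  rw [sum_Ioc_range (fun n => chi n * φ n)]
  have := abel_bound (fun i => chi (a + 1 + i)) (fun i => φ (a + 1 + i)) 1 (chi_sum_shift (a+1))
    (fun m n h => hφ _ _ (by omega) (by omega)) (fun m => hφ0 _ (by omega)) (b - a)
  simpa using this

/-- partial sums of L(1,χ) -/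
noncomputable def Vs (n : ℕ) : ℝ := ∑ e ∈ Ioc 0 n, chi e / e

lemma Vs_diff {m n : ℕ} (h : m ≤ n) : |Vs n - Vs m| ≤ 1 / (m + 1) := by
  have e : Vs n - Vs m = ∑ k ∈ Ioc m n, chi k * (1 / (k:ℝ)) := by
    unfold Vs
    rw [← sum_Ioc_consecutive _ (Nat.zero_le m) h]
    simp [div_eq_mul_inv]
  rw [e]
  have := chi_abel (fun k => 1 / (k:ℝ)) m n (fun a b ha hb => by
    have : (0:ℝ) < a := by exact_mod_cast (by omega : 0 < a)
    have hb' : (a:ℝ) ≤ b := by exact_mod_cast hb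
    exact one_div_le_one_div_of_le this hb') (fun a _ => by positivity)
  simpa using this

lemma exists_L : ∃ L : ℝ, 2 / 3 ≤ L ∧ L ≤ 2 ∧ ∀ n, |Vs n - L| ≤ 1 / ((n:ℝ) + 1) := by
  have hc : CauchySeq Vs := by
    apply cauchySeq_of_le_tendsto_0 (fun n : ℕ => 2 * (1 / ((n:ℝ) + 1)))
    · intro n m N hn hm
      rw [Real.dist_eq]
      have h1 := Vs_diff hn
      have h2 := Vs_diff hm
      rw [abs_le] at *
      constructor <;> linarith [h1.1, h1.2, h2.1, h2.2]
    · have := (tendsto_one_div_add_atTop_nhds_zero_nat (𝕜 := ℝ)).const_mul 2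
      simpa using this
  obtain ⟨L, hL⟩ := cauchySeq_tendsto_of_complete hc
  have hb : ∀ n, |Vs n - L| ≤ 1 / ((n:ℝ) + 1) := by
    intro n
    have h1 : Filter.Tendsto (fun m => |Vs m - Vs n|) Filter.atTop (nhds |L - Vs n|) :=
      (hL.sub_const _).abs
    rw [abs_sub_comm]
    apply le_of_tendsto h1
    filter_upwards [Filter.eventually_ge_atTop n] with m hm
    exact Vs_diff hm
  have h2 := hb 2
  have e2 : Vs 2 = 1 := by
    have : Ioc 0 2 = ({1, 2} : Finset ℕ) := by decide
    unfold Vs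
    rw [this]
    simp [chi_eq]
  rw [e2, abs_le] at h2
  norm_num at h2
  exact ⟨L, by linarith [h2.2], by linarith [h2.1], hb⟩

noncomputable def Lone : ℝ := Classical.choose exists_L
lemma Lone_ge : 2 / 3 ≤ Lone := (Classical.choose_spec exists_L).1
lemma Lone_le : Lone ≤ 2 := (Classical.choose_spec exists_L).2.1
lemma Vs_sub_Lone (n : ℕ) : |Vs n - Lone| ≤ 1 / ((n:ℝ) + 1) := (Classical.choose_spec exists_L).2.2 n

open ArithmeticFunction in
lemma sum_log_eq (N : ℕ) : ∑ n ∈ Ioc 0 N, Real.log n = ∑ d ∈ Ioc 0 N, vonMangoldt d * ((N / d : ℕ) : ℝ) := by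
  rw [← sum_Ioc_mul_zeta_eq_sum, vonMangoldt_mul_zeta]
  simp

lemma sum_log_bounds (N : ℕ) : N * Real.log N - N ≤ ∑ n ∈ Ioc 0 N, Real.log n ∧
    ∑ n ∈ Ioc 0 N, Real.log n ≤ N * Real.log N := by
  constructor
  · induction N with
    | zero => simp
    | succ N ih =>
      rw [← Finset.insert_Ioc_right_eq_Ioc_add_one (Nat.zero_le _), sum_insert (by simp)]
      rcases Nat.eq_zero_or_pos N with rfl | hN
      · simp
      have hN' : (0:ℝ) < N := by exact_mod_cast hN
      have h1 : Real.log ((N+1:ℕ):ℝ) - Real.log N ≤ 1 / N := by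
        rw [← Real.log_div (by positivity) (by positivity)]
        have := Real.log_le_sub_one_of_pos (x := ((N+1:ℕ):ℝ) / N) (by positivity)
        refine this.trans (le_of_eq ?_)
        push_cast; field_simp; ring
      have h2 : (N:ℝ) * (Real.log ((N+1:ℕ):ℝ) - Real.log N) ≤ 1 := by
        calc _ ≤ (N:ℝ) * (1 / N) := mul_le_mul_of_nonneg_left h1 hN'.le
          _ = 1 := by field_simp
      push_cast at *
      nlinarith
  · calc ∑ n ∈ Ioc 0 N, Real.log n ≤ ∑ n ∈ Ioc 0 N, Real.log N := by
          apply sum_le_sum; intro n hn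
          simp at hn
          exact Real.log_le_log (by exact_mod_cast hn.1) (by exact_mod_cast hn.2)
      _ = _ := by simp

open ArithmeticFunction in
lemma sum_Lambda_le (N : ℕ) : ∑ n ∈ Ioc 0 N, vonMangoldt n ≤ 6 * N := by
  have := Chebyshev.psi_le_const_mul_self (x := N) (by positivity)
  unfold Chebyshev.psi at this
  rw [Nat.floor_natCast] at this
  have h4 : Real.log 4 ≤ 2 := by
    have := Real.log_two_lt_d9
    rw [show (4:ℝ) = 2 ^ 2 by norm_num, Real.log_pow]; norm_num; linarith
  refine this.trans ?_
  have : (0:ℝ) ≤ N := by positivity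
  nlinarith

open ArithmeticFunction in
lemma mertens_Lambda (N : ℕ) (hN : 1 ≤ N) :
    Real.log N - 1 ≤ ∑ n ∈ Ioc 0 N, vonMangoldt n / n ∧
    ∑ n ∈ Ioc 0 N, vonMangoldt n / n ≤ Real.log N + 6 := by
  have hb := sum_log_bounds N
  rw [sum_log_eq] at hb
  have hN' : (0:ℝ) < N := by exact_mod_cast hN
  constructor
  · have h1 : ∑ d ∈ Ioc 0 N, vonMangoldt d * ((N / d : ℕ) : ℝ) ≤ N * ∑ n ∈ Ioc 0 N, vonMangoldt n / n := by
      rw [mul_sum]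
      apply sum_le_sum
      intro d hd
      have : ((N / d : ℕ) : ℝ) ≤ N / d := Nat.cast_div_le
      calc _ ≤ vonMangoldt d * ((N:ℝ) / d) := mul_le_mul_of_nonneg_left this vonMangoldt_nonneg
        _ = _ := by ring
    have h2 : (N:ℝ) * (Real.log N - 1) ≤ N * ∑ n ∈ Ioc 0 N, vonMangoldt n / n := by linarith [hb.1]
    exact le_of_mul_le_mul_left h2 hN'
  · have h1 : N * ∑ n ∈ Ioc 0 N, vonMangoldt n / n - ∑ n ∈ Ioc 0 N, vonMangoldt n ≤ ∑ d ∈ Ioc 0 N, vonMangoldt d * ((N / d : ℕ) : ℝ) := by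
      rw [mul_sum, ← sum_sub_distrib]
      apply sum_le_sum
      intro d hd
      have : (N:ℝ) / d - 1 ≤ ((N / d : ℕ) : ℝ) := by
        have := Nat.lt_floor_add_one ((N:ℝ) / d)
        rw [Nat.floor_div_natCast, Nat.floor_natCast] at this
        linarith
      calc _ = vonMangoldt d * ((N:ℝ) / d - 1) := by ring
        _ ≤ _ := mul_le_mul_of_nonneg_left this vonMangoldt_nonneg
    have h3 := sum_Lambda_le N
    have h2 : (N:ℝ) * ∑ n ∈ Ioc 0 N, vonMangoldt n / n ≤ N * (Real.log N + 6) := by linarith [hb.2]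
    exact le_of_mul_le_mul_left h2 hN'

lemma sum_chi_log (N : ℕ) : |∑ n ∈ Ioc 0 N, chi n * (Real.log n / n)| ≤ 1 := by
  rcases Nat.lt_or_ge N 2 with h | h
  · have : N = 0 ∨ N = 1 := by omega
    rcases this with rfl | rfl <;> simp
  rw [← sum_Ioc_consecutive _ (Nat.zero_le 2) h]
  have : Ioc 0 2 = ({1, 2} : Finset ℕ) := by decide
  rw [this, sum_pair (by norm_num)]
  have c2 : chi 2 = 0 := by simp [chi_eq]
  rw [c2]
  simp only [Nat.cast_one, Real.log_one, zero_div, mul_zero, zero_mul, zero_add]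
  have h3 : Real.exp 1 ≤ 3 := by linarith [Real.exp_one_lt_d9]
  have := chi_abel (fun n => Real.log n / n) 2 N (fun m n hm hn => by
    have hm' : (3:ℝ) ≤ m := by exact_mod_cast hm
    have hn' : (m:ℝ) ≤ n := by exact_mod_cast hn
    exact Real.log_div_self_antitoneOn (by simp; linarith) (by simp; linarith) hn')
    (fun m hm => div_nonneg (Real.log_natCast_nonneg m) (by positivity))
  refine this.trans ?_
  norm_num
  have : Real.log 3 ≤ 3 := Real.log_le_self (by norm_num)
  linarith

open ArithmeticFunction in
lemma mertens_chi (N : ℕ) (hN : 1 ≤ N) : |∑ n ∈ Ioc 0 N, chi n * vonMangoldt n / n| ≤ 11 := by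
  have key : ∑ n ∈ Ioc 0 N, chi n * (Real.log n / n) =
      ∑ d ∈ Ioc 0 N, chi d * vonMangoldt d / d * Vs (N / d) := by
    let f : ArithmeticFunction ℝ := ⟨fun n => chi n * vonMangoldt n / n, by simp⟩
    let g : ArithmeticFunction ℝ := ⟨fun n => chi n / n, by simp⟩
    have := sum_Ioc_mul_eq_sum_sum f g N
    unfold Vs
    have hf : ∀ n, f n = chi n * vonMangoldt n / n := fun n => rfl
    have hg : ∀ n, g n = chi n / n := fun n => rfl
    simp only [hf, hg] at this
    rw [← this]
    apply sum_congr rfl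
    intro n hn
    simp only [mem_Ioc] at hn
    rw [mul_apply, ← vonMangoldt_sum, ← Nat.sum_divisorsAntidiagonal (fun i _ => vonMangoldt i), sum_div, mul_sum]
    apply sum_congr rfl
    intro x hx
    have hx := (Nat.mem_divisorsAntidiagonal.1 hx).1
    rw [hf, hg, ← hx, chi_mul]
    push_cast
    ring
  have h1 := sum_chi_log N
  rw [key] at h1
  have hN' : (0:ℝ) < N := by exact_mod_cast hN
  have h2 : |∑ d ∈ Ioc 0 N, chi d * vonMangoldt d / d * Vs (N / d) - Lone * ∑ n ∈ Ioc 0 N, chi n * vonMangoldt n / n| ≤ 6 := by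
    rw [mul_sum, ← sum_sub_distrib]
    refine (abs_sum_le_sum_abs _ _).trans ?_
    calc _ ≤ ∑ d ∈ Ioc 0 N, vonMangoldt d / N := by
          apply sum_le_sum
          intro d hd
          simp only [mem_Ioc] at hd
          have hd0 : (0:ℝ) < d := by exact_mod_cast hd.1
          rw [show chi d * vonMangoldt d / d * Vs (N / d) - Lone * (chi d * vonMangoldt d / d) =
            chi d * (vonMangoldt d / d) * (Vs (N/d) - Lone) by ring, abs_mul, abs_mul]
          have a1 := chi_abs d
          have a2 := Vs_sub_Lone (N / d)
          have a3 : 0 ≤ vonMangoldt d / d := div_nonneg vonMangoldt_nonneg hd0.le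
          have a4 : 1 / (((N / d : ℕ):ℝ) + 1) ≤ d / N := by
            have := Nat.lt_floor_add_one ((N:ℝ) / d)
            rw [Nat.floor_div_natCast, Nat.floor_natCast] at this
            rw [div_le_div_iff₀ (by positivity) hN']
            rw [div_lt_iff₀ hd0] at this
            linarith
          rw [abs_of_nonneg a3]
          calc _ ≤ 1 * (vonMangoldt d / d) * (d / N) :=
                mul_le_mul (mul_le_mul_of_nonneg_right a1 a3) (a2.trans a4) (abs_nonneg _) (by positivity)
            _ = _ := by field_simp
      _ ≤ 6 := by
          rw [← sum_div, div_le_iff₀ hN']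
          exact sum_Lambda_le N
  have hL := Lone_ge
  set S := ∑ n ∈ Ioc 0 N, chi n * vonMangoldt n / n
  have h3 : |Lone * S| ≤ 7 := by
    rw [abs_le] at *
    constructor <;> linarith [h1.1, h1.2, h2.1, h2.2]
  rw [abs_mul, abs_of_nonneg (by linarith)] at h3
  nlinarith [abs_nonneg S]

/-- comparison lemma -/
lemma log_compare (a : ℕ → ℝ) (u x : ℕ) (hu : 2 ≤ u) (hx : u ≤ x) (α C : ℝ) (hα : 0 ≤ α)
    (h : ∀ n, u ≤ n → ∑ m ∈ Ioc u n, a m ≤ α * (Real.log n - Real.log u) + C) :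
    ∑ m ∈ Ioc u x, a m / Real.log m ≤
      α * (Real.log (Real.log x) - Real.log (Real.log u)) + C / Real.log u := by
  have hC : 0 ≤ C := by have := h u le_rfl; simp at this; exact this
  have hlu : 0 < Real.log u := Real.log_pos (by exact_mod_cast hu)
  have tel : ∀ (f : ℕ → ℝ) n, u ≤ n → ∑ m ∈ Ioc u n, (f m - f (m - 1)) = f n - f u := by
    intro f n hn
    rw [sum_Ioc_range (fun m => f m - f (m-1))]
    have : ∀ i ∈ range (n - u), f (u + 1 + i) - f (u + 1 + i - 1) = f (u + (i + 1)) - f (u + i) := by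
      intro i _
      rw [show u + 1 + i = u + (i+1) by ring, show u + (i + 1) - 1 = u + i by omega]
    rw [sum_congr rfl this, sum_range_sub (fun i => f (u + i))]
    simp [Nat.add_sub_cancel' hn]
  let b : ℕ → ℝ := fun m => a m - α * (Real.log m - Real.log (m - 1 : ℕ))
  have h1 : ∑ m ∈ Ioc u x, b m / Real.log m ≤ C * (1 / Real.log u) := by
    rw [sum_Ioc_range (fun m => b m / Real.log m)]
    have := abel_upper (fun i => b (u + 1 + i)) (fun i => 1 / Real.log ((u + 1 + i : ℕ) : ℝ)) C ?_ ?_ ?_ (x - u)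
    · refine le_trans (le_of_eq ?_) (this.trans ?_)
      · apply sum_congr rfl; intro i _; rw [div_eq_mul_one_div]
      · apply mul_le_mul_of_nonneg_left _ hC
        apply one_div_le_one_div_of_le hlu
        exact Real.log_le_log (by positivity) (by push_cast; linarith)
    · intro k
      have e := sum_Ioc_range b u (u + k)
      rw [Nat.add_sub_cancel_left] at e
      rw [← e]
      simp only [b, sum_sub_distrib, ← mul_sum]
      have t := tel (fun n => Real.log n) (u + k) (by omega)
      rw [sum_sub_distrib] at t
      rw [t]
      have := h (u + k) (by omega)
      linarith
    · intro i j hij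
      apply one_div_le_one_div_of_le
      · apply Real.log_pos; exact_mod_cast (by omega : 1 < u + 1 + i)
      · apply Real.log_le_log
        · exact_mod_cast (by omega : 0 < u + 1 + i)
        · exact_mod_cast (by omega : u + 1 + i ≤ u + 1 + j)
    · intro i
      exact div_nonneg zero_le_one (Real.log_natCast_nonneg _)
  have h2 : ∑ m ∈ Ioc u x, α * ((Real.log m - Real.log (m - 1 : ℕ)) / Real.log m) ≤
      α * (Real.log (Real.log x) - Real.log (Real.log u)) := by
    rw [← mul_sum]
    apply mul_le_mul_of_nonneg_left _ hα
    rw [← tel (fun n => Real.log (Real.log n)) x hx]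
    apply sum_le_sum
    intro m hm
    simp only [mem_Ioc] at hm
    have l1 : 0 < Real.log (m - 1 : ℕ) := Real.log_pos (by exact_mod_cast (by omega : 1 < m - 1))
    have l2 : 0 < Real.log m := Real.log_pos (by exact_mod_cast (by omega : 1 < m))
    have := Real.log_le_sub_one_of_pos (div_pos l1 l2)
    rw [Real.log_div l1.ne' l2.ne'] at this
    rw [sub_div, div_self l2.ne']
    linarith
  have e : ∑ m ∈ Ioc u x, a m / Real.log m = ∑ m ∈ Ioc u x, b m / Real.log m +
      ∑ m ∈ Ioc u x, α * ((Real.log m - Real.log (m - 1 : ℕ)) / Real.log m) := by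
    rw [← sum_add_distrib]
    apply sum_congr rfl; intro m _
    simp only [b]; ring
  rw [e]
  calc _ ≤ C * (1 / Real.log u) + α * (Real.log (Real.log x) - Real.log (Real.log u)) := add_le_add h1 h2
    _ = _ := by ring

open ArithmeticFunction in
/-- `∑_{u<p≤x} (1+χ(p))/p ≤ log (log x / log u) + 29/log u`. -/
lemma mertens_one_add_chi (u x : ℕ) (hu : 2 ≤ u) (hx : u ≤ x) :
    ∑ p ∈ (Ioc u x).filter Nat.Prime, (1 + chi p) / p ≤
      Real.log (Real.log x) - Real.log (Real.log u) + 29 / Real.log u := by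
  have h := log_compare (fun n => (1 + chi n) * vonMangoldt n / n) u x hu hx 1 29 (by norm_num) ?_
  · rw [one_mul] at h
    refine le_trans ?_ h
    rw [sum_filter]
    apply sum_le_sum
    intro n hn
    simp only [mem_Ioc] at hn
    have l2 : 0 < Real.log n := Real.log_pos (by exact_mod_cast (by omega : 1 < n))
    split_ifs with hp
    · rw [vonMangoldt_apply_prime hp]
      apply le_of_eq
      field_simp
    · have := chi_ge n
      have := vonMangoldt_nonneg (n := n)
      apply div_nonneg (div_nonneg (mul_nonneg (by linarith) this) (by positivity)) l2.le
  · intro n hn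
    have m1 := mertens_Lambda n (by omega)
    have m2 := mertens_Lambda u (by omega)
    have c1 := abs_le.1 (mertens_chi n (by omega))
    have c2 := abs_le.1 (mertens_chi u (by omega))
    have e1 := sum_Ioc_consecutive (fun n => vonMangoldt n / (n:ℝ)) (Nat.zero_le u) hn
    have e2 := sum_Ioc_consecutive (fun n => chi n * vonMangoldt n / (n:ℝ)) (Nat.zero_le u) hn
    have e3 : ∑ m ∈ Ioc u n, (1 + chi m) * vonMangoldt m / m = ∑ m ∈ Ioc u n, vonMangoldt m / m
       + ∑ m ∈ Ioc u n, chi m * vonMangoldt m / m := by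
      rw [← sum_add_distrib]; apply sum_congr rfl; intro m _; ring
    rw [e3]
    linarith [m1.2, m2.1, c1.2, c2.1]

open ArithmeticFunction in
/-- `∑_{p≤x} log p/p ≤ log x + 6`. -/
lemma sum_log_p_div_p (x : ℕ) (hx : 1 ≤ x) :
    ∑ p ∈ (Ioc 0 x).filter Nat.Prime, Real.log p / p ≤ Real.log x + 6 := by
  refine le_trans ?_ (mertens_Lambda x hx).2
  rw [sum_filter]
  apply sum_le_sum
  intro n hn
  split_ifs with hp
  · rw [vonMangoldt_apply_prime hp]
  · exact div_nonneg vonMangoldt_nonneg (by positivity)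

open ArithmeticFunction in
lemma sum_nonprime_bound : ∃ C : ℝ, ∀ x : ℕ,
    ∑ n ∈ Ioc 0 x, (if n.Prime then 0 else vonMangoldt n / n / Real.log n) ≤ C := by
  have hs : Summable (fun n : ℕ => 1 / (n:ℝ) ^ 2) := Real.summable_one_div_nat_pow.2 (by norm_num)
  have hs2 : Summable (fun n : ℕ => (1 / 2 : ℝ) ^ n) := summable_geometric_two
  refine ⟨4 * (∑' n : ℕ, (1/2:ℝ)^n) * ∑' n : ℕ, 1 / (n:ℝ) ^ 2, fun x => ?_⟩
  let f : ℕ → ℝ := fun n => if n.Prime then 0 else vonMangoldt n / n / Real.log n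
  have h0 : ∑ n ∈ Ioc 0 x, f n = ∑ n ∈ Ioc 0 ⌊(x:ℝ)⌋₊ with IsPrimePow n, f n := by
    rw [Nat.floor_natCast, sum_filter]
    apply sum_congr rfl
    intro n _
    split_ifs with hp
    · rfl
    · simp only [f]
      rw [vonMangoldt_eq_zero_iff.2 hp]; simp
  change ∑ n ∈ Ioc 0 x, f n ≤ _
  rw [h0, Chebyshev.sum_PrimePow_eq_sum_sum f (by positivity)]
  have hterm : ∀ k p : ℕ, 1 ≤ k → p.Prime → f (p ^ k) ≤ 4 * (1/2:ℝ)^k * (1 / (p:ℝ)^2) := by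
    intro k p hk hp
    have hp2 : (2:ℝ) ≤ p := by exact_mod_cast hp.two_le
    simp only [f]
    split_ifs with h
    · positivity
    · have hk2 : 2 ≤ k := by
        by_contra hlt
        have : k = 1 := by omega
        rw [this, pow_one] at h
        exact h hp
      have l0 : 0 < Real.log p := Real.log_pos (by linarith)
      have l1 : Real.log p ≤ Real.log ((p^k : ℕ):ℝ) := by
        push_cast
        rw [Real.log_pow]
        have : (1:ℝ) ≤ k := by exact_mod_cast hk
        nlinarith
      rw [vonMangoldt_apply_pow (by omega), vonMangoldt_apply_prime hp]
      have a1 : Real.log p / ((p^k:ℕ):ℝ) / Real.log ((p^k:ℕ):ℝ) ≤ 1 / (p:ℝ)^k := by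
        have l2 : 0 < Real.log ((p^k : ℕ):ℝ) := l0.trans_le l1
        have pk : (0:ℝ) < ((p^k : ℕ):ℝ) := by push_cast; positivity
        rw [div_div, div_le_div_iff₀ (by positivity) (by positivity), one_mul]
        push_cast at *
        nlinarith [show (0:ℝ) < (p:ℝ)^k by positivity]
      refine a1.trans ?_
      obtain ⟨j, rfl⟩ := Nat.exists_eq_add_of_le hk2
      rw [pow_add, pow_add, one_div, mul_inv]
      have a2 : ((p:ℝ)^j)⁻¹ ≤ (1/2)^j := by
        rw [← inv_pow]
        apply pow_le_pow_left₀ (by positivity)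
        rw [one_div]
        exact inv_anti₀ (by norm_num) hp2
      calc ((p:ℝ)^2)⁻¹ * ((p:ℝ)^j)⁻¹ ≤ ((p:ℝ)^2)⁻¹ * (1/2)^j := mul_le_mul_of_nonneg_left a2 (by positivity)
        _ = _ := by ring
  calc _ ≤ ∑ k ∈ Icc 1 ⌊Real.log x / Real.log 2⌋₊, 4 * (1/2:ℝ)^k * ∑' n : ℕ, 1 / (n:ℝ) ^ 2 := by
        apply sum_le_sum
        intro k hk
        simp only [mem_Icc] at hk
        calc _ ≤ ∑ p ∈ Ioc 0 ⌊(x:ℝ) ^ ((1 : ℝ) / k)⌋₊ with p.Prime, 4 * (1/2:ℝ)^k * (1 / (p:ℝ)^2) := by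
              apply sum_le_sum
              intro p hp
              exact hterm k p hk.1 (mem_filter.1 hp).2
          _ = 4 * (1/2:ℝ)^k * ∑ p ∈ Ioc 0 ⌊(x:ℝ) ^ ((1 : ℝ) / k)⌋₊ with p.Prime, (1 / (p:ℝ)^2) := by rw [mul_sum]
          _ ≤ _ := by
              apply mul_le_mul_of_nonneg_left _ (by positivity)
              exact hs.sum_le_tsum _ (fun _ _ => by positivity)
    _ = 4 * (∑ k ∈ Icc 1 ⌊Real.log x / Real.log 2⌋₊, (1/2:ℝ)^k) * ∑' n : ℕ, 1 / (n:ℝ) ^ 2 := by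
        rw [mul_sum, sum_mul]
    _ ≤ _ := by
        apply mul_le_mul_of_nonneg_right _ (tsum_nonneg fun _ => by positivity)
        apply mul_le_mul_of_nonneg_left _ (by norm_num)
        exact hs2.sum_le_tsum _ (fun _ _ => by positivity)

open ArithmeticFunction in
lemma sum_chi_prime : ∃ C : ℝ, 0 ≤ C ∧ ∀ x : ℕ, ∑ p ∈ (Ioc 0 x).filter Nat.Prime, chi p / p ≤ C := by
  obtain ⟨C, hC⟩ := sum_nonprime_bound
  have hC0 : 0 ≤ C := by simpa using hC 0
  have hl2 : 0 < Real.log 2 := Real.log_pos (by norm_num)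
  refine ⟨C + 22 / Real.log 2, by positivity, fun x => ?_⟩
  rcases Nat.lt_or_ge x 2 with hx | hx
  · have : (Ioc 0 x).filter Nat.Prime = ∅ := by
      rw [filter_eq_empty_iff]
      intro n hn hp
      have := hp.two_le
      simp at hn; omega
    rw [this]; simp; positivity
  have h := log_compare (fun n => chi n * vonMangoldt n / n) 2 x le_rfl hx 0 22 le_rfl ?_
  · have h2 : ∑ m ∈ Ioc 0 x, chi m * vonMangoldt m / m / Real.log m = ∑ m ∈ Ioc 2 x, chi m * vonMangoldt m / m / Real.log m := by
      rw [← sum_Ioc_consecutive _ (Nat.zero_le 2) hx]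
      have : Ioc 0 2 = ({1, 2} : Finset ℕ) := by decide
      rw [this, sum_pair (by norm_num)]
      simp [chi_eq]
    have h3 := hC x
    have h4 : ∑ p ∈ (Ioc 0 x).filter Nat.Prime, chi p / p ≤ ∑ m ∈ Ioc 0 x, chi m * vonMangoldt m / m / Real.log m
      + ∑ n ∈ Ioc 0 x, (if n.Prime then 0 else vonMangoldt n / n / Real.log n) := by
      rw [sum_filter, ← sum_add_distrib]
      apply sum_le_sum
      intro n hn
      split_ifs with hp
      · have l2 : 0 < Real.log n := Real.log_pos (by exact_mod_cast hp.one_lt)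
        rw [vonMangoldt_apply_prime hp]
        apply le_of_eq
        field_simp
        ring
      · have := chi_ge n
        have h5 : 0 ≤ vonMangoldt n / n / Real.log n :=
          div_nonneg (div_nonneg vonMangoldt_nonneg (by positivity)) (Real.log_natCast_nonneg _)
        have : chi n * vonMangoldt n / n / Real.log n = chi n * (vonMangoldt n / n / Real.log n) := by ring
        rw [this]
        nlinarith
    simp only [zero_mul, zero_add, Nat.cast_ofNat] at h
    linarith
  · intro n hn
    have c1 := abs_le.1 (mertens_chi n (by omega))
    have c2 := abs_le.1 (mertens_chi 2 (by omega))
    have e2 := sum_Ioc_consecutive (fun n => chi n * vonMangoldt n / (n:ℝ)) (Nat.zero_le 2) hn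
    linarith [c1.2, c2.1]
end

section
open Finset

/-- local weight -/
noncomputable def wt (a b : ℕ → ℝ) (P : Finset ℕ) (e : ℕ) : ℝ := ∏ p ∈ P, (if p ∣ e then b p else a p)

noncomputable def Cw (a b : ℕ → ℝ) (P : Finset ℕ) (n : ℕ) : ℝ := ∑ e ∈ Ioc 0 n, chi e / e * wt a b P e

lemma sum_dvd_Ioc (p n : ℕ) (hp : 0 < p) (f : ℕ → ℝ) :
    ∑ e ∈ (Ioc 0 n).filter (p ∣ ·), f e = ∑ k ∈ Ioc 0 (n / p), f (p * k) := by
  symm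
  apply sum_bij (fun k _ => p * k)
  · intro k hk
    simp only [mem_Ioc, mem_filter] at hk ⊢
    refine ⟨⟨Nat.mul_pos hp hk.1, ?_⟩, Dvd.intro _ rfl⟩
    calc p * k ≤ p * (n / p) := Nat.mul_le_mul_left _ hk.2
      _ ≤ n := Nat.mul_div_le n p
  · intro a _ b _ h
    exact Nat.eq_of_mul_eq_mul_left hp h
  · intro e he
    simp only [mem_Ioc, mem_filter] at he
    obtain ⟨k, rfl⟩ := he.2
    refine ⟨k, ?_, rfl⟩
    simp only [mem_Ioc]
    refine ⟨Nat.pos_of_mul_pos_left he.1.1, ?_⟩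
    rw [Nat.le_div_iff_mul_le hp, mul_comm]; exact he.1.2
  · intros; rfl

lemma Cw_insert (a b : ℕ → ℝ) (P : Finset ℕ) (p : ℕ) (hp : p.Prime) (hP : ∀ q ∈ P, q.Prime) (hpP : p ∉ P) (n : ℕ) :
    Cw a b (insert p P) n = a p * Cw a b P n + (b p - a p) * (chi p / p) * Cw a b P (n / p) := by
  unfold Cw
  have h1 : ∀ e, chi e / e * wt a b (insert p P) e = a p * (chi e / e * wt a b P e) +
      (b p - a p) * (if p ∣ e then chi e / e * wt a b P e else 0) := by
    intro e
    rw [wt, prod_insert hpP]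
    change _ * (_ * wt a b P e) = _
    split_ifs <;> ring
  simp_rw [h1]
  rw [sum_add_distrib, ← mul_sum, ← mul_sum, ← sum_filter, sum_dvd_Ioc p n hp.pos]
  congr 1
  rw [mul_assoc]
  congr 1
  rw [mul_sum]
  apply sum_congr rfl
  intro k _
  have h2 : wt a b P (p * k) = wt a b P k := by
    unfold wt
    apply prod_congr rfl
    intro q hq
    have : q ∣ p * k ↔ q ∣ k := by
      rw [(hP q hq).dvd_mul]
      constructor
      · rintro (h | h)
        · exact absurd ((Nat.prime_dvd_prime_iff_eq (hP q hq) hp).1 h ▸ hq) hpP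
        · exact h
      · exact Or.inr
    simp [this]
  rw [h2, chi_mul]
  push_cast
  have : (p : ℝ) ≠ 0 := by exact_mod_cast hp.ne_zero
  by_cases hk : (k : ℝ) = 0
  · simp [hk]
  · field_simp

lemma Cw_bound (a b : ℕ → ℝ) (P : Finset ℕ) (hP : ∀ q ∈ P, q.Prime) (n : ℕ) :
    |Cw a b P n - Lone * ∏ p ∈ P, (a p + (b p - a p) * (chi p / p))| ≤
      (∏ p ∈ P, (|a p| + |b p - a p|)) / ((n : ℝ) + 1) := by
  induction P using Finset.induction_on generalizing n with
  | empty => simpa [Cw, wt, Vs] using Vs_sub_Lone n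
  | insert p P hpP ih =>
    have hp : p.Prime := hP p (mem_insert_self _ _)
    have hP' : ∀ q ∈ P, q.Prime := fun q hq => hP q (mem_insert_of_mem hq)
    rw [Cw_insert a b P p hp hP' hpP, prod_insert hpP, prod_insert hpP]
    have i1 := ih hP' n
    have i2 := ih hP' (n / p)
    set L := Lone * ∏ p ∈ P, (a p + (b p - a p) * (chi p / p)) with hL
    set R := ∏ p ∈ P, (|a p| + |b p - a p|) with hR
    have hR0 : 0 ≤ R := prod_nonneg fun _ _ => by positivity
    have hpr : (0 : ℝ) < p := by exact_mod_cast hp.pos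
    have e1 : a p * Cw a b P n + (b p - a p) * (chi p / p) * Cw a b P (n / p) -
        Lone * ((a p + (b p - a p) * (chi p / p)) * ∏ p ∈ P, (a p + (b p - a p) * (chi p / p))) =
        a p * (Cw a b P n - L) + (b p - a p) * (chi p / p) * (Cw a b P (n / p) - L) := by
      rw [hL]; ring
    rw [e1]
    have h3 : R / (((n / p : ℕ) : ℝ) + 1) ≤ p * (R / ((n : ℝ) + 1)) := by
      rw [← mul_div_assoc, div_le_div_iff₀ (by positivity) (by positivity)]
      have : ((n : ℝ) + 1) ≤ p * (((n / p : ℕ) : ℝ) + 1) := by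
        have := Nat.lt_mul_div_succ n hp.pos
        exact_mod_cast this
      calc R * ((n : ℝ) + 1) ≤ R * (p * (((n / p : ℕ) : ℝ) + 1)) := by gcongr
        _ = _ := by ring
    calc _ ≤ |a p| * |Cw a b P n - L| + |b p - a p| * (|chi p| / p) * |Cw a b P (n / p) - L| := by
          refine (abs_add_le _ _).trans ?_
          rw [abs_mul, abs_mul, abs_mul, abs_div, abs_of_pos hpr]
      _ ≤ |a p| * (R / ((n : ℝ) + 1)) + |b p - a p| * (1 / p) * (p * (R / ((n : ℝ) + 1))) := by
          gcongr
          · exact chi_abs p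
          · exact i2.trans h3
      _ = _ := by field_simp

/-- r(n) -/
noncomputable def rr (n : ℕ) : ℝ := ∑ d ∈ n.divisors, chi d

open ArithmeticFunction in
noncomputable def chiAF : ArithmeticFunction ℝ := ⟨chi, chi_zero⟩

open ArithmeticFunction in
lemma chiAF_mult : IsMultiplicative chiAF := ⟨chi_one, fun {m n} _ => chi_mul m n⟩

open ArithmeticFunction ArithmeticFunction.zeta in
lemma rr_eq (n : ℕ) : rr n = ((ζ : ArithmeticFunction ℝ) * chiAF) n := by
  rw [coe_zeta_mul_apply]; rfl

open ArithmeticFunction ArithmeticFunction.zeta in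
lemma rr_prod (n : ℕ) (hn : n ≠ 0) : rr n = n.factorization.prod fun p k => rr (p ^ k) := by
  simp_rw [rr_eq]
  exact IsMultiplicative.multiplicative_factorization _
    (isMultiplicative_zeta.natCast.mul chiAF_mult) hn

lemma chi_pow (p k : ℕ) : chi (p ^ k) = chi p ^ k := by
  induction k with
  | zero => simp [chi_one]
  | succ k ih => rw [pow_succ, chi_mul, ih, pow_succ]

lemma rr_prime_pow (p k : ℕ) (hp : p.Prime) : rr (p ^ k) = ∑ i ∈ range (k + 1), chi p ^ i := by
  unfold rr
  rw [Nat.sum_divisors_prime_pow hp]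
  simp_rw [chi_pow]

lemma rr_prime_pow_nonneg (p k : ℕ) (hp : p.Prime) : 0 ≤ rr (p ^ k) := by
  rw [rr_prime_pow p k hp, chi_eq]
  split_ifs
  · rw [zero_geom_sum]; split_ifs <;> simp
  · simp; positivity
  · rw [neg_one_geom_sum]; split_ifs <;> simp

lemma rr_nonneg (n : ℕ) : 0 ≤ rr n := by
  rcases Nat.eq_zero_or_pos n with rfl | hn
  · simp [rr]
  rw [rr_prod n hn.ne']
  exact prod_nonneg fun p hp => rr_prime_pow_nonneg p _ (Nat.prime_of_mem_primeFactors hp)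

lemma rr_sots (n : ℕ) (h : rr n ≠ 0) : 0 < n ∧ ∃ a b : ℕ, n = a ^ 2 + b ^ 2 := by
  have hn : n ≠ 0 := by rintro rfl; simp [rr] at h
  refine ⟨Nat.pos_of_ne_zero hn, ?_⟩
  rw [Nat.eq_sq_add_sq_iff]
  intro q hq hq4
  have hqp := Nat.prime_of_mem_primeFactors hq
  rw [rr_prod n hn, Finsupp.prod, prod_ne_zero_iff] at h
  have := h q (by simpa using hq)
  rw [rr_prime_pow q _ hqp, chi_eq, if_neg (by omega), if_neg (by omega), neg_one_geom_sum] at this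
  have h2 : ¬ Even (n.factorization q + 1) := by
    intro h3; simp [h3] at this
  rw [Nat.even_add_one, not_not] at h2
  rw [← Nat.factorization_def n hqp]; exact h2

lemma rr_le (n : ℕ) (hn : n ≠ 0) : rr n ≤ 2 ^ n.primeFactorsList.length := by
  have h1 : rr n ≤ n.divisors.card := by
    unfold rr
    calc _ ≤ ∑ d ∈ n.divisors, (1 : ℝ) := sum_le_sum fun d _ => chi_le d
      _ = _ := by simp
  refine h1.trans ?_
  have : n.divisors.card ≤ 2 ^ n.primeFactorsList.length := by
    rw [Nat.card_divisors hn]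
    have h3 : n.primeFactorsList.length = ∑ p ∈ n.primeFactors, n.factorization p := by
      have := ArithmeticFunction.cardFactors_eq_sum_factorization (n := n)
      rw [ArithmeticFunction.cardFactors_apply] at this
      rw [this]; rfl
    rw [h3, ← prod_pow_eq_pow_sum]
    apply prod_le_prod' 
    intro p _
    exact Nat.lt_two_pow_self
  exact_mod_cast this

lemma rr_hyper (n : ℕ) (hn : chi n = 1) :
    |rr n - 2 * ∑ e ∈ n.divisors.filter (fun e => e ^ 2 < n), chi e| ≤ if IsSquare n then 1 else 0 := by
  have hn0 : n ≠ 0 := by rintro rfl; simp [chi_zero] at hn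
  have hsplit : rr n = ∑ e ∈ n.divisors.filter (fun e => e ^ 2 < n), chi e +
      ∑ e ∈ n.divisors.filter (fun e => n < e ^ 2), chi e + ∑ e ∈ n.divisors.filter (fun e => e ^ 2 = n), chi e := by
    unfold rr
    simp_rw [sum_filter]
    rw [← sum_add_distrib, ← sum_add_distrib]
    apply sum_congr rfl
    intro e _
    rcases lt_trichotomy (e ^ 2) n with h | h | h
    · simp [h, h.ne, h.le, not_lt.2 h.le]
    · simp [h]
    · simp [h, h.ne', not_lt.2 h.le]
  have hsym : ∑ e ∈ n.divisors.filter (fun e => n < e ^ 2), chi e = ∑ e ∈ n.divisors.filter (fun e => e ^ 2 < n), chi e := by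
    apply sum_bij' (fun e _ => n / e) (fun e _ => n / e)
    · intro e he
      simp only [mem_filter, Nat.mem_divisors] at he ⊢
      obtain ⟨⟨⟨k, hk⟩, _⟩, h2⟩ := he
      have he0 : 0 < e := Nat.pos_of_ne_zero (by rintro rfl; simp at hk; omega)
      have : n / e = k := by rw [hk]; exact Nat.mul_div_cancel_left _ he0
      rw [this]
      refine ⟨⟨⟨e, by rw [hk, mul_comm]⟩, hn0⟩, ?_⟩
      rw [hk] at h2 ⊢
      have : k < e := by nlinarith
      have : 0 < k := Nat.pos_of_ne_zero (by rintro rfl; simp at hk; omega)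
      nlinarith
    · intro e he
      simp only [mem_filter, Nat.mem_divisors] at he ⊢
      obtain ⟨⟨⟨k, hk⟩, _⟩, h2⟩ := he
      have he0 : 0 < e := Nat.pos_of_ne_zero (by rintro rfl; simp at hk; omega)
      have : n / e = k := by rw [hk]; exact Nat.mul_div_cancel_left _ he0
      rw [this]
      refine ⟨⟨⟨e, by rw [hk, mul_comm]⟩, hn0⟩, ?_⟩
      rw [hk] at h2 ⊢
      have : e < k := by nlinarith
      nlinarith
    · intro e he
      simp only [mem_filter, Nat.mem_divisors] at he
      exact Nat.div_div_self he.1.1 hn0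
    · intro e he
      simp only [mem_filter, Nat.mem_divisors] at he
      exact Nat.div_div_self he.1.1 hn0
    · intro e he
      simp only [mem_filter, Nat.mem_divisors] at he
      obtain ⟨⟨⟨k, hk⟩, _⟩, h2⟩ := he
      have he0 : 0 < e := Nat.pos_of_ne_zero (by rintro rfl; simp at hk; omega)
      have : n / e = k := by rw [hk]; exact Nat.mul_div_cancel_left _ he0
      rw [this]
      rw [hk, chi_mul] at hn
      have h3 := chi_eq e
      have h4 := chi_eq k
      split_ifs at h3 <;> split_ifs at h4 <;> rw [h3, h4] at hn ⊢ <;> norm_num at hn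
  rw [hsplit, hsym]
  have e1 : ∀ A B : ℝ, A + A + B - 2 * A = B := by intros; ring
  rw [e1]
  split_ifs with hs
  · obtain ⟨s, hs⟩ := hs
    have : n.divisors.filter (fun e => e ^ 2 = n) ⊆ {s} := by
      intro e he
      simp only [mem_filter] at he
      rw [mem_singleton]
      have := he.2
      rw [hs, ← pow_two] at this
      exact Nat.pow_left_injective (n := 2) (by norm_num) this
    rcases Finset.subset_singleton_iff.1 this with h | h
    · rw [h]; simp
    · rw [h, sum_singleton]; exact chi_abs s
  · have : n.divisors.filter (fun e => e ^ 2 = n) = ∅ := by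
      apply filter_eq_empty_iff.2
      intro e _ he
      exact hs ⟨e, by rw [← he, pow_two]⟩
    rw [this]; simp

lemma card_AP (A B q L a : ℕ) (hq : 0 < q) (hL : 0 < L) (hc : Nat.Coprime q L) (hAB : A ≤ B) :
    |(((Ioc A B).filter (fun n => n ≡ a [MOD q] ∧ L ∣ n)).card : ℝ) - ((B : ℝ) - A) / (q * L)| ≤ 1 := by
  obtain ⟨c, hc1, hc2⟩ := Nat.chineseRemainder hc a 0
  have h1 : (Ioc A B).filter (fun n => n ≡ a [MOD q] ∧ L ∣ n) = (Ioc A B).filter (fun n => n ≡ c [MOD q * L]) := by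
    apply filter_congr
    intro n _
    rw [← Nat.modEq_and_modEq_iff_modEq_mul hc]
    constructor
    · rintro ⟨h, h'⟩
      exact ⟨h.trans hc1.symm, (Nat.modEq_zero_iff_dvd.2 h').trans hc2.symm⟩
    · rintro ⟨h, h'⟩
      exact ⟨h.trans hc1, Nat.modEq_zero_iff_dvd.1 (h'.trans hc2)⟩
  rw [h1]
  have hqL : 0 < q * L := Nat.mul_pos hq hL
  have h2 := Nat.Ioc_filter_modEq_card A B hqL c
  set N := ((Ioc A B).filter (fun n => n ≡ c [MOD q * L])).card
  have hqr : (0 : ℚ) < ((q * L : ℕ) : ℚ) := by exact_mod_cast hqL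
  have hle : ⌊((A : ℚ) - c) / ((q * L : ℕ) : ℚ)⌋ ≤ ⌊((B : ℚ) - c) / ((q * L : ℕ) : ℚ)⌋ := by
    apply Int.floor_le_floor
    have : (A : ℚ) ≤ B := by exact_mod_cast hAB
    gcongr
  rw [max_eq_left (by linarith)] at h2
  have h3 : (N : ℚ) = (⌊((B : ℚ) - c) / ((q * L : ℕ) : ℚ)⌋ : ℚ) - ⌊((A : ℚ) - c) / ((q * L : ℕ) : ℚ)⌋ := by exact_mod_cast h2
  have h4 : |(N : ℚ) - ((B : ℚ) - A) / (q * L)| ≤ 1 := by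
    have a1 := Int.floor_le (((B : ℚ) - c) / ((q * L : ℕ) : ℚ))
    have a2 := Int.lt_floor_add_one (((B : ℚ) - c) / ((q * L : ℕ) : ℚ))
    have a3 := Int.floor_le (((A : ℚ) - c) / ((q * L : ℕ) : ℚ))
    have a4 := Int.lt_floor_add_one (((A : ℚ) - c) / ((q * L : ℕ) : ℚ))
    have a5 : ((B : ℚ) - A) / (q * L) = ((B : ℚ) - c) / ((q * L : ℕ) : ℚ) - ((A : ℚ) - c) / ((q * L : ℕ) : ℚ) := by
      push_cast; ring
    rw [abs_le, h3, a5]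
    constructor <;> linarith
  have h5 := (Rat.cast_le (K := ℝ)).2 h4
  push_cast at h5
  exact h5
end

section
open Finset

noncomputable def rho (p : ℕ) : ℝ := 1 / p + (1 - 1 / p) * (chi p / p)

lemma filter_prime_dvd_iff (S : Finset ℕ) (hS : ∀ p ∈ S, p.Prime) (e n : ℕ) :
    e * ∏ p ∈ S.filter (fun p => ¬ p ∣ e), p ∣ n ↔ e ∣ n ∧ ∀ p ∈ S, p ∣ n := by
  constructor
  · intro h
    refine ⟨(Dvd.intro _ rfl).trans h, fun p hp => ?_⟩
    by_cases hpe : p ∣ e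
    · exact hpe.trans ((Dvd.intro _ rfl).trans h)
    · exact (dvd_prod_of_mem (fun p => p) (mem_filter.2 ⟨hp, hpe⟩)).trans ((Dvd.intro_left _ rfl).trans h)
  · rintro ⟨h1, h2⟩
    apply Nat.Coprime.mul_dvd_of_dvd_of_dvd _ h1
    · apply Finset.prod_primes_dvd
      · intro p hp; exact (hS p (mem_filter.1 hp).1).prime
      · intro p hp; exact h2 p (mem_filter.1 hp).1
    · apply Nat.Coprime.prod_right
      intro p hp
      rw [mem_filter] at hp
      exact ((Nat.Prime.coprime_iff_not_dvd (hS p hp.1)).2 hp.2).symm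

lemma card_squares (A B : ℕ) : (((Ioc A B).filter IsSquare).card : ℝ) ≤ Nat.sqrt B + 1 := by
  have : (Ioc A B).filter IsSquare ⊆ (range (Nat.sqrt B + 1)).image (fun s => s * s) := by
    intro n hn
    simp only [mem_filter, mem_Ioc] at hn
    obtain ⟨⟨_, h2⟩, s, rfl⟩ := hn
    rw [mem_image]
    exact ⟨s, mem_range.2 (Nat.lt_succ_of_le (Nat.le_sqrt.2 h2)), rfl⟩
  have := (card_le_card this).trans card_image_le
  rw [card_range] at this
  exact_mod_cast this

/-- hyperbola-method weight -/
def ph (A B e : ℕ) : ℝ := ((B - max A (e ^ 2) : ℕ) : ℝ)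

lemma ph_step (A B e : ℕ) : 0 ≤ ph A B e - ph A B (e + 1) ∧ ph A B e - ph A B (e + 1) ≤ 2 * e + 1 := by
  unfold ph
  have h1 : B - max A ((e + 1) ^ 2) ≤ B - max A (e ^ 2) := by
    have : e ^ 2 ≤ (e + 1) ^ 2 := by gcongr; omega
    omega
  have h2 : B - max A (e ^ 2) ≤ B - max A ((e + 1) ^ 2) + (2 * e + 1) := by
    have : (e + 1) ^ 2 = e ^ 2 + 2 * e + 1 := by ring
    omega
  constructor
  · have : ((B - max A ((e + 1) ^ 2) : ℕ) : ℝ) ≤ ((B - max A (e ^ 2) : ℕ) : ℝ) := by exact_mod_cast h1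
    linarith
  · have : ((B - max A (e ^ 2) : ℕ) : ℝ) ≤ ((B - max A ((e + 1) ^ 2) : ℕ) : ℝ) + (2 * e + 1) := by exact_mod_cast h2
    linarith

lemma abel_hyper (a b : ℕ → ℝ) (P : Finset ℕ) (hP : ∀ q ∈ P, q.Prime) (A B E : ℕ) (hA : 1 ≤ A) (hAB : A ≤ B)
    (hE : B ≤ E ^ 2) :
    |∑ e ∈ Ioc 0 E, (chi e / e * wt a b P e) * ph A B e -
      Lone * (∏ p ∈ P, (a p + (b p - a p) * (chi p / p))) * ((B : ℝ) - A)| ≤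
      2 * (∏ p ∈ P, (|a p| + |b p - a p|)) * E := by
  set R := ∏ p ∈ P, (|a p| + |b p - a p|) with hR
  set L := Lone * (∏ p ∈ P, (a p + (b p - a p) * (chi p / p))) with hL
  have hR0 : 0 ≤ R := prod_nonneg fun _ _ => by positivity
  have hE0 : ph A B (E + 1) = 0 := by
    unfold ph
    have : B - max A ((E + 1) ^ 2) = 0 := by
      have : E ^ 2 ≤ (E + 1) ^ 2 := by gcongr; omega
      omega
    rw [this]; simp
  have h1 : ph A B 1 = (B : ℝ) - A := by
    unfold ph
    rw [one_pow, max_eq_left hA]; push_cast [hAB]; rfl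
  have hC : ∀ i, ∑ j ∈ range (i + 1), (chi (0 + 1 + j : ℕ) / (0 + 1 + j : ℕ) * wt a b P (0 + 1 + j)) = Cw a b P (i + 1) := by
    intro i
    unfold Cw
    rw [sum_Ioc_range]; simp
  rw [sum_Ioc_range]
  rw [Nat.sub_zero, abel_id (fun i => chi (0 + 1 + i : ℕ) / (0 + 1 + i : ℕ) * wt a b P (0 + 1 + i)) (fun i => ph A B (0 + 1 + i))]
  simp only [hC]
  rw [show 0 + 1 + E = E + 1 by ring, hE0, mul_zero, zero_add]
  have htel : (B : ℝ) - A = ∑ i ∈ range E, (ph A B (0 + 1 + i) - ph A B (0 + 1 + (i + 1))) := by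
    rw [sum_range_sub' (fun i => ph A B (0 + 1 + i))]
    rw [show 0 + 1 + E = E + 1 by ring, hE0, ← h1]; simp
  rw [htel, mul_sum, ← sum_sub_distrib]
  refine (abs_sum_le_sum_abs _ _).trans ?_
  calc _ ≤ ∑ i ∈ range E, 2 * R := by
        apply sum_le_sum
        intro i _
        rw [← sub_mul, abs_mul]
        have s1 := ph_step A B (0 + 1 + i)
        have e1 : 0 + 1 + (i + 1) = 0 + 1 + i + 1 := by ring
        rw [e1, abs_of_nonneg s1.1]
        have b1 := Cw_bound a b P hP (i + 1)
        calc _ ≤ R / (((i + 1 : ℕ) : ℝ) + 1) * (2 * ((0 + 1 + i : ℕ) : ℝ) + 1) := by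
              apply mul_le_mul b1 s1.2 s1.1 (by positivity)
          _ ≤ 2 * R := by
              rw [div_mul_eq_mul_div, div_le_iff₀ (by positivity)]
              push_cast
              nlinarith
    _ = _ := by simp; ring

theorem ap_sum (q a : ℕ) (hq : 0 < q) (hq4 : 4 ∣ q) (ha : a % 4 = 1) (hcop : Nat.Coprime a q)
    (S : Finset ℕ) (hS : ∀ p ∈ S, p.Prime ∧ ¬ p ∣ q) (A B : ℕ) (hA : 1 ≤ A) (hAB : A ≤ B) :
    |∑ n ∈ (Ioc A B).filter (fun n => n ≡ a [MOD q] ∧ ∀ p ∈ S, p ∣ n), rr n -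
      2 * Lone * (((B : ℝ) - A) / q) * (∏ p ∈ q.primeFactors, (1 - chi p / p)) * ∏ p ∈ S, rho p| ≤
      7 * 2 ^ q.primeFactors.card * ((Nat.sqrt B : ℝ) + 1) := by
  set F := (Ioc A B).filter (fun n => n ≡ a [MOD q] ∧ ∀ p ∈ S, p ∣ n) with hF
  set E := Nat.sqrt B + 1 with hE
  have hEB : B ≤ E ^ 2 := by rw [pow_two]; exact (Nat.lt_succ_sqrt B).le
  have hEr : (Nat.sqrt B : ℝ) + 1 = (E : ℝ) := by rw [hE]; push_cast; rfl
  have hchi : ∀ n ∈ F, chi n = 1 := by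
    intro n hn
    rw [hF, mem_filter] at hn
    have : n % 4 = 1 := by
      have := (hn.2.1.of_dvd hq4); rw [← ha]; exact this
    rw [chi_eq, if_neg (by omega), if_pos this]
  -- step 1
  have s1 : |∑ n ∈ F, rr n - 2 * ∑ n ∈ F, ∑ e ∈ n.divisors.filter (fun e => e ^ 2 < n), chi e| ≤ E := by
    rw [mul_sum, ← sum_sub_distrib]
    refine (abs_sum_le_sum_abs _ _).trans ?_
    calc _ ≤ ∑ n ∈ F, (if IsSquare n then (1 : ℝ) else 0) := sum_le_sum fun n hn => rr_hyper n (hchi n hn)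
      _ ≤ ∑ n ∈ Ioc A B, (if IsSquare n then (1 : ℝ) else 0) := by
          apply sum_le_sum_of_subset_of_nonneg (filter_subset _ _)
          intros; split_ifs <;> simp
      _ = (((Ioc A B).filter IsSquare).card : ℝ) := by rw [← sum_filter]; simp
      _ ≤ _ := by rw [← hEr]; exact card_squares A B
  -- step 2
  have s2 : ∑ n ∈ F, ∑ e ∈ n.divisors.filter (fun e => e ^ 2 < n), chi e =
      ∑ e ∈ Ioc 0 E, chi e * ((F.filter (fun n => e ∣ n ∧ e ^ 2 < n)).card : ℝ) := by
    have : ∀ n ∈ F, ∑ e ∈ n.divisors.filter (fun e => e ^ 2 < n), chi e =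
        ∑ e ∈ Ioc 0 E, if e ∣ n ∧ e ^ 2 < n then chi e else 0 := by
      intro n hn
      rw [← sum_filter]
      apply sum_congr _ (fun _ _ => rfl)
      ext e
      rw [hF, mem_filter, mem_Ioc] at hn
      simp only [mem_filter, Nat.mem_divisors, mem_Ioc]
      constructor
      · rintro ⟨⟨h1, h2⟩, h3⟩
        refine ⟨⟨Nat.pos_of_dvd_of_pos h1 (by omega), ?_⟩, h1, h3⟩
        have : e ^ 2 ≤ E ^ 2 := by omega
        exact (Nat.pow_le_pow_iff_left (by norm_num)).1 this
      · rintro ⟨⟨h1, h2⟩, h3, h4⟩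
        exact ⟨⟨h3, by omega⟩, h4⟩
    rw [sum_congr rfl this, sum_comm]
    apply sum_congr rfl
    intro e _
    rw [← sum_filter, sum_const, nsmul_eq_mul, mul_comm]
  -- weights
  set P := q.primeFactors ∪ S with hP
  set av : ℕ → ℝ := fun p => if p ∈ S then 1 / (p : ℝ) else 1 with hav
  set bv : ℕ → ℝ := fun p => if p ∈ S then 1 else 0 with hbv
  have hdisj : Disjoint q.primeFactors S := by
    rw [disjoint_left]
    intro p h1 h2
    exact (hS p h2).2 (Nat.dvd_of_mem_primeFactors h1)
  have hSQ : ∀ p ∈ q.primeFactors, p ∉ S := fun p h1 h2 => (disjoint_left.1 hdisj) h1 h2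
  have hPp : ∀ p ∈ P, p.Prime := by
    intro p hp
    rcases mem_union.1 hp with h | h
    · exact Nat.prime_of_mem_primeFactors h
    · exact (hS p h).1
  have hS1 : ∀ p ∈ S, (1 : ℝ) ≤ p := fun p hp => by exact_mod_cast (hS p hp).1.one_lt.le
  have hprodR : ∏ p ∈ P, (|av p| + |bv p - av p|) = 2 ^ q.primeFactors.card := by
    rw [hP, prod_union hdisj]
    have e1 : ∏ p ∈ q.primeFactors, (|av p| + |bv p - av p|) = 2 ^ q.primeFactors.card := by
      rw [← prod_const]
      apply prod_congr rfl
      intro p hp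
      simp only [hav, hbv, if_neg (hSQ p hp)]; norm_num
    have e2 : ∏ p ∈ S, (|av p| + |bv p - av p|) = 1 := by
      apply prod_eq_one
      intro p hp
      simp only [hav, hbv, if_pos hp]
      have : 1 / (p : ℝ) ≤ 1 := by rw [div_le_one (by linarith [hS1 p hp])]; exact hS1 p hp
      have h0 : 0 ≤ 1 / (p : ℝ) := by positivity
      rw [abs_of_nonneg h0, abs_of_nonneg (by linarith)]; ring
    rw [e1, e2, mul_one]
  have hprodL : ∏ p ∈ P, (av p + (bv p - av p) * (chi p / p)) =
      (∏ p ∈ q.primeFactors, (1 - chi p / p)) * ∏ p ∈ S, rho p := by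
    rw [hP, prod_union hdisj]
    congr 1
    · apply prod_congr rfl
      intro p hp
      simp only [hav, hbv, if_neg (hSQ p hp)]; ring
    · apply prod_congr rfl
      intro p hp
      simp only [hav, hbv, if_pos hp, rho]
  -- step 3
  have s3 : ∀ e ∈ Ioc 0 E, |chi e * ((F.filter (fun n => e ∣ n ∧ e ^ 2 < n)).card : ℝ) -
      (chi e / e * wt av bv P e) * ph A B e / q| ≤ 1 := by
    intro e he
    rw [mem_Ioc] at he
    by_cases hcp : Nat.Coprime q e
    · set L := e * ∏ p ∈ S.filter (fun p => ¬ p ∣ e), p with hL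
      have hL0 : 0 < L := Nat.mul_pos he.1 (prod_pos fun p hp => (hS p (mem_filter.1 hp).1).1.pos)
      have hqL : Nat.Coprime q L := by
        apply Nat.Coprime.mul_right hcp
        apply Nat.Coprime.prod_right
        intro p hp
        exact ((Nat.Prime.coprime_iff_not_dvd (hS p (mem_filter.1 hp).1).1).2 (hS p (mem_filter.1 hp).1).2).symm
      have hset : F.filter (fun n => e ∣ n ∧ e ^ 2 < n) =
          (Ioc (max A (e ^ 2)) B).filter (fun n => n ≡ a [MOD q] ∧ L ∣ n) := by
        ext n
        rw [hF]
        simp only [mem_filter, mem_Ioc, hL, filter_prime_dvd_iff S (fun p hp => (hS p hp).1), max_lt_iff]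
        tauto
      have hw : 1 / (e : ℝ) * wt av bv P e = 1 / L := by
        unfold wt
        rw [hP, prod_union hdisj]
        have e1 : ∏ p ∈ q.primeFactors, (if p ∣ e then bv p else av p) = 1 := by
          apply prod_eq_one
          intro p hp
          have : ¬ p ∣ e := fun h => (Nat.prime_of_mem_primeFactors hp).one_lt.ne'
            (Nat.eq_one_of_dvd_coprimes hcp (Nat.dvd_of_mem_primeFactors hp) h)
          simp only [hav, if_neg this, if_neg (hSQ p hp)]
        have e2 : ∏ p ∈ S, (if p ∣ e then bv p else av p) = 1 / ∏ p ∈ S.filter (fun p => ¬ p ∣ e), (p : ℝ) := by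
          rw [prod_filter, one_div, ← prod_inv_distrib]
          apply prod_congr rfl
          intro p hp
          simp only [hav, hbv, if_pos hp]
          by_cases h : p ∣ e <;> simp [h]
        rw [e1, e2, hL]; push_cast; rw [one_mul, ← one_div_mul_one_div]
      have hcard : |((F.filter (fun n => e ∣ n ∧ e ^ 2 < n)).card : ℝ) - ph A B e / (q * L)| ≤ 1 := by
        rw [hset]
        by_cases hm : max A (e ^ 2) ≤ B
        · have := card_AP (max A (e ^ 2)) B q L a hq hL0 hqL hm
          unfold ph
          rw [Nat.cast_sub hm]; exact this
        · have h0 : ph A B e = 0 := by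
            unfold ph; rw [Nat.sub_eq_zero_of_le (by omega)]; simp
          rw [h0, Ioc_eq_empty (by omega)]; simp
      have e3 : chi e * ((F.filter (fun n => e ∣ n ∧ e ^ 2 < n)).card : ℝ) -
          (chi e / e * wt av bv P e) * ph A B e / q = chi e * (((F.filter (fun n => e ∣ n ∧ e ^ 2 < n)).card : ℝ) - ph A B e / (q * L)) := by
        have : chi e / e * wt av bv P e = chi e * (1 / L) := by rw [← hw]; ring
        rw [this, mul_sub]
        have hq' : (q : ℝ) ≠ 0 := by exact_mod_cast hq.ne'
        have hL' : (L : ℝ) ≠ 0 := by exact_mod_cast hL0.ne'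
        field_simp
      rw [e3, abs_mul]
      calc _ ≤ (1 : ℝ) * 1 := by gcongr; exact chi_abs e
        _ = 1 := by norm_num
    · obtain ⟨p, hp, hpq, hpe⟩ := Nat.Prime.not_coprime_iff_dvd.1 hcp
      have hw : wt av bv P e = 0 := by
        unfold wt
        have hpQ : p ∈ q.primeFactors := Nat.mem_primeFactors.2 ⟨hp, hpq, hq.ne'⟩
        apply prod_eq_zero (i := p) (mem_union_left _ hpQ)
        simp only [if_pos hpe, hbv, if_neg (hSQ p hpQ)]
      have hemp : F.filter (fun n => e ∣ n ∧ e ^ 2 < n) = ∅ := by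
        apply filter_eq_empty_iff.2
        rintro n hn ⟨h1, _⟩
        rw [hF, mem_filter] at hn
        have h2 : p ∣ n := hpe.trans h1
        have h3 : p ∣ a := ((hn.2.1.of_dvd hpq).dvd_iff dvd_rfl).1 h2
        exact hp.one_lt.ne' (Nat.eq_one_of_dvd_coprimes hcop h3 hpq)
      rw [hw, hemp]; simp
  have s4 := abel_hyper av bv P hPp A B E hA hAB hEB
  rw [hprodR, hprodL] at s4
  set T := ∑ e ∈ Ioc 0 E, (chi e / e * wt av bv P e) * ph A B e with hT
  have s5 : |∑ n ∈ F, ∑ e ∈ n.divisors.filter (fun e => e ^ 2 < n), chi e - T / q| ≤ E := by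
    rw [s2, hT, sum_div, ← sum_sub_distrib]
    refine (abs_sum_le_sum_abs _ _).trans ?_
    calc _ ≤ ∑ e ∈ Ioc 0 E, (1 : ℝ) := sum_le_sum s3
      _ = E := by simp
  have hq1 : (1 : ℝ) ≤ q := by exact_mod_cast hq
  have s6 : |T / q - Lone * ((∏ p ∈ q.primeFactors, (1 - chi p / p)) * ∏ p ∈ S, rho p) * ((B : ℝ) - A) / q| ≤
      2 * 2 ^ q.primeFactors.card * E := by
    rw [← sub_div, abs_div, abs_of_pos (by linarith : (0 : ℝ) < q)]
    exact (div_le_self (abs_nonneg _) hq1).trans s4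
  have h2p : (1 : ℝ) ≤ 2 ^ q.primeFactors.card := one_le_pow₀ (by norm_num)
  have hE0 : (0 : ℝ) ≤ E := by positivity
  have e7 : 2 * Lone * (((B : ℝ) - A) / q) * (∏ p ∈ q.primeFactors, (1 - chi p / p)) * ∏ p ∈ S, rho p =
      2 * (Lone * ((∏ p ∈ q.primeFactors, (1 - chi p / p)) * ∏ p ∈ S, rho p) * ((B : ℝ) - A) / q) := by ring
  rw [e7, hEr]
  rw [abs_le] at s1 s5 s6 ⊢
  have : (E : ℝ) ≤ 2 ^ q.primeFactors.card * E := le_mul_of_one_le_left hE0 h2p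
  constructor <;> nlinarith
end

section
open Finset

/-- linear forms -/
def Lf (V : ℕ → ℕ) (i t : ℕ) : ℕ := 1 + V i * t

lemma ind_sum {ι : Type} [DecidableEq ι] (I : Finset ι) (Q : ι → Prop) [DecidablePred Q] (w : ℝ)
    (hu : ∀ i ∈ I, ∀ i' ∈ I, Q i → Q i' → i = i') [Decidable (∃ i ∈ I, Q i)] :
    (if ∃ i ∈ I, Q i then w else 0) = ∑ i ∈ I, if Q i then w else 0 := by
  split_ifs with h
  · obtain ⟨i, hi, hQ⟩ := h
    rw [sum_eq_single i]
    · rw [if_pos hQ]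
    · intro b hb hbi
      rw [if_neg]
      intro hQb
      exact hbi (hu b hb i hi hQb hQ)
    · intro h; exact absurd hi h
  · symm
    apply sum_eq_zero
    intro i hi
    rw [if_neg]
    intro hQ
    exact h ⟨i, hi, hQ⟩

lemma exists_res (v q : ℕ) (hq : q.Prime) (hv : ¬ q ∣ v) : ∃ c, ∀ t, q ∣ 1 + v * t ↔ t ≡ c [MOD q] := by
  have hc : Nat.Coprime q v := (Nat.Prime.coprime_iff_not_dvd hq).2 hv
  have : Fact q.Prime := ⟨hq⟩
  have hv0 : (v : ZMod q) ≠ 0 := by rwa [Ne, ZMod.natCast_eq_zero_iff]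
  refine ⟨(-(v : ZMod q)⁻¹).val, fun t => ?_⟩
  rw [← ZMod.natCast_eq_natCast_iff, ZMod.natCast_zmod_val, ← ZMod.natCast_eq_zero_iff]
  push_cast
  constructor
  · intro h
    have : (v : ZMod q) * t = -1 := by linear_combination h
    have h2 : (t : ZMod q) = (v : ZMod q)⁻¹ * (v * t) := by field_simp
    rw [h2, this]; ring
  · intro h
    rw [h]; field_simp; ring

lemma exists_crt (m q b v : ℕ) (hq : q.Prime) (hv : ¬ q ∣ v) (hm : ¬ q ∣ m) :
    ∃ c, c ≡ b [MOD m] ∧ q ∣ 1 + v * c ∧ ∀ t, (t ≡ b [MOD m] ∧ q ∣ 1 + v * t) ↔ t ≡ c [MOD m * q] := by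
  obtain ⟨d, hd⟩ := exists_res v q hq hv
  have hc : Nat.Coprime m q := ((Nat.Prime.coprime_iff_not_dvd hq).2 hm).symm
  obtain ⟨c, hc1, hc2⟩ := Nat.chineseRemainder hc b d
  refine ⟨c, hc1, (hd c).2 hc2, fun t => ?_⟩
  rw [hd, ← Nat.modEq_and_modEq_iff_modEq_mul hc]
  constructor
  · rintro ⟨h1, h2⟩; exact ⟨h1.trans hc1.symm, h2.trans hc2.symm⟩
  · rintro ⟨h1, h2⟩; exact ⟨h1.trans hc1, h2.trans hc2⟩

/-- standing hypotheses on the forms -/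
structure Forms (K N : ℕ) (V : ℕ → ℕ) : Prop where
  pos : ∀ i ∈ Ioc 0 K, 0 < V i
  four : ∀ i ∈ Ioc 0 K, 4 ∣ V i
  ndvd : ∀ i ∈ Ioc 0 K, ∀ q : ℕ, q.Prime → N < q → ¬ q ∣ V i
  uniq : ∀ q : ℕ, q.Prime → N < q → ∀ t, ∀ i ∈ Ioc 0 K, ∀ i' ∈ Ioc 0 K, q ∣ Lf V i t → q ∣ Lf V i' t → i = i'

open Classical in
lemma dens_count {K N : ℕ} {V : ℕ → ℕ} (hF : Forms K N V) (T1 T2 : ℕ) (hT : T1 ≤ T2) (S : Finset ℕ) :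
    ∀ m b : ℕ, 0 < m → (∀ q ∈ S, q.Prime ∧ N < q ∧ ¬ q ∣ m) →
    |(∑ t ∈ Ioc T1 T2, if t ≡ b [MOD m] ∧ ∀ q ∈ S, ∃ i ∈ Ioc 0 K, q ∣ Lf V i t then (1 : ℝ) else 0) -
      ((T2 : ℝ) - T1) / m * ∏ q ∈ S, ((K : ℝ) / q)| ≤ (K : ℝ) ^ S.card := by
  induction S using Finset.induction_on with
  | empty =>
    intro m b hm _
    have := card_AP T1 T2 m 1 b hm one_pos (Nat.coprime_one_right m) hT
    simp only [notMem_empty, IsEmpty.forall_iff, implies_true, and_true, prod_empty, mul_one, card_empty, pow_zero]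
    rw [← sum_filter]
    simpa using this
  | insert q S hqS ih =>
    intro m b hm hS
    obtain ⟨hq, hqN, hqm⟩ := hS q (mem_insert_self _ _)
    have hS' : ∀ q' ∈ S, q'.Prime ∧ N < q' ∧ ¬ q' ∣ m := fun q' h => hS q' (mem_insert_of_mem h)
    have hc : ∀ i, ∃ c, i ∈ Ioc 0 K → (c ≡ b [MOD m] ∧ q ∣ 1 + V i * c ∧ ∀ t, (t ≡ b [MOD m] ∧ q ∣ 1 + V i * t) ↔ t ≡ c [MOD m * q]) := by
      intro i
      by_cases hi : i ∈ Ioc 0 K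
      · obtain ⟨c, h⟩ := exists_crt m q b (V i) hq (hF.ndvd i hi q hq hqN) hqm
        exact ⟨c, fun _ => h⟩
      · exact ⟨0, fun h => absurd h hi⟩
    choose c hc using hc
    have hstep : (∑ t ∈ Ioc T1 T2, if t ≡ b [MOD m] ∧ ∀ q' ∈ insert q S, ∃ i ∈ Ioc 0 K, q' ∣ Lf V i t then (1 : ℝ) else 0) =
        ∑ i ∈ Ioc 0 K, ∑ t ∈ Ioc T1 T2, if t ≡ c i [MOD m * q] ∧ ∀ q' ∈ S, ∃ i ∈ Ioc 0 K, q' ∣ Lf V i t then (1 : ℝ) else 0 := by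
      rw [sum_comm]
      apply sum_congr rfl
      intro t _
      have h1 : ∀ i ∈ Ioc 0 K, (if t ≡ c i [MOD m * q] ∧ ∀ q' ∈ S, ∃ i ∈ Ioc 0 K, q' ∣ Lf V i t then (1 : ℝ) else 0) =
          if q ∣ Lf V i t then (if t ≡ b [MOD m] ∧ ∀ q' ∈ S, ∃ i ∈ Ioc 0 K, q' ∣ Lf V i t then (1 : ℝ) else 0) else 0 := by
        intro i hi
        have hh : (t ≡ b [MOD m] ∧ q ∣ Lf V i t) ↔ t ≡ c i [MOD m * q] := (hc i hi).2.2 t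
        rw [← ite_and]
        congr 1
        apply propext
        rw [← hh]
        tauto
      rw [sum_congr rfl h1, ← ind_sum (Ioc 0 K) (fun i => q ∣ Lf V i t) _ (fun i hi i' hi' => hF.uniq q hq hqN t i hi i' hi'), ← ite_and]
      congr 1
      apply propext
      rw [forall_mem_insert]
      tauto
    rw [hstep, prod_insert hqS, card_insert_of_notMem hqS]
    have hSq : ∀ q' ∈ S, q'.Prime ∧ N < q' ∧ ¬ q' ∣ m * q := by
      intro q' h
      obtain ⟨h1, h2, h3⟩ := hS' q' h
      refine ⟨h1, h2, fun h4 => ?_⟩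
      rcases (h1.dvd_mul).1 h4 with h5 | h5
      · exact h3 h5
      · exact hqS ((Nat.prime_dvd_prime_iff_eq h1 hq).1 h5 ▸ h)
    have hmq : 0 < m * q := Nat.mul_pos hm hq.pos
    have e1 : ((T2 : ℝ) - T1) / m * ((K : ℝ) / q * ∏ q ∈ S, ((K : ℝ) / q)) =
        ∑ i ∈ Ioc 0 K, ((T2 : ℝ) - T1) / (m * q : ℕ) * ∏ q ∈ S, ((K : ℝ) / q) := by
      rw [sum_const, Nat.card_Ioc, nsmul_eq_mul, Nat.sub_zero]; push_cast
      have : (q : ℝ) ≠ 0 := by exact_mod_cast hq.ne_zero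
      have : (m : ℝ) ≠ 0 := by exact_mod_cast hm.ne'
      field_simp
    rw [e1, ← sum_sub_distrib]
    refine (abs_sum_le_sum_abs _ _).trans ?_
    calc _ ≤ ∑ i ∈ Ioc 0 K, (K : ℝ) ^ S.card := sum_le_sum fun i _ => ih (m * q) (c i) hmq hSq
      _ = _ := by simp; ring

/-- sieve density for the r-weighted problem -/
noncomputable def ff (K : ℕ) (q : ℕ) : ℝ := ((K : ℝ) - 1) * ((1 - chi q / q) / q) + rho q

lemma base_sum (v m b T1 T2 : ℕ) (hv : 0 < v) (D : Finset ℕ) (F : ℕ → ℝ) :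
    (∑ t ∈ (Ioc T1 T2).filter (fun t => t ≡ b [MOD m] ∧ ∀ p ∈ D, p ∣ 1 + v * t), F (1 + v * t)) =
    ∑ n ∈ (Ioc (1 + v * T1) (1 + v * T2)).filter (fun n => n ≡ 1 + v * b [MOD m * v] ∧ ∀ p ∈ D, p ∣ n), F n := by
  have hmod : ∀ t, 1 + v * t ≡ 1 + v * b [MOD m * v] ↔ t ≡ b [MOD m] := by
    intro t
    rw [mul_comm m v]
    constructor
    · intro h
      have := Nat.ModEq.add_left_cancel' 1 h
      exact Nat.ModEq.mul_left_cancel' hv.ne' this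
    · intro h
      exact Nat.ModEq.add_left 1 (Nat.ModEq.mul_left' v h)
  apply sum_bij (fun t _ => 1 + v * t)
  · intro t ht
    simp only [mem_filter, mem_Ioc] at ht ⊢
    refine ⟨⟨?_, ?_⟩, (hmod t).2 ht.2.1, ht.2.2⟩
    · have := Nat.mul_lt_mul_of_pos_left ht.1.1 hv; omega
    · have := Nat.mul_le_mul_left v ht.1.2; omega
  · intro t _ t' _ h
    have : v * t = v * t' := by omega
    exact Nat.eq_of_mul_eq_mul_left hv this
  · intro n hn
    simp only [mem_filter, mem_Ioc] at hn
    have h1 : n ≡ 1 [MOD v] := by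
      have := hn.2.1.of_dvd (Dvd.intro_left m rfl : v ∣ m * v)
      refine this.trans ?_
      simp [Nat.ModEq]
    obtain ⟨t, ht⟩ := (Nat.modEq_iff_dvd' (by omega : 1 ≤ n)).1 h1.symm
    have hn' : n = 1 + v * t := by omega
    subst hn'
    refine ⟨t, ?_, rfl⟩
    simp only [mem_filter, mem_Ioc]
    refine ⟨⟨?_, ?_⟩, (hmod t).1 hn.2.1, hn.2.2⟩
    · have : v * T1 < v * t := by omega
      exact Nat.lt_of_mul_lt_mul_left this
    · have : v * t ≤ v * T2 := by omega
      exact Nat.le_of_mul_le_mul_left this hv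
  · intros; rfl

open Classical in
lemma dens_r {K N : ℕ} {V : ℕ → ℕ} (hF : Forms K N V) (j : ℕ) (hj : j ∈ Ioc 0 K)
    (T1 T2 : ℕ) (hT : T1 ≤ T2) (S : Finset ℕ) :
    ∀ (m b : ℕ) (D : Finset ℕ), 0 < m → (∀ q ∈ S, q.Prime ∧ N < q ∧ ¬ q ∣ m ∧ q ∉ D) →
    (∀ p ∈ D, p.Prime ∧ N < p ∧ ¬ p ∣ m) → Nat.Coprime (Lf V j b) m →
    |(∑ t ∈ Ioc T1 T2, if t ≡ b [MOD m] ∧ (∀ p ∈ D, p ∣ Lf V j t) ∧ ∀ q ∈ S, ∃ i ∈ Ioc 0 K, q ∣ Lf V i t then rr (Lf V j t) else 0) -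
      2 * Lone * (((T2 : ℝ) - T1) / m) * (∏ p ∈ (m * V j).primeFactors, (1 - chi p / p)) * (∏ p ∈ D, rho p) *
        ∏ q ∈ S, ff K q| ≤
      (2 * K : ℝ) ^ S.card * (7 * 2 ^ (m * V j).primeFactors.card * ((Nat.sqrt (1 + V j * T2) : ℝ) + 1)) := by
  have hVj := hF.pos j hj
  have hK : 1 ≤ K := by rw [mem_Ioc] at hj; omega
  have hKr : (1 : ℝ) ≤ K := by exact_mod_cast hK
  induction S using Finset.induction_on with
  | empty =>
    intro m b D hm _ hD hcop
    simp only [notMem_empty, IsEmpty.forall_iff, implies_true, and_true, prod_empty, mul_one, card_empty, pow_zero, one_mul]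
    rw [← sum_filter]
    unfold Lf at hcop ⊢
    rw [base_sum (V j) m b T1 T2 hVj D rr]
    have h4 := hF.four j hj
    have hc2 : Nat.Coprime (1 + V j * b) (m * V j) := by
      apply Nat.Coprime.mul_right hcop
      simp
    have := ap_sum (m * V j) (1 + V j * b) (Nat.mul_pos hm hVj) (h4.mul_left m) (by
        obtain ⟨k, hk⟩ := h4
        rw [hk, mul_assoc]; omega) hc2 D (by
        intro p hp
        obtain ⟨h1, h2, h3⟩ := hD p hp
        refine ⟨h1, fun h => ?_⟩
        rcases (h1.dvd_mul).1 h with h | h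
        · exact h3 h
        · exact hF.ndvd j hj p h1 h2 h) (1 + V j * T1) (1 + V j * T2) (by omega)
        (by have := Nat.mul_le_mul_left (V j) hT; omega)
    have e : (((1 + V j * T2 : ℕ) : ℝ) - (1 + V j * T1 : ℕ)) / (m * V j : ℕ) = ((T2 : ℝ) - T1) / m := by
      push_cast
      have : (V j : ℝ) ≠ 0 := by exact_mod_cast hVj.ne'
      have : (m : ℝ) ≠ 0 := by exact_mod_cast hm.ne'
      field_simp; ring
    rw [e] at this
    exact this
  | insert q S hqS ih =>
    intro m b D hm hS hD hcop
    obtain ⟨hq, hqN, hqm, hqD⟩ := hS q (mem_insert_self _ _)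
    have hS' : ∀ q' ∈ S, q'.Prime ∧ N < q' ∧ ¬ q' ∣ m ∧ q' ∉ D := fun q' h => hS q' (mem_insert_of_mem h)
    have hqr : (q : ℝ) ≠ 0 := by exact_mod_cast hq.ne_zero
    have hmr : (m : ℝ) ≠ 0 := by exact_mod_cast hm.ne'
    have hc : ∀ i, ∃ c, i ∈ Ioc 0 K → (c ≡ b [MOD m] ∧ q ∣ 1 + V i * c ∧ ∀ t, (t ≡ b [MOD m] ∧ q ∣ 1 + V i * t) ↔ t ≡ c [MOD m * q]) := by
      intro i
      by_cases hi : i ∈ Ioc 0 K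
      · obtain ⟨c, h⟩ := exists_crt m q b (V i) hq (hF.ndvd i hi q hq hqN) hqm
        exact ⟨c, fun _ => h⟩
      · exact ⟨0, fun h => absurd h hi⟩
    choose c hc using hc
    set I' := (Ioc 0 K).erase j with hI'
    have hI'card : (I'.card : ℝ) = K - 1 := by
      rw [hI', card_erase_of_mem hj, Nat.card_Ioc, Nat.sub_zero]; push_cast [hK]; rfl
    have hstep : (∑ t ∈ Ioc T1 T2, if t ≡ b [MOD m] ∧ (∀ p ∈ D, p ∣ Lf V j t) ∧ ∀ q' ∈ insert q S, ∃ i ∈ Ioc 0 K, q' ∣ Lf V i t then rr (Lf V j t) else 0) =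
        (∑ t ∈ Ioc T1 T2, if t ≡ b [MOD m] ∧ (∀ p ∈ insert q D, p ∣ Lf V j t) ∧ ∀ q' ∈ S, ∃ i ∈ Ioc 0 K, q' ∣ Lf V i t then rr (Lf V j t) else 0) +
        ∑ i ∈ I', ∑ t ∈ Ioc T1 T2, if t ≡ c i [MOD m * q] ∧ (∀ p ∈ D, p ∣ Lf V j t) ∧ ∀ q' ∈ S, ∃ i ∈ Ioc 0 K, q' ∣ Lf V i t then rr (Lf V j t) else 0 := by
      rw [sum_comm, ← sum_add_distrib]
      apply sum_congr rfl
      intro t _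
      set w := if t ≡ b [MOD m] ∧ (∀ p ∈ D, p ∣ Lf V j t) ∧ ∀ q' ∈ S, ∃ i ∈ Ioc 0 K, q' ∣ Lf V i t then rr (Lf V j t) else 0 with hw
      have h1 : ∀ i ∈ I', (if t ≡ c i [MOD m * q] ∧ (∀ p ∈ D, p ∣ Lf V j t) ∧ ∀ q' ∈ S, ∃ i ∈ Ioc 0 K, q' ∣ Lf V i t then rr (Lf V j t) else 0) =
          if q ∣ Lf V i t then w else 0 := by
        intro i hi
        have hh : (t ≡ b [MOD m] ∧ q ∣ Lf V i t) ↔ t ≡ c i [MOD m * q] := (hc i (mem_of_mem_erase hi)).2.2 t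
        rw [hw, ← ite_and]
        congr 1
        apply propext
        rw [← hh]
        tauto
      have h2 : (if t ≡ b [MOD m] ∧ (∀ p ∈ insert q D, p ∣ Lf V j t) ∧ ∀ q' ∈ S, ∃ i ∈ Ioc 0 K, q' ∣ Lf V i t then rr (Lf V j t) else 0) =
          if q ∣ Lf V j t then w else 0 := by
        rw [hw, ← ite_and]
        congr 1
        apply propext
        rw [forall_mem_insert]
        tauto
      rw [sum_congr rfl h1, h2, add_sum_erase (Ioc 0 K) (fun i => if q ∣ Lf V i t then w else 0) hj]
      rw [← ind_sum (Ioc 0 K) (fun i => q ∣ Lf V i t) _ (fun i hi i' hi' => hF.uniq q hq hqN t i hi i' hi'), hw, ← ite_and]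
      congr 1
      apply propext
      rw [forall_mem_insert]
      tauto
    have hmq : 0 < m * q := Nat.mul_pos hm hq.pos
    -- first piece
    have p1 := ih m b (insert q D) hm (by
      intro q' h
      obtain ⟨h1, h2, h3, h4⟩ := hS' q' h
      refine ⟨h1, h2, h3, ?_⟩
      rw [mem_insert, not_or]
      exact ⟨fun h5 => hqS (h5 ▸ h), h4⟩) (by
      intro p hp
      rcases mem_insert.1 hp with rfl | h
      · exact ⟨hq, hqN, hqm⟩
      · exact hD p h) hcop
    rw [prod_insert hqD] at p1
    have hpf : (m * q * V j).primeFactors = insert q (m * V j).primeFactors := by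
      rw [show m * q * V j = q * (m * V j) by ring,
        Nat.primeFactors_mul hq.ne_zero (Nat.mul_pos hm hVj).ne', hq.primeFactors]
      rfl
    have hqpf : q ∉ (m * V j).primeFactors := by
      intro h
      rcases (hq.dvd_mul).1 (Nat.dvd_of_mem_primeFactors h) with h | h
      · exact hqm h
      · exact hF.ndvd j hj q hq hqN h
    have p2 : ∀ i ∈ I', _ := fun i hi => ih (m * q) (c i) D hmq (by
      intro q' h
      obtain ⟨h1, h2, h3, h4⟩ := hS' q' h
      refine ⟨h1, h2, fun h5 => ?_, h4⟩
      rcases (h1.dvd_mul).1 h5 with h5 | h5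
      · exact h3 h5
      · exact hqS ((Nat.prime_dvd_prime_iff_eq h1 hq).1 h5 ▸ h)) (by
      intro p hp
      obtain ⟨h1, h2, h3⟩ := hD p hp
      refine ⟨h1, h2, fun h5 => ?_⟩
      rcases (h1.dvd_mul).1 h5 with h5 | h5
      · exact h3 h5
      · exact hqD ((Nat.prime_dvd_prime_iff_eq h1 hq).1 h5 ▸ hp)) (by
      have hci := hc i (mem_of_mem_erase hi)
      apply Nat.Coprime.mul_right
      · have : Lf V j (c i) ≡ Lf V j b [MOD m] := Nat.ModEq.add_left 1 (Nat.ModEq.mul_left (V j) hci.1)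
        have hg := this.gcd_eq
        unfold Nat.Coprime at hcop ⊢
        rw [Nat.gcd_comm] at hcop ⊢
        rw [Nat.gcd_comm, hg, Nat.gcd_comm]; exact hcop
      · apply Nat.Coprime.symm
        rw [Nat.Prime.coprime_iff_not_dvd hq]
        intro h
        have := hF.uniq q hq hqN (c i) i (mem_of_mem_erase hi) j hj hci.2.1 h
        exact (mem_erase.1 hi).1 this)
    rw [hpf, prod_insert hqpf, card_insert_of_notMem hqpf] at p2
    rw [hstep, prod_insert hqS, card_insert_of_notMem hqS]
    set G := ∏ p ∈ (m * V j).primeFactors, (1 - chi p / p) with hG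
    set H := ∏ p ∈ D, rho p with hH
    set Q := ∏ q ∈ S, ff K q with hQ
    set R := (7 * 2 ^ (m * V j).primeFactors.card * ((Nat.sqrt (1 + V j * T2) : ℝ) + 1)) with hR
    set len := ((T2 : ℝ) - T1) with hlen
    have hR0 : 0 ≤ R := by positivity
    have p3 : |(∑ i ∈ I', ∑ t ∈ Ioc T1 T2, if t ≡ c i [MOD m * q] ∧ (∀ p ∈ D, p ∣ Lf V j t) ∧ ∀ q' ∈ S, ∃ i ∈ Ioc 0 K, q' ∣ Lf V i t then rr (Lf V j t) else 0) -
        ((K : ℝ) - 1) * (2 * Lone * (len / (m * q : ℕ)) * ((1 - chi q / q) * G) * H * Q)| ≤ ((K : ℝ) - 1) * ((2 * K : ℝ) ^ S.card * (2 * R)) := by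
      rw [← hI'card, ← nsmul_eq_mul, ← sum_const, ← sum_sub_distrib, ← nsmul_eq_mul, ← sum_const]
      refine (abs_sum_le_sum_abs _ _).trans (sum_le_sum fun i hi => ?_)
      refine (p2 i hi).trans (le_of_eq ?_)
      rw [hR]; ring
    have e1 : 2 * Lone * (len / m) * G * H * (ff K q * Q) =
        2 * Lone * (len / m) * G * (rho q * H) * Q +
        ((K : ℝ) - 1) * (2 * Lone * (len / (m * q : ℕ)) * ((1 - chi q / q) * G) * H * Q) := by
      unfold ff; push_cast; field_simp; ring
    rw [e1]
    have hpow : (0 : ℝ) ≤ (2 * K : ℝ) ^ S.card * R := by positivity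
    rw [pow_succ]
    rw [abs_le] at p1 p3 ⊢
    constructor <;> nlinarith
end

section
open Finset

noncomputable def zz (z : ℝ) (i : ℕ) : ℝ := z ^ ((1 / 2 : ℝ) ^ i)

noncomputable def Bk (N : ℕ) (z : ℝ) (i : ℕ) : Finset ℕ :=
  ((Ioc N ⌊z⌋₊).filter Nat.Prime).filter (fun p => zz z (i + 1) < p ∧ (p : ℝ) ≤ zz z i)

lemma zz_one_le {z : ℝ} (hz : 1 ≤ z) (i : ℕ) : 1 ≤ zz z i := Real.one_le_rpow hz (by positivity)

lemma zz_log {z : ℝ} (hz : 1 ≤ z) (i : ℕ) : Real.log (zz z i) = (1 / 2 : ℝ) ^ i * Real.log z :=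
  Real.log_rpow (by linarith) _

lemma zz_anti {z : ℝ} (hz : 1 ≤ z) {i j : ℕ} (h : i ≤ j) : zz z j ≤ zz z i := by
  unfold zz
  apply Real.rpow_le_rpow_of_exponent_le hz
  exact pow_le_pow_of_le_one (by norm_num) (by norm_num) h

lemma Bk_disj {N : ℕ} {z : ℝ} (hz : 1 ≤ z) (i j : ℕ) (hij : i ≠ j) : Disjoint (Bk N z i) (Bk N z j) := by
  rw [disjoint_left]
  intro p h1 h2
  unfold Bk at h1 h2
  rw [mem_filter] at h1 h2
  rcases lt_or_gt_of_ne hij with h | h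
  · have := zz_anti hz (show i + 1 ≤ j by omega)
    linarith [h1.2.1, h2.2.2]
  · have := zz_anti hz (show j + 1 ≤ i by omega)
    linarith [h2.2.1, h1.2.2]

lemma Bk_union {N : ℕ} {z : ℝ} (hz : 1 ≤ z) (m : ℕ) (hm : zz z m ≤ N) :
    (range m).biUnion (Bk N z) = (Ioc N ⌊z⌋₊).filter Nat.Prime := by
  ext p
  rw [mem_biUnion]
  constructor
  · rintro ⟨i, _, h⟩
    exact (mem_filter.1 h).1
  · intro hp
    by_contra hcon
    push Not at hcon
    have hp2 := hp
    rw [mem_filter, mem_Ioc] at hp2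
    have key : ∀ i ≤ m, (p : ℝ) ≤ zz z i := by
      intro i
      induction i with
      | zero =>
        intro _
        unfold zz
        simp only [pow_zero, Real.rpow_one]
        exact (Nat.le_floor_iff (by linarith)).1 hp2.1.2
      | succ i ih =>
        intro hi
        have h1 := ih (by omega)
        have h2 := hcon i (mem_range.2 (by omega))
        unfold Bk at h2
        rw [mem_filter, not_and] at h2
        by_contra h3
        exact h2 hp ⟨not_le.1 h3, h1⟩
    have h4 := key m le_rfl
    have h5 : (N : ℝ) < p := by exact_mod_cast hp2.1.1
    linarith

lemma Bk_sum {N : ℕ} (hN : 8 ≤ N) {z : ℝ} (hz : 1 ≤ z) (i : ℕ) :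
    ∑ p ∈ Bk N z i, 1 / (p : ℝ) ≤ 8 := by
  rcases (Bk N z i).eq_empty_or_nonempty with h | ⟨p0, hp0⟩
  · rw [h]; simp
  have hp0' := hp0
  unfold Bk at hp0'
  simp only [mem_filter, mem_Ioc] at hp0'
  have h8 : (8 : ℝ) ≤ zz z i := by
    have : (8 : ℝ) ≤ p0 := by exact_mod_cast (by omega : 8 ≤ p0)
    linarith [hp0'.2.2]
  have hlz : 2 ≤ Real.log (zz z i) := by
    rw [Real.le_log_iff_exp_le (by linarith)]
    have := Real.exp_one_lt_d9
    have h2 : Real.exp 2 = Real.exp 1 ^ 2 := by rw [← Real.exp_nat_mul]; norm_num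
    rw [h2]
    have h0 := Real.exp_pos 1
    nlinarith
  have hl : Real.log (zz z (i + 1)) = Real.log (zz z i) / 2 := by
    rw [zz_log hz, zz_log hz, pow_succ]; ring
  set lu := Real.log (zz z (i + 1)) with hlu
  have hlu1 : 1 ≤ lu := by rw [hl]; linarith
  have hfl : 1 ≤ ⌊zz z i⌋₊ := Nat.le_floor (by push_cast; linarith)
  have h1 := sum_log_p_div_p ⌊zz z i⌋₊ hfl
  have h2 : Real.log (⌊zz z i⌋₊ : ℝ) ≤ Real.log (zz z i) := by
    apply Real.log_le_log (by exact_mod_cast hfl) (Nat.floor_le (by linarith))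
  have h3 : lu * ∑ p ∈ Bk N z i, 1 / (p : ℝ) ≤ ∑ p ∈ (Ioc 0 ⌊zz z i⌋₊).filter Nat.Prime, Real.log p / p := by
    rw [mul_sum]
    calc _ ≤ ∑ p ∈ Bk N z i, Real.log p / p := by
          apply sum_le_sum
          intro p hp
          unfold Bk at hp
          simp only [mem_filter, mem_Ioc] at hp
          have : lu ≤ Real.log p := Real.log_le_log (by linarith [zz_one_le hz (i + 1)]) hp.2.1.le
          rw [mul_one_div]; gcongr
      _ ≤ _ := by
          apply sum_le_sum_of_subset_of_nonneg
          · intro p hp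
            unfold Bk at hp
            simp only [mem_filter, mem_Ioc] at hp ⊢
            exact ⟨⟨hp.1.2.pos, Nat.le_floor hp.2.2⟩, hp.1.2⟩
          · intro p hp _
            simp only [mem_filter, mem_Ioc] at hp
            have : (1 : ℝ) ≤ p := by exact_mod_cast hp.1.1
            exact div_nonneg (Real.log_nonneg this) (by linarith)
  have h4 : lu * ∑ p ∈ Bk N z i, 1 / (p : ℝ) ≤ lu * 8 := by linarith
  exact le_of_mul_le_mul_left h4 (by linarith)

lemma one_sub_ge_exp {x : ℝ} (h0 : 0 ≤ x) (h1 : x ≤ 1 / 2) : Real.exp (-(2 * x)) ≤ 1 - x := by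
  have h := Real.add_one_le_exp (2 * x)
  have h2 : (1 - x) * (2 * x + 1) ≥ 1 := by nlinarith
  rw [Real.exp_neg, inv_eq_one_div, div_le_iff₀ (Real.exp_pos _)]
  nlinarith

lemma prod_one_sub_ge (B : Finset ℕ) (g : ℕ → ℝ) (hg : ∀ p ∈ B, 0 ≤ g p ∧ g p ≤ 1 / 2) (Λ : ℝ) (hΛ : ∑ p ∈ B, g p ≤ Λ) :
    Real.exp (-(2 * Λ)) ≤ ∏ p ∈ B, (1 - g p) := by
  calc _ ≤ Real.exp (∑ p ∈ B, -(2 * g p)) := by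
        apply Real.exp_le_exp.2
        rw [sum_neg_distrib, ← mul_sum]; linarith
    _ = ∏ p ∈ B, Real.exp (-(2 * g p)) := Real.exp_sum _ _
    _ ≤ _ := prod_le_prod (fun _ _ => (Real.exp_pos _).le) fun p hp => one_sub_ge_exp (hg p hp).1 (hg p hp).2

lemma esy_small (g : ℕ → ℝ) (B : Finset ℕ) (hg : ∀ p ∈ B, 0 ≤ g p) (Λ : ℝ) (hΛ0 : 0 < Λ) (hΛ : ∑ p ∈ B, g p ≤ Λ)
    (n : ℕ) (hn : 21 * Λ ≤ n) : esy g B n ≤ Real.exp (-(2 * n)) := by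
  refine (esy_le g B hg n).trans ?_
  have hn0 : (0 : ℝ) < n := by linarith
  have hf := Nat.factorial_pos n
  have h1 : ((n : ℝ) / Real.exp 1) ^ n ≤ n.factorial := by
    have h2 := Real.sum_le_exp_of_nonneg hn0.le (n + 1)
    have h3 : (n : ℝ) ^ n / n.factorial ≤ Real.exp n := by
      refine le_trans ?_ h2
      apply single_le_sum (f := fun i : ℕ => (n : ℝ) ^ i / i.factorial) (fun i _ => by positivity) (mem_range.2 (Nat.lt_succ_self n))
    rw [div_le_iff₀ (by exact_mod_cast hf)] at h3
    rw [div_pow, ← Real.exp_nat_mul, mul_one, div_le_iff₀ (Real.exp_pos _)]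
    linarith
  have he3 : Real.exp 3 ≤ 21 := by
    have := Real.exp_one_lt_d9
    have h2 : Real.exp 3 = Real.exp 1 ^ 3 := by rw [← Real.exp_nat_mul]; norm_num
    rw [h2]
    have h0 := Real.exp_pos 1
    calc Real.exp 1 ^ 3 ≤ (2.72 : ℝ) ^ 3 := by gcongr; linarith
      _ ≤ 21 := by norm_num
  calc (∑ p ∈ B, g p) ^ n / n.factorial ≤ (n / 21 : ℝ) ^ n / ((n : ℝ) / Real.exp 1) ^ n := by
        have := sum_nonneg hg
        gcongr
        linarith
    _ = (Real.exp 1 / 21) ^ n := by rw [← div_pow]; congr 1; field_simp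
    _ ≤ (Real.exp (-2)) ^ n := by
        gcongr
        rw [div_le_iff₀ (by norm_num)]
        have : Real.exp 1 = Real.exp (-2) * Real.exp 3 := by rw [← Real.exp_add]; norm_num
        rw [this]; gcongr
    _ = _ := by rw [← Real.exp_nat_mul]; congr 1; ring

lemma sum_half_pow (m : ℕ) : ∑ i ∈ range m, (1 / 2 : ℝ) ^ i ≤ 2 := by
  have : ∑ i ∈ range m, (1 / 2 : ℝ) ^ i = 2 - 2 * (1 / 2) ^ m := by
    induction m with
    | zero => simp
    | succ m ih => rw [sum_range_succ, ih, pow_succ]; ring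
  rw [this]; have : (0 : ℝ) ≤ (1 / 2) ^ m := by positivity
  linarith

lemma sum_half_pow_mul (m : ℕ) : ∑ i ∈ range m, (1 / 2 : ℝ) ^ i * i ≤ 2 := by
  have : ∑ i ∈ range m, (1 / 2 : ℝ) ^ i * i = 2 - 2 * (m + 1) * (1 / 2) ^ m := by
    induction m with
    | zero => simp
    | succ m ih => rw [sum_range_succ, ih, pow_succ]; push_cast; ring
  rw [this]; have : (0 : ℝ) ≤ 2 * (m + 1) * (1 / 2) ^ m := by positivity
  linarith

/-- sieve levels -/
def kk (K i : ℕ) : ℕ := 200 * K + i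

lemma level_bound {K : ℕ} (hK : 1 ≤ K) {z : ℝ} (hz : 1 ≤ z) (m : ℕ) :
    ∏ i ∈ range m, zz z i ^ (2 * kk K i + 1) ≤ z ^ (1000 * K) := by
  have hz0 : 0 < z := by linarith
  have h1 : ∀ i, zz z i ^ (2 * kk K i + 1) = Real.exp (Real.log z * ((1 / 2 : ℝ) ^ i * (400 * K + 1) + 2 * ((1 / 2 : ℝ) ^ i * i))) := by
    intro i
    rw [← Real.exp_log (show 0 < zz z i by linarith [zz_one_le hz i]), ← Real.exp_nat_mul, zz_log hz]
    congr 1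
    unfold kk; push_cast; ring
  simp_rw [h1]
  rw [← Real.exp_sum, ← mul_sum, sum_add_distrib, ← sum_mul, ← mul_sum]
  rw [← Real.exp_log hz0, ← Real.exp_nat_mul, Real.exp_log hz0]
  apply Real.exp_le_exp.2
  rw [mul_comm]
  have hl : 0 ≤ Real.log z := Real.log_nonneg hz
  have hKr : (1 : ℝ) ≤ K := by exact_mod_cast hK
  apply mul_le_mul_of_nonneg_right _ hl
  have a1 := sum_half_pow m
  have a2 := sum_half_pow_mul m
  push_cast
  nlinarith

theorem sieve_core {K N : ℕ} (hK : 1 ≤ K) (hN : 8 ≤ N) (hKN : 4 * K ≤ N) {z : ℝ} (hz : 1 ≤ z) (m : ℕ)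
    (hm : zz z m ≤ N) (P : Finset ℕ) (hP : P = (Ioc N ⌊z⌋₊).filter Nat.Prime)
    (g : ℕ → ℝ) (hg : ∀ p ∈ P, 0 ≤ g p ∧ g p ≤ 2 * K / p) :
    Real.exp (-(32 * K * m)) ≤ ∏ p ∈ P, (1 - g p) ∧
    ∀ (E : ℕ → ℕ → Prop) (T : Finset ℕ) (φ : ℕ → ℝ) (_ : ∀ t ∈ T, 0 ≤ φ t) (M Err : ℝ) (_ : 0 ≤ M) (_ : 0 ≤ Err)
    (_ : ∀ S ⊆ P, (∏ p ∈ S, (p : ℝ)) ≤ z ^ (1000 * K) →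
      |∑ t ∈ T, φ t * ∏ p ∈ S, ind1 E t p - M * ∏ p ∈ S, g p| ≤ Err),
    |∑ t ∈ T, φ t * ∏ p ∈ P, (1 - ind1 E t p) - M * ∏ p ∈ P, (1 - g p)|
      ≤ 1 / 100 * (M * ∏ p ∈ P, (1 - g p)) + (m + 1) * z ^ (1000 * K) * Err := by
  have hKr : (1 : ℝ) ≤ K := by exact_mod_cast hK
  have hU := Bk_union hz m hm
  rw [← hP] at hU
  have hsub : ∀ i, Bk N z i ⊆ P := fun i => by rw [hP]; exact filter_subset _ _
  have hPm : ∀ p ∈ P, N < p ∧ p.Prime := by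
    intro p hp; rw [hP, mem_filter, mem_Ioc] at hp; exact ⟨hp.1.1, hp.2⟩
  have hg' : ∀ p ∈ P, 0 ≤ g p ∧ g p ≤ 1 / 2 := by
    intro p hp
    refine ⟨(hg p hp).1, (hg p hp).2.trans ?_⟩
    have : (4 * K : ℝ) ≤ p := by exact_mod_cast (by have := hPm p hp; omega : 4 * K ≤ p)
    rw [div_le_iff₀ (by linarith)]; linarith
  have hsum : ∀ i, ∑ p ∈ Bk N z i, g p ≤ 16 * K := by
    intro i
    calc _ ≤ ∑ p ∈ Bk N z i, 2 * K * (1 / (p : ℝ)) := sum_le_sum fun p hp => by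
          rw [mul_one_div]; exact (hg p (hsub i hp)).2
      _ = 2 * K * ∑ p ∈ Bk N z i, 1 / (p : ℝ) := by rw [mul_sum]
      _ ≤ 2 * K * 8 := by gcongr; exact Bk_sum hN hz i
      _ = _ := by ring
  have hV : ∀ i, Real.exp (-(2 * (16 * K))) ≤ ∏ p ∈ Bk N z i, (1 - g p) := fun i =>
    prod_one_sub_ge _ g (fun p hp => hg' p (hsub i hp)) _ (hsum i)
  constructor
  · rw [← hU, prod_biUnion (fun i _ j _ hij => Bk_disj hz i j hij)]
    calc Real.exp (-(32 * K * m)) = ∏ i ∈ range m, Real.exp (-(2 * (16 * K))) := by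
          rw [prod_const, card_range, ← Real.exp_nat_mul]; congr 1; ring
      _ ≤ _ := prod_le_prod (fun _ _ => (Real.exp_pos _).le) fun i _ => hV i
  · intro E T φ hφ M Err hM hErr hS
    have hlev := level_bound hK hz m
    have hε : ∀ i < m, esy g (Bk N z i) (2 * kk K i + 1) ≤ Real.exp (-((2 * kk K i + 1 : ℕ) : ℝ)) * ∏ p ∈ Bk N z i, (1 - g p) := by
      intro i _
      refine (esy_small g (Bk N z i) (fun p hp => (hg' p (hsub i hp)).1) (16 * K) (by linarith) (hsum i) _ ?_).trans ?_
      · unfold kk; push_cast; have : (0 : ℝ) ≤ i := by positivity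
        linarith
      · calc _ ≤ Real.exp (-((2 * kk K i + 1 : ℕ) : ℝ)) * Real.exp (-(2 * (16 * K))) := by
              rw [← Real.exp_add]
              apply Real.exp_le_exp.2
              unfold kk; push_cast; have : (0 : ℝ) ≤ i := by positivity
              linarith
          _ ≤ _ := by gcongr; exact hV i
    have h2 : ∏ i ∈ range m, (1 + Real.exp (-((2 * kk K i + 1 : ℕ) : ℝ))) ≤ 1 + 1 / 100 := by
      have hb : ∀ i, Real.exp (-((2 * kk K i + 1 : ℕ) : ℝ)) ≤ 1 / 400 * (1 / 2 : ℝ) ^ i := by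
        intro i
        have h1 : Real.exp (-((2 * kk K i + 1 : ℕ) : ℝ)) ≤ Real.exp (-399) * Real.exp (-(i : ℝ)) := by
          rw [← Real.exp_add]
          apply Real.exp_le_exp.2
          unfold kk; push_cast; have : (0 : ℝ) ≤ i := by positivity
          linarith
        have h3 : Real.exp (-399) ≤ 1 / 400 := by
          rw [Real.exp_neg, inv_eq_one_div]
          apply one_div_le_one_div_of_le (by norm_num)
          have := Real.add_one_le_exp (399 : ℝ); linarith
        have h4 : Real.exp (-(i : ℝ)) ≤ (1 / 2 : ℝ) ^ i := by
          have : Real.exp (-(i : ℝ)) = (Real.exp (-1)) ^ i := by rw [← Real.exp_nat_mul]; congr 1; ring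
          rw [this]; gcongr
          rw [Real.exp_neg, inv_eq_one_div]
          apply one_div_le_one_div_of_le (by norm_num)
          have := Real.add_one_le_exp (1 : ℝ); linarith
        exact h1.trans (mul_le_mul h3 h4 (Real.exp_pos _).le (by norm_num))
      calc _ ≤ ∏ i ∈ range m, Real.exp (1 / 400 * (1 / 2 : ℝ) ^ i) := by
            apply prod_le_prod (fun _ _ => by positivity)
            intro i _
            have := Real.add_one_le_exp (1 / 400 * (1 / 2 : ℝ) ^ i)
            linarith [hb i]
        _ = Real.exp (1 / 400 * ∑ i ∈ range m, (1 / 2 : ℝ) ^ i) := by rw [← Real.exp_sum, mul_sum]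
        _ ≤ Real.exp (1 / 200) := by
            apply Real.exp_le_exp.2
            have := sum_half_pow m; linarith
        _ ≤ 1 + 1 / 100 := by
            have := one_sub_ge_exp (x := 1 / 400) (by norm_num) (by norm_num)
            have h5 : Real.exp (1 / 200) = 1 / Real.exp (-(1 / 200)) := by rw [Real.exp_neg]; simp
            have h6 := Real.add_one_le_exp (-(1 / 200) : ℝ)
            rw [h5, div_le_iff₀ (Real.exp_pos _)]
            nlinarith
    have := brun_hooley E g (Bk N z) (zz z) (kk K) m (fun i _ => zz_one_le hz i)
      (by
        intro i _ p hp
        have hp' := hp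
        unfold Bk at hp'
        rw [mem_filter] at hp'
        exact ⟨(hPm p (hsub i hp)).2.two_le, hp'.2.2⟩)
      (fun i _ j _ hij => Bk_disj hz i j hij)
      (fun i _ p hp => ⟨(hg' p (hsub i hp)).1, (hg' p (hsub i hp)).2.trans (by norm_num)⟩)
      (fun i => Real.exp (-((2 * kk K i + 1 : ℕ) : ℝ))) (fun i _ => (Real.exp_pos _).le) hε (1 / 100) (by norm_num) h2
      T φ hφ M Err hM hErr (by
        rw [hU]
        intro S hSP hle
        exact hS S hSP (hle.trans hlev))
    rw [hU] at this
    refine this.trans ?_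
    gcongr
end

section
open Finset

structure Setup (K N : ℕ) (V : ℕ → ℕ) (z : ℝ) (m T1 T2 : ℕ) (R : ℝ) : Prop where
  forms : Forms K N V
  pf : ∀ j ∈ Ioc 0 K, (V j).primeFactors = (Ioc 0 N).filter Nat.Prime
  hK : 1 ≤ K
  hN : 8 ≤ N
  hKN : 4 * K ≤ N
  hz : 1 ≤ z
  hNz : N ≤ ⌊z⌋₊
  hm : zz z m ≤ N
  hT : T1 ≤ T2
  hR1 : 1 ≤ R
  hR : ∀ j ∈ Ioc 0 K, 7 * 2 ^ N * ((Nat.sqrt (1 + V j * T2) : ℝ) + 1) ≤ R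

noncomputable def Pz (N : ℕ) (z : ℝ) : Finset ℕ := (Ioc N ⌊z⌋₊).filter Nat.Prime

def Ev (K : ℕ) (V : ℕ → ℕ) (q t : ℕ) : Prop := ∃ i ∈ Ioc 0 K, q ∣ Lf V i t

open Classical in
noncomputable def TT (K N : ℕ) (V : ℕ → ℕ) (z : ℝ) (T1 T2 : ℕ) : Finset ℕ :=
  (Ioc T1 T2).filter (fun t => ∀ q ∈ Pz N z, ¬ Ev K V q t)

noncomputable def PiK (K N : ℕ) (z : ℝ) : ℝ := ∏ p ∈ Pz N z, (1 - (K : ℝ) / p)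

noncomputable def Hz (z : ℝ) : ℝ := 2 * Lone * ∏ p ∈ (Ioc 0 ⌊z⌋₊).filter Nat.Prime, (1 - chi p / p)

open Classical in
lemma prod_ind (E : ℕ → ℕ → Prop) (t : ℕ) (S : Finset ℕ) :
    ∏ p ∈ S, ind1 E t p = if ∀ q ∈ S, E q t then 1 else 0 := by
  split_ifs with h
  · apply prod_eq_one
    intro p hp; unfold ind1; rw [if_pos (h p hp)]
  · push Not at h
    obtain ⟨q, hq, hE⟩ := h
    apply prod_eq_zero hq
    unfold ind1; rw [if_neg hE]

open Classical in
lemma prod_one_sub_ind (E : ℕ → ℕ → Prop) (t : ℕ) (S : Finset ℕ) :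
    ∏ p ∈ S, (1 - ind1 E t p) = if ∀ q ∈ S, ¬ E q t then 1 else 0 := by
  split_ifs with h
  · apply prod_eq_one
    intro p hp; unfold ind1; rw [if_neg (h p hp)]; simp
  · push Not at h
    obtain ⟨q, hq, hE⟩ := h
    apply prod_eq_zero hq
    unfold ind1; rw [if_pos hE]; simp

lemma sum_TT {K N : ℕ} {V : ℕ → ℕ} {z : ℝ} {T1 T2 : ℕ} (φ : ℕ → ℝ) :
    ∑ t ∈ Ioc T1 T2, φ t * ∏ p ∈ Pz N z, (1 - ind1 (Ev K V) t p) = ∑ t ∈ TT K N V z T1 T2, φ t := by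
  classical
  unfold TT
  rw [sum_filter]
  apply sum_congr rfl
  intro t _
  rw [prod_one_sub_ind]
  split_ifs <;> simp

lemma pow_card_le (c : ℝ) (hc : 0 ≤ c) (S : Finset ℕ) (h : ∀ p ∈ S, c ≤ p) : c ^ S.card ≤ ∏ p ∈ S, (p : ℝ) := by
  rw [← prod_const]
  exact prod_le_prod (fun _ _ => hc) h

lemma chi_div_le (p : ℕ) (hp : p.Prime) : |chi p / p| ≤ 1 / 2 := by
  rcases hp.eq_two_or_odd with rfl | h
  · simp [chi_eq]
  · have h3 : (3 : ℝ) ≤ p := by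
      have := hp.two_le
      exact_mod_cast (by omega : 3 ≤ p)
    rw [abs_div, abs_of_pos (by linarith : (0 : ℝ) < p), div_le_iff₀ (by linarith)]
    linarith [chi_abs p]

lemma rho_nonneg (p : ℕ) (hp : p.Prime) : 0 ≤ rho p := by
  unfold rho
  have h1 : (1 : ℝ) ≤ p := by exact_mod_cast hp.one_lt.le
  have hp0 : (0 : ℝ) < p := by linarith
  have e : 1 / (p : ℝ) + (1 - 1 / p) * (chi p / p) = (p + (p - 1) * chi p) / p ^ 2 := by field_simp
  rw [e]
  have := chi_ge p
  apply div_nonneg _ (by positivity)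
  nlinarith

lemma ff_eq (K p : ℕ) (hp : p.Prime) : 1 - ff K p = (1 - chi p / p) * (1 - (K : ℝ) / p) := by
  unfold ff rho
  have hp0 : (p : ℝ) ≠ 0 := by exact_mod_cast hp.ne_zero
  field_simp; ring

lemma ff_bounds (K p : ℕ) (hK : 1 ≤ K) (hp : p.Prime) : 0 ≤ ff K p ∧ ff K p ≤ 2 * K / p := by
  have hKr : (1 : ℝ) ≤ K := by exact_mod_cast hK
  have h2 : (2 : ℝ) ≤ p := by exact_mod_cast hp.two_le
  have hp0 : (0 : ℝ) < p := by linarith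
  have hc := abs_le.1 (chi_div_le p hp)
  constructor
  · unfold ff
    have := rho_nonneg p hp
    have : 0 ≤ ((K : ℝ) - 1) * ((1 - chi p / p) / p) :=
      mul_nonneg (by linarith) (div_nonneg (by linarith) hp0.le)
    linarith
  · have e : ff K p = (((K : ℝ) - 1) * (1 - chi p / p) + (1 + (1 - 1 / p) * chi p)) / p := by
      unfold ff rho; field_simp
    rw [e]
    have h1 : 1 / (p : ℝ) ≤ 1 := by rw [div_le_one hp0]; linarith
    have h0 : 0 ≤ 1 / (p : ℝ) := by positivity
    have : (1 - 1 / (p : ℝ)) * chi p ≤ 1 := by nlinarith [chi_le p]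
    gcongr
    nlinarith

section
variable {K N : ℕ} {V : ℕ → ℕ} {z : ℝ} {m T1 T2 : ℕ} {R : ℝ}

lemma Pz_mem (hs : Setup K N V z m T1 T2 R) {p : ℕ} (hp : p ∈ Pz N z) : p.Prime ∧ N < p ∧ (4 * K : ℝ) ≤ p := by
  unfold Pz at hp
  rw [mem_filter, mem_Ioc] at hp
  refine ⟨hp.2, hp.1.1, ?_⟩
  have := hs.hKN
  exact_mod_cast (by omega : 4 * K ≤ p)

lemma PiK_ge (hs : Setup K N V z m T1 T2 R) : Real.exp (-(32 * K * m)) ≤ PiK K N z := by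
  have := (sieve_core hs.hK hs.hN hs.hKN hs.hz m hs.hm (Pz N z) rfl (fun p => (K : ℝ) / p) (fun p hp => by
    have h : (0 : ℝ) ≤ K / p := by positivity
    refine ⟨h, ?_⟩
    have : 2 * (K : ℝ) / p = 2 * (K / p) := by ring
    rw [this]; linarith)).1
  exact this

lemma TT_card (hs : Setup K N V z m T1 T2 R) :
    |((TT K N V z T1 T2).card : ℝ) - ((T2 : ℝ) - T1) * PiK K N z| ≤
      1 / 100 * (((T2 : ℝ) - T1) * PiK K N z) + (m + 1) * z ^ (1000 * K) * (z ^ (1000 * K) * R) := by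
  have hT' : (T1 : ℝ) ≤ T2 := by exact_mod_cast hs.hT
  have hz0 : 0 ≤ z := by linarith [hs.hz]
  have := (sieve_core hs.hK hs.hN hs.hKN hs.hz m hs.hm (Pz N z) rfl (fun p => (K : ℝ) / p) (fun p hp => by
    have h : (0 : ℝ) ≤ K / p := by positivity
    refine ⟨h, ?_⟩
    have : 2 * (K : ℝ) / p = 2 * (K / p) := by ring
    rw [this]; linarith)).2 (Ev K V) (Ioc T1 T2) (fun _ => 1) (fun _ _ => by norm_num) ((T2 : ℝ) - T1) (z ^ (1000 * K) * R)
    (by linarith) (mul_nonneg (by positivity) (by linarith [hs.hR1])) (by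
      intro S hS hle
      classical
      have h1 := dens_count hs.forms T1 T2 hs.hT S 1 0 one_pos (fun q hq => by
        have := Pz_mem hs (hS hq)
        exact ⟨this.1, this.2.1, fun h => this.1.one_lt.ne' (Nat.dvd_one.1 h)⟩)
      have h2 : (K : ℝ) ^ S.card ≤ z ^ (1000 * K) * R := by
        calc (K : ℝ) ^ S.card ≤ ∏ p ∈ S, (p : ℝ) := pow_card_le _ (by positivity) S (fun p hp => by
              have := (Pz_mem hs (hS hp)).2.2
              have h0 : (0 : ℝ) ≤ K := by positivity
              linarith)
          _ ≤ z ^ (1000 * K) := hle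
          _ ≤ _ := le_mul_of_one_le_right (by positivity) hs.hR1
      refine le_trans (le_of_eq ?_) (h1.trans h2)
      congr 2
      · apply sum_congr rfl
        intro t _
        rw [prod_ind, one_mul]
        congr 1
        simp [Ev, Nat.modEq_one]
      · simp)
  rw [sum_TT] at this
  simpa [PiK] using this

lemma main_const (hs : Setup K N V z m T1 T2 R) {j : ℕ} (hj : j ∈ Ioc 0 K) :
    2 * Lone * (∏ p ∈ (V j).primeFactors, (1 - chi p / p)) * ∏ p ∈ Pz N z, (1 - ff K p) = Hz z * PiK K N z := by
  unfold Hz PiK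
  rw [hs.pf j hj, prod_congr rfl (fun p hp => ff_eq K p (Pz_mem hs hp).1), prod_mul_distrib]
  have : (Ioc 0 ⌊z⌋₊).filter Nat.Prime = (Ioc 0 N).filter Nat.Prime ∪ Pz N z := by
    unfold Pz
    rw [← filter_union, Ioc_union_Ioc_eq_Ioc (by omega) hs.hNz]
  rw [this, prod_union]
  · ring
  · unfold Pz
    rw [disjoint_left]
    intro p h1 h2
    simp only [mem_filter, mem_Ioc] at h1 h2
    omega

lemma pf_prod_nonneg (hs : Setup K N V z m T1 T2 R) {j : ℕ} : 0 ≤ ∏ p ∈ (V j).primeFactors, (1 - chi p / p) := by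
  apply prod_nonneg
  intro p hp
  have := abs_le.1 (chi_div_le p (Nat.prime_of_mem_primeFactors hp))
  linarith

/-- general weighted sieve, D a finset of primes outside the sieving range -/
lemma TT_r (hs : Setup K N V z m T1 T2 R) {j : ℕ} (hj : j ∈ Ioc 0 K) (D : Finset ℕ)
    (hD : ∀ p ∈ D, p.Prime ∧ z < p) [DecidablePred fun t => ∀ p ∈ D, p ∣ Lf V j t] :
    |(∑ t ∈ TT K N V z T1 T2, if ∀ p ∈ D, p ∣ Lf V j t then rr (Lf V j t) else 0) -
        Hz z * (((T2 : ℝ) - T1) * PiK K N z) * ∏ p ∈ D, rho p| ≤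
      1 / 100 * (Hz z * (((T2 : ℝ) - T1) * PiK K N z) * ∏ p ∈ D, rho p) +
        (m + 1) * z ^ (1000 * K) * (z ^ (1000 * K) * R) := by
  have hT' : (T1 : ℝ) ≤ T2 := by exact_mod_cast hs.hT
  have hz0 : 0 ≤ z := by linarith [hs.hz]
  have hρ : 0 ≤ ∏ p ∈ D, rho p := prod_nonneg fun p hp => rho_nonneg p (hD p hp).1
  have hG := pf_prod_nonneg hs (j := j)
  have hL := Lone_ge
  have hDN : ∀ p ∈ D, N < p := by
    intro p hp
    have h1 : (N : ℝ) ≤ z := le_trans (by exact_mod_cast hs.hNz) (Nat.floor_le hz0)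
    exact_mod_cast (h1.trans_lt (hD p hp).2)
  have := (sieve_core hs.hK hs.hN hs.hKN hs.hz m hs.hm (Pz N z) rfl (ff K) (fun p hp =>
      ff_bounds K p hs.hK (Pz_mem hs hp).1)).2 (Ev K V) (Ioc T1 T2)
    (fun t => if ∀ p ∈ D, p ∣ Lf V j t then rr (Lf V j t) else 0) (fun t _ => by
      split_ifs
      · exact rr_nonneg _
      · exact le_rfl) (2 * Lone * ((T2 : ℝ) - T1) * (∏ p ∈ (V j).primeFactors, (1 - chi p / p)) * ∏ p ∈ D, rho p) (z ^ (1000 * K) * R)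
    (mul_nonneg (mul_nonneg (mul_nonneg (by linarith) (by linarith)) hG) hρ)
    (mul_nonneg (by positivity) (by linarith [hs.hR1])) (by
      intro S hS hle
      classical
      have h1 := dens_r hs.forms j hj T1 T2 hs.hT S 1 0 D one_pos (fun q hq => by
        have := Pz_mem hs (hS hq)
        refine ⟨this.1, this.2.1, fun h => this.1.one_lt.ne' (Nat.dvd_one.1 h), fun h => ?_⟩
        have h2 := (hD q h).2
        have h3 := hS hq
        unfold Pz at h3
        rw [mem_filter, mem_Ioc] at h3
        have := (Nat.le_floor_iff hz0).1 h3.1.2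
        linarith) (fun p hp => ⟨(hD p hp).1, hDN p hp, fun h => (hD p hp).1.one_lt.ne' (Nat.dvd_one.1 h)⟩) (Nat.coprime_one_right _)
      have hcard : (V j).primeFactors.card ≤ N := by
        rw [hs.pf j hj]
        refine (card_filter_le _ _).trans ?_
        simp
      have h2 : (2 * K : ℝ) ^ S.card * (7 * 2 ^ (1 * V j).primeFactors.card * ((Nat.sqrt (1 + V j * T2) : ℝ) + 1)) ≤ z ^ (1000 * K) * R := by
        rw [one_mul]
        have a1 : (2 * K : ℝ) ^ S.card ≤ z ^ (1000 * K) := le_trans (pow_card_le _ (by positivity) S (fun p hp => by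
              have := (Pz_mem hs (hS hp)).2.2
              have h0 : (0 : ℝ) ≤ K := by positivity
              linarith)) hle
        have a2 : 7 * 2 ^ (V j).primeFactors.card * ((Nat.sqrt (1 + V j * T2) : ℝ) + 1) ≤ R := by
          refine le_trans ?_ (hs.hR j hj)
          gcongr
          norm_num
        exact mul_le_mul a1 a2 (by positivity) (by positivity)
      refine le_trans (le_of_eq ?_) (h1.trans h2)
      congr 2
      · apply sum_congr rfl
        intro t _
        rw [prod_ind, mul_ite, mul_one, mul_zero, ← ite_and]
        congr 1
        apply propext
        simp only [Ev, Nat.modEq_one]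
        tauto
      · simp)
  rw [sum_TT] at this
  have e : ∀ Q : ℝ, 2 * Lone * ((T2 : ℝ) - T1) * (∏ p ∈ (V j).primeFactors, (1 - chi p / p)) * Q * ∏ p ∈ Pz N z, (1 - ff K p) =
      Hz z * (((T2 : ℝ) - T1) * PiK K N z) * Q := by
    intro Q
    have := main_const hs hj
    calc _ = (2 * Lone * (∏ p ∈ (V j).primeFactors, (1 - chi p / p)) * ∏ p ∈ Pz N z, (1 - ff K p)) * ((T2 : ℝ) - T1) * Q := by ring
      _ = _ := by rw [this]; ring
  rw [e] at this
  exact this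

end
end

section
open Finset

lemma one_sub_ge_exp' {x : ℝ} (h : |x| ≤ 1 / 2) : Real.exp (-x - x ^ 2) ≤ 1 - x := by
  rw [abs_le] at h
  -- exp(u) ≤ 1/(1-u) style bounds
  have h2 : 1 + (x + x ^ 2) + (x + x ^ 2) ^ 2 / 2 ≤ Real.exp (x + x ^ 2) ∨ x < 0 := by
    by_cases hx : x < 0
    · exact Or.inr hx
    · left
      exact Real.quadratic_le_exp_of_nonneg (by nlinarith)
  have e : -x - x ^ 2 = -(x + x ^ 2) := by ring
  rw [e, Real.exp_neg, inv_eq_one_div, div_le_iff₀ (Real.exp_pos _)]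
  have hp : 0 < 1 - x := by linarith
  rcases h2 with h2 | hx
  · have hx0 : -1 / 2 ≤ x := by linarith
    have : 1 ≤ (1 - x) * (1 + (x + x ^ 2) + (x + x ^ 2) ^ 2 / 2) := by
      have e2 : (1 - x) * (1 + (x + x ^ 2) + (x + x ^ 2) ^ 2 / 2) - 1 = x ^ 2 * (1 / 2 - x * (1 / 2) - x ^ 2 / 2 - x ^ 3 / 2) := by ring
      have : 0 ≤ 1 / 2 - x * (1 / 2) - x ^ 2 / 2 - x ^ 3 / 2 := by
        have : x ^ 2 ≤ 1 / 4 := by nlinarith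
        have h4 : x ^ 3 ≤ 1 / 8 := by
          have : x ^ 3 = x * x ^ 2 := by ring
          nlinarith [sq_nonneg x]
        linarith
      nlinarith [mul_nonneg (sq_nonneg x) this]
    nlinarith
  · have h3 := Real.add_one_le_exp (x + x ^ 2)
    have : 1 ≤ (1 - x) * (x + x ^ 2 + 1) := by
      have : (1 - x) * (x + x ^ 2 + 1) = 1 - x ^ 3 := by ring
      have h5 : x ^ 3 = x * x ^ 2 := by ring
      nlinarith [sq_nonneg x]
    nlinarith

lemma sum_inv_sq (a b : ℕ) (ha : 1 ≤ a) : ∑ n ∈ Ioc a b, 1 / (n : ℝ) ^ 2 ≤ 1 / (a : ℝ) := by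
  rcases le_or_gt b a with h | h
  · rw [Ioc_eq_empty (by omega)]; simp
  have : ∀ b, a ≤ b → ∑ n ∈ Ioc a b, 1 / (n : ℝ) ^ 2 ≤ 1 / (a : ℝ) - 1 / (b : ℝ) := by
    intro b hb
    induction b, hb using Nat.le_induction with
    | base => simp
    | succ b hb ih =>
      rw [sum_Ioc_succ_top (by omega)]
      have hb0 : (0 : ℝ) < b := by exact_mod_cast (by omega : 0 < b)
      have : 1 / ((b + 1 : ℕ) : ℝ) ^ 2 ≤ 1 / b - 1 / ((b + 1 : ℕ) : ℝ) := by
        push_cast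
        rw [div_sub_div _ _ hb0.ne' (by positivity), div_le_div_iff₀ (by positivity) (by positivity)]
        nlinarith
      linarith
  have h1 := this b h.le
  have : (0 : ℝ) ≤ 1 / b := by positivity
  linarith

lemma Hz_lower : ∃ c : ℝ, 0 < c ∧ c ≤ 1 ∧ ∀ z : ℝ, c ≤ Hz z := by
  obtain ⟨C, hC, h⟩ := sum_chi_prime
  refine ⟨Real.exp (-C - 2), Real.exp_pos _, Real.exp_le_one_iff.2 (by linarith), fun z => ?_⟩
  unfold Hz
  set P := (Ioc 0 ⌊z⌋₊).filter Nat.Prime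
  have hP : ∀ p ∈ P, p.Prime := fun p hp => (mem_filter.1 hp).2
  have h1 : Real.exp (-C - 2) ≤ ∏ p ∈ P, (1 - chi p / p) := by
    calc _ ≤ Real.exp (∑ p ∈ P, (-(chi p / p) - (chi p / p) ^ 2)) := by
          apply Real.exp_le_exp.2
          rw [sum_sub_distrib, sum_neg_distrib]
          have h2 : ∑ p ∈ P, (chi p / p) ^ 2 ≤ 2 := by
            calc _ ≤ ∑ p ∈ P, 1 / (p : ℝ) ^ 2 := sum_le_sum fun p _ => by
                  rw [div_pow]; gcongr
                  rw [sq_le_one_iff_abs_le_one]; exact chi_abs p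
              _ ≤ ∑ p ∈ Ioc 0 (⌊z⌋₊ + 1), 1 / (p : ℝ) ^ 2 := by
                  apply sum_le_sum_of_subset_of_nonneg
                  · intro p hp
                    have := (mem_filter.1 hp).1
                    rw [mem_Ioc] at this ⊢; omega
                  · intros; positivity
              _ = 1 + ∑ p ∈ Ioc 1 (⌊z⌋₊ + 1), 1 / (p : ℝ) ^ 2 := by
                  rw [← Finset.insert_Ioc_add_one_left_eq_Ioc (by omega : 0 < ⌊z⌋₊ + 1), sum_insert (by simp)]; simp
              _ ≤ 2 := by have := sum_inv_sq 1 (⌊z⌋₊ + 1) le_rfl; norm_num at this ⊢; linarith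
          linarith [h ⌊z⌋₊]
      _ = ∏ p ∈ P, Real.exp (-(chi p / p) - (chi p / p) ^ 2) := Real.exp_sum _ _
      _ ≤ _ := prod_le_prod (fun _ _ => (Real.exp_pos _).le) fun p hp => one_sub_ge_exp' (chi_div_le p (hP p hp))
  have hL := Lone_ge
  have h0 := Real.exp_pos (-C - 2)
  nlinarith

noncomputable def Qv (z : ℝ) (v : ℕ) : Finset ℕ := (Ioc ⌊z⌋₊ v).filter Nat.Prime

lemma rho_le (p : ℕ) (hp : p.Prime) : rho p ≤ (1 + chi p) / p + 1 / (p : ℝ) ^ 2 := by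
  unfold rho
  have hp0 : (0 : ℝ) < p := by exact_mod_cast hp.pos
  have : 1 / (p : ℝ) + (1 - 1 / p) * (chi p / p) = (1 + chi p) / p - chi p / p ^ 2 := by field_simp; ring
  rw [this]
  have : -chi p / (p : ℝ) ^ 2 ≤ 1 / (p : ℝ) ^ 2 := by gcongr; linarith [chi_ge p]
  have e : -chi p / (p : ℝ) ^ 2 = -(chi p / (p : ℝ) ^ 2) := by ring
  linarith

lemma sum_rho (z : ℝ) (hz : 8 ≤ z) (v : ℕ) (hv : z ≤ v) :
    ∑ p ∈ Qv z v, rho p ≤ Real.log (Real.log v / Real.log z) + 20 := by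
  have hz0 : 0 ≤ z := by linarith
  set u := ⌊z⌋₊ with hu
  have hu8 : 8 ≤ u := Nat.le_floor (by push_cast; exact hz)
  have huv : u ≤ v := by
    have : (u : ℝ) ≤ z := Nat.floor_le hz0
    exact_mod_cast this.trans hv
  have hu8r : (8 : ℝ) ≤ u := by exact_mod_cast hu8
  have h1 := mertens_one_add_chi u v (by omega) huv
  have h2 : ∑ p ∈ Qv z v, 1 / (p : ℝ) ^ 2 ≤ 1 := by
    calc _ ≤ ∑ p ∈ Ioc u v, 1 / (p : ℝ) ^ 2 := sum_le_sum_of_subset_of_nonneg (filter_subset _ _) (by intros; positivity)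
      _ ≤ 1 / (u : ℝ) := sum_inv_sq u v (by omega)
      _ ≤ 1 := by rw [div_le_one (by linarith)]; linarith
  have h3 : ∑ p ∈ Qv z v, rho p ≤ ∑ p ∈ (Ioc u v).filter Nat.Prime, (1 + chi p) / p + ∑ p ∈ Qv z v, 1 / (p : ℝ) ^ 2 := by
    rw [show (Ioc u v).filter Nat.Prime = Qv z v from rfl, ← sum_add_distrib]
    exact sum_le_sum fun p hp => rho_le p (mem_filter.1 hp).2
  have hlu : 2 ≤ Real.log u := by
    rw [Real.le_log_iff_exp_le (by linarith)]
    have := Real.exp_one_lt_d9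
    have h2 : Real.exp 2 = Real.exp 1 ^ 2 := by rw [← Real.exp_nat_mul]; norm_num
    rw [h2]
    have h0 := Real.exp_pos 1
    nlinarith
  have h4 : 29 / Real.log u ≤ 15 := by rw [div_le_iff₀ (by linarith)]; linarith
  have hlz : 0 < Real.log z := Real.log_pos (by linarith)
  have hlv : 0 < Real.log v := Real.log_pos (by linarith)
  -- log z ≤ 2 log u
  have h5 : Real.log z ≤ 2 * Real.log u := by
    have : z ≤ (u : ℝ) ^ 2 := by
      have := (Nat.lt_floor_add_one z).le
      rw [← hu] at this
      nlinarith
    calc Real.log z ≤ Real.log ((u : ℝ) ^ 2) := Real.log_le_log (by linarith) this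
      _ = _ := by rw [Real.log_pow]; norm_num
  have h6 : Real.log (Real.log z) ≤ Real.log 2 + Real.log (Real.log u) := by
    rw [← Real.log_mul (by norm_num) (by linarith)]
    exact Real.log_le_log hlz h5
  rw [Real.log_div hlv.ne' hlz.ne']
  have := Real.log_two_lt_d9
  linarith

lemma len_bound (b A n : ℕ) (hb : 2 ≤ b) (l : List ℕ) (hl : ∀ p ∈ l, b ≤ p) (hn : l.prod ≤ n) (h : (n : ℝ) ≤ (b : ℝ) ^ A) :
    l.length ≤ A := by
  have h1 : b ^ l.length ≤ l.prod := List.pow_card_le_prod l b hl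
  have h2 : n ≤ b ^ A := by exact_mod_cast h
  exact (Nat.pow_le_pow_iff_right (by omega)).1 ((h1.trans hn).trans h2)

lemma Omega_split (n w v A : ℕ) (hn : n ≠ 0) (hv : 1 ≤ v) (hw : ∀ p, p.Prime → p ∣ n → w < p)
    (hsq : ∀ p ∈ (Ioc w v).filter Nat.Prime, ¬ p ^ 2 ∣ n) (hA : (n : ℝ) ≤ ((v + 1 : ℕ) : ℝ) ^ A) :
    n.primeFactorsList.length ≤ (((Ioc w v).filter Nat.Prime).filter (· ∣ n)).card + A := by
  set l := n.primeFactorsList with hl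
  have hmem : ∀ p ∈ l, p.Prime ∧ p ∣ n := fun p hp => ⟨Nat.prime_of_mem_primeFactorsList hp, Nat.dvd_of_mem_primeFactorsList hp⟩
  have h0 := List.length_eq_length_filter_add (l := l) (fun p => decide (p ≤ v))
  rw [h0]
  apply add_le_add
  · have hnd : (l.filter (fun p => decide (p ≤ v))).Nodup := by
      rw [List.nodup_iff_count_le_one]
      intro p
      by_cases hp : p ∈ l.filter (fun p => decide (p ≤ v))
      · rw [List.mem_filter] at hp
        obtain ⟨h1, h2⟩ := hp
        have h3 := hmem p h1
        have h4 := hsq p (mem_filter.2 ⟨mem_Ioc.2 ⟨hw p h3.1 h3.2, by simpa using h2⟩, h3.1⟩)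
        refine (List.filter_sublist.count_le p).trans ?_
        rw [hl, Nat.primeFactorsList_count_eq]
        by_contra h5
        apply h4
        exact (h3.1.pow_dvd_iff_le_factorization hn).2 (by omega)
      · rw [List.count_eq_zero_of_not_mem hp]; omega
    rw [← List.toFinset_card_of_nodup hnd]
    apply card_le_card
    intro p hp
    rw [List.mem_toFinset, List.mem_filter] at hp
    have h3 := hmem p hp.1
    simp only [mem_filter, mem_Ioc]
    exact ⟨⟨⟨hw p h3.1 h3.2, by simpa using hp.2⟩, h3.1⟩, h3.2⟩
  · apply len_bound (v + 1) A n (by omega) _ _ _ hA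
    · intro p hp
      rw [List.mem_filter] at hp
      have := hp.2
      simp at this; omega
    · have h1 : (l.filter (fun p => !decide (p ≤ v))).prod ∣ l.prod := List.filter_sublist.prod_dvd_prod
      rw [hl, Nat.prod_primeFactorsList hn] at h1
      exact Nat.le_of_dvd (Nat.pos_of_ne_zero hn) h1

lemma count_sq (v p T1 T2 : ℕ) (hv : 0 < v) (hp : p.Prime) (hpv : ¬ p ∣ v) (hT : T1 ≤ T2) :
    (∑ t ∈ Ioc T1 T2, if p ^ 2 ∣ 1 + v * t then (1 : ℝ) else 0) ≤ ((T2 : ℝ) - T1) / p ^ 2 + 1 := by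
  have h1 := base_sum v 1 0 T1 T2 hv ∅ (fun n => if p ^ 2 ∣ n then (1 : ℝ) else 0)
  simp only [Nat.modEq_one, notMem_empty, IsEmpty.forall_iff, implies_true, and_true, filter_true, one_mul] at h1
  rw [h1, ← sum_filter, filter_filter, sum_const, nsmul_eq_mul, mul_one]
  have h2 := card_AP (1 + v * T1) (1 + v * T2) v (p ^ 2) (1 + v * 0) hv (pow_pos hp.pos 2)
    (Nat.Coprime.pow_right 2 ((Nat.Prime.coprime_iff_not_dvd hp).2 hpv).symm) (by have := Nat.mul_le_mul_left v hT; omega)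
  have e : (((1 + v * T2 : ℕ) : ℝ) - (1 + v * T1 : ℕ)) / (v * (p ^ 2 : ℕ)) = ((T2 : ℝ) - T1) / p ^ 2 := by
    push_cast
    have : (v : ℝ) ≠ 0 := by exact_mod_cast hv.ne'
    have : (p : ℝ) ≠ 0 := by exact_mod_cast hp.ne_zero
    field_simp; ring
  rw [e] at h2
  linarith [(abs_le.1 h2).2]
end

section
open Finset

def Good (V : ℕ → ℕ) (z : ℝ) (v : ℕ) (R0 : ℝ) (j t : ℕ) : Prop :=
  (((Qv z v).filter (· ∣ Lf V j t)).card : ℝ) ≤ 11 / 10 * R0 ∧ ∀ p ∈ Qv z v, ¬ p ^ 2 ∣ Lf V j t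

lemma Lf_ne (V : ℕ → ℕ) (j t : ℕ) : Lf V j t ≠ 0 := by unfold Lf; omega

lemma TT_prime {K N : ℕ} {V : ℕ → ℕ} {z : ℝ} {m T1 T2 : ℕ} {R : ℝ} (hs : Setup K N V z m T1 T2 R)
    {j : ℕ} (hj : j ∈ Ioc 0 K) {t : ℕ} (ht : t ∈ TT K N V z T1 T2) {q : ℕ} (hq : q.Prime) (hd : q ∣ Lf V j t) :
    ⌊z⌋₊ < q := by
  classical
  by_contra h
  push Not at h
  unfold TT at ht
  rw [mem_filter] at ht
  by_cases hN : q ≤ N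
  · have h1 : q ∈ (V j).primeFactors := by
      rw [hs.pf j hj, mem_filter, mem_Ioc]; exact ⟨⟨hq.pos, hN⟩, hq⟩
    have h2 := Nat.dvd_of_mem_primeFactors h1
    unfold Lf at hd
    have := (Nat.dvd_add_left (h2.mul_right t)).1 hd
    exact hq.one_lt.ne' (Nat.dvd_one.1 this)
  · exact ht.2 q (by unfold Pz; rw [mem_filter, mem_Ioc]; exact ⟨⟨by omega, h⟩, hq⟩) ⟨j, hj, hd⟩

lemma TT_le {K N : ℕ} {V : ℕ → ℕ} {z : ℝ} {T1 T2 : ℕ} {t : ℕ} (ht : t ∈ TT K N V z T1 T2) : T1 < t ∧ t ≤ T2 := by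
  classical
  unfold TT at ht
  rw [mem_filter, mem_Ioc] at ht
  exact ht.1

lemma Lf_mono (V : ℕ → ℕ) (j : ℕ) {t t' : ℕ} (h : t ≤ t') : Lf V j t ≤ Lf V j t' := by
  unfold Lf; gcongr

lemma floor_ge_two {K N : ℕ} {V : ℕ → ℕ} {z : ℝ} {m T1 T2 : ℕ} {R : ℝ} (hs : Setup K N V z m T1 T2 R) : 8 ≤ ⌊z⌋₊ :=
  hs.hN.trans hs.hNz

lemma TT_rr_le {K N : ℕ} {V : ℕ → ℕ} {z : ℝ} {m T1 T2 : ℕ} {R : ℝ} (hs : Setup K N V z m T1 T2 R)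
    {j : ℕ} (hj : j ∈ Ioc 0 K) {t : ℕ} (ht : t ∈ TT K N V z T1 T2) (U : ℕ)
    (hU : (Lf V j T2 : ℝ) ≤ ((⌊z⌋₊ + 1 : ℕ) : ℝ) ^ U) : rr (Lf V j t) ≤ 2 ^ U := by
  refine (rr_le _ (Lf_ne V j t)).trans ?_
  apply pow_le_pow_right₀ (by norm_num)
  have := floor_ge_two hs
  apply len_bound (⌊z⌋₊ + 1) U (Lf V j T2) (by omega) _ _ _ hU
  · intro p hp
    exact TT_prime hs hj ht (Nat.prime_of_mem_primeFactorsList hp) (Nat.dvd_of_mem_primeFactorsList hp)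
  · rw [Nat.prod_primeFactorsList (Lf_ne V j t)]
    exact Lf_mono V j (TT_le ht).2

open Classical in
lemma good_pointwise (V : ℕ → ℕ) (z : ℝ) (v : ℕ) (R0 : ℝ) (hR0 : 0 < R0) (j t U : ℕ) (h0 : 0 ≤ rr (Lf V j t)) (hU : rr (Lf V j t) ≤ 2 ^ U) :
    rr (Lf V j t) - (∑ p ∈ Qv z v, if p ∣ Lf V j t then rr (Lf V j t) else 0) / (11 / 10 * R0)
      - 2 ^ U * (∑ p ∈ Qv z v, if p ^ 2 ∣ Lf V j t then (1 : ℝ) else 0) ≤ if Good V z v R0 j t then rr (Lf V j t) else 0 := by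
  set r := rr (Lf V j t)
  have h1 : 0 ≤ (∑ p ∈ Qv z v, if p ∣ Lf V j t then r else 0) / (11 / 10 * R0) := by
    apply div_nonneg _ (by positivity)
    apply sum_nonneg; intro p _; split_ifs <;> simp [h0]
  have h2 : 0 ≤ (∑ p ∈ Qv z v, if p ^ 2 ∣ Lf V j t then (1 : ℝ) else 0) := by
    apply sum_nonneg; intro p _; split_ifs <;> simp
  have h2' : 0 ≤ (2 : ℝ) ^ U * (∑ p ∈ Qv z v, if p ^ 2 ∣ Lf V j t then (1 : ℝ) else 0) := by positivity
  split_ifs with hg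
  · linarith
  · unfold Good at hg
    rw [not_and_or] at hg
    rcases hg with hg | hg
    · push Not at hg
      have e : (∑ p ∈ Qv z v, if p ∣ Lf V j t then r else 0) = (((Qv z v).filter (· ∣ Lf V j t)).card : ℝ) * r := by
        rw [← sum_filter, sum_const, nsmul_eq_mul]
      have : r ≤ (∑ p ∈ Qv z v, if p ∣ Lf V j t then r else 0) / (11 / 10 * R0) := by
        rw [le_div_iff₀ (by positivity), e]; nlinarith
      linarith
    · push Not at hg
      obtain ⟨p, hp, hd⟩ := hg
      have : (1 : ℝ) ≤ ∑ p ∈ Qv z v, if p ^ 2 ∣ Lf V j t then (1 : ℝ) else 0 := by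
        have := single_le_sum (f := fun p => if p ^ 2 ∣ Lf V j t then (1 : ℝ) else 0) (by intro p _; split_ifs <;> simp) hp
        simpa [hd] using this
      nlinarith [pow_pos (by norm_num : (0:ℝ) < 2) U]

open Classical in
lemma good_sum {K N : ℕ} {V : ℕ → ℕ} {z : ℝ} {m T1 T2 : ℕ} {R : ℝ} (hs : Setup K N V z m T1 T2 R)
    {j : ℕ} (hj : j ∈ Ioc 0 K) (v : ℕ) (R0 : ℝ) (hR0 : 1 ≤ R0) (hrho : ∑ p ∈ Qv z v, rho p ≤ R0) (U : ℕ)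
    (hU : (Lf V j T2 : ℝ) ≤ ((⌊z⌋₊ + 1 : ℕ) : ℝ) ^ U) (E : ℝ)
    (hE : E = (m + 1) * z ^ (1000 * K) * (z ^ (1000 * K) * R)) (hH : 0 ≤ Hz z) (hPi : 0 ≤ PiK K N z) :
    7 / 100 * (Hz z * (((T2 : ℝ) - T1) * PiK K N z)) - (1 + v) * E - 2 ^ U * (2 * ((T2 : ℝ) - T1) / z + v) ≤
      ∑ t ∈ TT K N V z T1 T2, if Good V z v R0 j t then rr (Lf V j t) else 0 := by
  have hz1 := hs.hz
  have hm0 : (0 : ℝ) ≤ m := Nat.cast_nonneg _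
  have hR1 := hs.hR1
  have hE0 : 0 ≤ E := by rw [hE]; positivity
  have hT : (T1 : ℝ) ≤ T2 := by exact_mod_cast hs.hT
  set H := Hz z * (((T2 : ℝ) - T1) * PiK K N z) with hHd
  have hH0 : 0 ≤ H := mul_nonneg hH (mul_nonneg (by linarith) hPi)
  have hQ : ∀ p ∈ Qv z v, p.Prime ∧ z < p := by
    intro p hp
    unfold Qv at hp
    rw [mem_filter, mem_Ioc] at hp
    exact ⟨hp.2, (Nat.floor_lt (by linarith)).1 hp.1.1⟩
  have hcard : ((Qv z v).card : ℝ) ≤ v := by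
    have : (Qv z v).card ≤ v := by
      unfold Qv
      refine (card_filter_le _ _).trans ?_
      rw [Nat.card_Ioc]; omega
    exact_mod_cast this
  have hv0 : (0 : ℝ) ≤ v := Nat.cast_nonneg _
  -- main sum
  have h1 : 99 / 100 * H - E ≤ ∑ t ∈ TT K N V z T1 T2, rr (Lf V j t) := by
    have := TT_r hs hj ∅ (by simp)
    simp only [notMem_empty, IsEmpty.forall_iff, implies_true, if_true, prod_empty, mul_one] at this
    rw [← hHd, ← hE] at this
    linarith [(abs_le.1 this).1]
  -- second
  have h2 : ∑ t ∈ TT K N V z T1 T2, (∑ p ∈ Qv z v, if p ∣ Lf V j t then rr (Lf V j t) else 0) ≤ 101 / 100 * H * R0 + v * E := by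
    rw [sum_comm]
    calc _ ≤ ∑ p ∈ Qv z v, (101 / 100 * H * rho p + E) := by
          apply sum_le_sum
          intro p hp
          have := TT_r hs hj {p} (by intro q hq; rw [mem_singleton] at hq; rw [hq]; exact hQ p hp)
          simp only [mem_singleton, forall_eq, prod_singleton] at this
          rw [← hHd, ← hE] at this
          linarith [(abs_le.1 this).2]
      _ = 101 / 100 * H * ∑ p ∈ Qv z v, rho p + (Qv z v).card * E := by
          rw [sum_add_distrib, ← mul_sum, sum_const, nsmul_eq_mul]
      _ ≤ _ := by gcongr
  have h3 : ∑ t ∈ TT K N V z T1 T2, (∑ p ∈ Qv z v, if p ^ 2 ∣ Lf V j t then (1 : ℝ) else 0) ≤ 2 * ((T2 : ℝ) - T1) / z + v := by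
    rw [sum_comm]
    have hf8 := floor_ge_two hs
    calc _ ≤ ∑ p ∈ Qv z v, (((T2 : ℝ) - T1) * (1 / (p : ℝ) ^ 2) + 1) := by
          apply sum_le_sum
          intro p hp
          have hpN : N < p := by
            have := (mem_Ioc.1 (mem_filter.1 hp).1).1
            exact lt_of_le_of_lt hs.hNz this
          have := count_sq (V j) p T1 T2 (hs.forms.pos j hj) (hQ p hp).1 (hs.forms.ndvd j hj p (hQ p hp).1 hpN) hs.hT
          rw [mul_one_div]
          refine le_trans ?_ this
          apply sum_le_sum_of_subset_of_nonneg
          · intro t ht; rw [mem_Ioc]; exact TT_le ht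
          · intro t _ _; split_ifs <;> simp
      _ = ((T2 : ℝ) - T1) * ∑ p ∈ Qv z v, 1 / (p : ℝ) ^ 2 + (Qv z v).card := by
          rw [sum_add_distrib, ← mul_sum, sum_const, nsmul_eq_mul, mul_one]
      _ ≤ ((T2 : ℝ) - T1) * (2 / z) + v := by
          have : ∑ p ∈ Qv z v, 1 / (p : ℝ) ^ 2 ≤ 2 / z := by
            calc _ ≤ ∑ p ∈ Ioc ⌊z⌋₊ v, 1 / (p : ℝ) ^ 2 := sum_le_sum_of_subset_of_nonneg (filter_subset _ _) (by intros; positivity)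
              _ ≤ 1 / (⌊z⌋₊ : ℝ) := sum_inv_sq _ v (by omega)
              _ ≤ 2 / z := by
                have h8 : (8 : ℝ) ≤ ⌊z⌋₊ := by exact_mod_cast hf8
                rw [div_le_div_iff₀ (by linarith) (by linarith)]
                linarith [Nat.lt_floor_add_one z]
          have h5 : 0 ≤ (T2 : ℝ) - T1 := by linarith
          gcongr
      _ = _ := by ring
  have h4 : ∑ t ∈ TT K N V z T1 T2, (rr (Lf V j t) - (∑ p ∈ Qv z v, if p ∣ Lf V j t then rr (Lf V j t) else 0) / (11 / 10 * R0)
      - 2 ^ U * (∑ p ∈ Qv z v, if p ^ 2 ∣ Lf V j t then (1 : ℝ) else 0)) ≤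
      ∑ t ∈ TT K N V z T1 T2, if Good V z v R0 j t then rr (Lf V j t) else 0 :=
    sum_le_sum fun t ht => good_pointwise V z v R0 (by linarith) j t U (rr_nonneg _) (TT_rr_le hs hj ht U hU)
  rw [sum_sub_distrib, sum_sub_distrib, ← sum_div, ← mul_sum] at h4
  have h5 : (∑ t ∈ TT K N V z T1 T2, (∑ p ∈ Qv z v, if p ∣ Lf V j t then rr (Lf V j t) else 0)) / (11 / 10 * R0) ≤ 92 / 100 * H + v * E := by
    rw [div_le_iff₀ (by positivity)]
    have : 0 ≤ v * E := by positivity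
    have : 0 ≤ H * R0 := by positivity
    nlinarith
  have h6 : (2 : ℝ) ^ U * ∑ t ∈ TT K N V z T1 T2, (∑ p ∈ Qv z v, if p ^ 2 ∣ Lf V j t then (1 : ℝ) else 0) ≤ 2 ^ U * (2 * ((T2 : ℝ) - T1) / z + v) := by gcongr
  linarith

lemma good_rr_le {K N : ℕ} {V : ℕ → ℕ} {z : ℝ} {m T1 T2 : ℕ} {R : ℝ} (hs : Setup K N V z m T1 T2 R)
    {j : ℕ} (hj : j ∈ Ioc 0 K) {t : ℕ} (ht : t ∈ TT K N V z T1 T2) (v A : ℕ) (hv : 1 ≤ v) (R0 : ℝ)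
    (hA : (Lf V j T2 : ℝ) ≤ ((v + 1 : ℕ) : ℝ) ^ A) (hg : Good V z v R0 j t) :
    rr (Lf V j t) ≤ (2 : ℝ) ^ (11 / 10 * R0 + A) := by
  refine (rr_le _ (Lf_ne V j t)).trans ?_
  rw [← Real.rpow_natCast]
  apply Real.rpow_le_rpow_of_exponent_le (by norm_num)
  have h1 := Omega_split (Lf V j t) ⌊z⌋₊ v A (Lf_ne V j t) hv (fun p hp hd => TT_prime hs hj ht hp hd) hg.2
    (le_trans (by exact_mod_cast Lf_mono V j (TT_le ht).2) hA)
  have h2 := hg.1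
  have h3 : ((Lf V j t).primeFactorsList.length : ℝ) ≤ ((((Ioc ⌊z⌋₊ v).filter Nat.Prime).filter (· ∣ Lf V j t)).card : ℝ) + A := by exact_mod_cast h1
  unfold Qv at h2
  linarith

open Classical in
noncomputable def Jc (K : ℕ) (V : ℕ → ℕ) (t : ℕ) : ℕ := ((Ioc 0 K).filter (fun j => rr (Lf V j t) ≠ 0)).card

open Classical in
lemma assembly {K N : ℕ} {V : ℕ → ℕ} {z : ℝ} {m T1 T2 : ℕ} {R : ℝ} (hs : Setup K N V z m T1 T2 R)
    (v A U : ℕ) (hv : 1 ≤ v) (R0 : ℝ) (hR0 : 1 ≤ R0) (hrho : ∑ p ∈ Qv z v, rho p ≤ R0)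
    (hU : ∀ j ∈ Ioc 0 K, (Lf V j T2 : ℝ) ≤ ((⌊z⌋₊ + 1 : ℕ) : ℝ) ^ U)
    (hA : ∀ j ∈ Ioc 0 K, (Lf V j T2 : ℝ) ≤ ((v + 1 : ℕ) : ℝ) ^ A)
    (E : ℝ) (hE : E = (m + 1) * z ^ (1000 * K) * (z ^ (1000 * K) * R))
    (c : ℝ) (hc0 : 0 < c) (hc1 : c ≤ 1) (hc : c ≤ Hz z) (B : ℝ) (hB : B = (2 : ℝ) ^ (11 / 10 * R0 + A))
    (herr : (1 + v) * E + 2 ^ U * (2 * ((T2 : ℝ) - T1) / z + v) ≤ 1 / 100 * c * (((T2 : ℝ) - T1) * PiK K N z)) :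
    9 / 1000 * c * (((T2 : ℝ) - T1) * PiK K N z) / B ≤
      (((Ioc T1 T2).filter (fun t => 5 / 100 * c * K / B ≤ (Jc K V t : ℝ))).card : ℝ) := by
  have hPi : 0 ≤ PiK K N z := le_trans (Real.exp_pos _).le (PiK_ge hs)
  have hT : (T1 : ℝ) ≤ T2 := by exact_mod_cast hs.hT
  set M := ((T2 : ℝ) - T1) * PiK K N z with hM
  have hM0 : 0 ≤ M := mul_nonneg (by linarith) hPi
  have hB0 : 0 < B := by rw [hB]; positivity
  have hB1 : 1 ≤ B := by
    rw [hB]; apply Real.one_le_rpow (by norm_num); positivity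
  have hK0 : (1 : ℝ) ≤ K := by exact_mod_cast hs.hK
  set S := TT K N V z T1 T2 with hS
  have hz1 := hs.hz
  have hm0 : (0 : ℝ) ≤ m := Nat.cast_nonneg _
  have hR1 := hs.hR1
  have hE0 : 0 ≤ E := by rw [hE]; positivity
  have hv0 : (0 : ℝ) ≤ v := Nat.cast_nonneg _
  have hEM : E ≤ 1 / 100 * M := by
    have h1 : 0 ≤ (2 : ℝ) ^ U * (2 * ((T2 : ℝ) - T1) / z + v) := by
      have : 0 ≤ (T2 : ℝ) - T1 := by linarith
      positivity
    have h2 : 0 ≤ v * E := by positivity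
    nlinarith
  have hcard : (S.card : ℝ) ≤ 102 / 100 * M := by
    have := TT_card hs
    rw [← hE, ← hM] at this
    linarith [(abs_le.1 this).2]
  -- lower bound
  have h1 : K * (6 / 100 * c * M) ≤ ∑ t ∈ S, ∑ j ∈ Ioc 0 K, if Good V z v R0 j t then rr (Lf V j t) else 0 := by
    rw [sum_comm]
    calc K * (6 / 100 * c * M) = ∑ j ∈ Ioc 0 K, 6 / 100 * c * M := by simp
      _ ≤ _ := by
        apply sum_le_sum
        intro j hj
        have := good_sum hs hj v R0 hR0 hrho U (hU j hj) E hE (hc0.le.trans hc) hPi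
        refine le_trans ?_ this
        have : c * M ≤ Hz z * M := by gcongr
        linarith
  have h2 : ∀ t ∈ S, (∑ j ∈ Ioc 0 K, if Good V z v R0 j t then rr (Lf V j t) else 0) ≤ B * Jc K V t := by
    intro t ht
    unfold Jc
    rw [card_filter]
    push_cast
    rw [mul_sum]
    apply sum_le_sum
    intro j hj
    by_cases h0 : rr (Lf V j t) = 0
    · simp [h0]
    · simp only [h0, ne_eq, not_false_eq_true, if_true, mul_one]
      split_ifs with hg
      · rw [hB]; exact good_rr_le hs hj ht v A hv R0 (hA j hj) hg
      · exact hB0.le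
  set s := 5 / 100 * c * K / B with hsd
  have h3 : ∑ t ∈ S, B * (Jc K V t : ℝ) ≤ S.card * (B * s) + ((S.filter (fun t => s ≤ (Jc K V t : ℝ))).card : ℝ) * (B * K) := by
    rw [← sum_filter_add_sum_filter_not S (fun t => s ≤ (Jc K V t : ℝ)), add_comm]
    apply add_le_add
    · calc _ ≤ ∑ t ∈ S.filter (fun t => ¬ s ≤ (Jc K V t : ℝ)), B * s := by
            apply sum_le_sum; intro t ht
            have := (mem_filter.1 ht).2
            push Not at this
            gcongr
        _ = ((S.filter (fun t => ¬ s ≤ (Jc K V t : ℝ))).card : ℝ) * (B * s) := by rw [sum_const, nsmul_eq_mul]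
        _ ≤ _ := by
            have : (S.filter (fun t => ¬ s ≤ (Jc K V t : ℝ))).card ≤ S.card := card_filter_le _ _
            gcongr
    · rw [← nsmul_eq_mul]
      apply sum_le_card_nsmul
      intro t _
      have : Jc K V t ≤ K := by
        unfold Jc
        refine (card_filter_le _ _).trans ?_
        simp
      gcongr
  have hBs : B * s = 5 / 100 * c * K := by rw [hsd]; field_simp
  have h4 : ((S.filter (fun t => s ≤ (Jc K V t : ℝ))).card : ℝ) ≤ (((Ioc T1 T2).filter (fun t => s ≤ (Jc K V t : ℝ))).card : ℝ) := by
    have : (S.filter (fun t => s ≤ (Jc K V t : ℝ))).card ≤ ((Ioc T1 T2).filter (fun t => s ≤ (Jc K V t : ℝ))).card := by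
      apply card_le_card
      apply filter_subset_filter
      intro t ht; rw [mem_Ioc]; exact TT_le ht
    exact_mod_cast this
  refine le_trans ?_ h4
  rw [div_le_iff₀ hB0]
  have h5 := (h1.trans (sum_le_sum h2)).trans h3
  rw [hBs] at h5
  set G := ((S.filter (fun t => s ≤ (Jc K V t : ℝ))).card : ℝ)
  have h6 : (S.card : ℝ) * (5 / 100 * c * K) ≤ 102 / 100 * M * (5 / 100 * c * K) := by gcongr
  have h7 : K * (9 / 1000 * c * M) ≤ K * (G * B) := by nlinarith
  exact le_of_mul_le_mul_left h7 (by linarith)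
end

section
open Finset

noncomputable def VV (N i : ℕ) : ℕ := N.factorial * (N.factorial / i) ^ 2

lemma VV_mul {N i : ℕ} (h0 : 0 < i) (hi : i ≤ N) : i ^ 2 * VV N i = N.factorial ^ 3 := by
  unfold VV
  obtain ⟨k, hk⟩ := Nat.dvd_factorial h0 hi
  rw [hk, Nat.mul_div_cancel_left _ h0]; ring

lemma VV_Lf {N i t : ℕ} (h0 : 0 < i) (hi : i ≤ N) : i ^ 2 * Lf (VV N) i t = N.factorial ^ 3 * t + i ^ 2 := by
  unfold Lf
  rw [mul_add, ← mul_assoc, VV_mul h0 hi]; ring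

lemma VV_pos {N i : ℕ} (h0 : 0 < i) (hi : i ≤ N) : 0 < VV N i := by
  unfold VV
  have h1 := N.factorial_pos
  have : 0 < N.factorial / i := Nat.div_pos (Nat.le_of_dvd h1 (Nat.dvd_factorial h0 hi)) h0
  positivity

lemma VV_prime {N i q : ℕ} (h0 : 0 < i) (hi : i ≤ N) (hq : q.Prime) : q ∣ VV N i ↔ q ≤ N := by
  constructor
  · intro h
    have : q ∣ N.factorial ^ 3 := by rw [← VV_mul h0 hi]; exact h.mul_left _
    exact (hq.dvd_factorial).1 (hq.dvd_of_dvd_pow this)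
  · intro h
    unfold VV
    exact ((hq.dvd_factorial).2 h).mul_right _

lemma VV_forms {K : ℕ} (hK : 4 ≤ K) : Forms K (K ^ 2) (VV (K ^ 2)) := by
  have hle : ∀ i ∈ Ioc 0 K, 0 < i ∧ i ≤ K ∧ i ≤ K ^ 2 := by
    intro i hi; rw [mem_Ioc] at hi
    exact ⟨hi.1, hi.2, by nlinarith⟩
  refine ⟨?_, ?_, ?_, ?_⟩
  · intro i hi; obtain ⟨a, b, c⟩ := hle i hi; exact VV_pos a c
  · intro i hi
    unfold VV
    exact (Nat.dvd_factorial (by norm_num) (by nlinarith)).mul_right _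
  · intro i hi q hq hN h
    obtain ⟨a, b, c⟩ := hle i hi
    have := (VV_prime a c hq).1 h
    omega
  · intro q hq hN t i hi i' hi' h h'
    obtain ⟨a, b, c⟩ := hle i hi
    obtain ⟨a', b', c'⟩ := hle i' hi'
    have h1 : q ∣ (K ^ 2).factorial ^ 3 * t + i ^ 2 := by rw [← VV_Lf a c]; exact h.mul_left _
    have h2 : q ∣ (K ^ 2).factorial ^ 3 * t + i' ^ 2 := by rw [← VV_Lf a' c']; exact h'.mul_left _
    have key : ∀ x y : ℕ, 0 < x → x < y → y ≤ K → q ∣ (K ^ 2).factorial ^ 3 * t + x ^ 2 →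
        q ∣ (K ^ 2).factorial ^ 3 * t + y ^ 2 → False := by
      intro x y hx hxy hy h1 h2
      have h3 := Nat.dvd_sub h2 h1
      rw [Nat.add_sub_add_left] at h3
      have h4 : x ^ 2 < y ^ 2 := Nat.pow_lt_pow_left hxy (by norm_num)
      have h5 : y ^ 2 ≤ K ^ 2 := Nat.pow_le_pow_left hy 2
      have := Nat.le_of_dvd (by omega) h3
      omega
    rcases lt_trichotomy i i' with h | h | h
    · exact (key i i' a h b' h1 h2).elim
    · exact h
    · exact (key i' i a' h b h2 h1).elim

lemma VV_pf {K : ℕ} {j : ℕ} (hj : j ∈ Ioc 0 K) (hK : 4 ≤ K) :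
    (VV (K ^ 2) j).primeFactors = (Ioc 0 (K ^ 2)).filter Nat.Prime := by
  rw [mem_Ioc] at hj
  have hj2 : j ≤ K ^ 2 := by nlinarith
  ext q
  rw [Nat.mem_primeFactors, mem_filter, mem_Ioc]
  constructor
  · rintro ⟨h1, h2, h3⟩; exact ⟨⟨h1.pos, (VV_prime hj.1 hj2 h1).1 h2⟩, h1⟩
  · rintro ⟨⟨h1, h2⟩, h3⟩; exact ⟨h3, (VV_prime hj.1 hj2 h3).2 h2, (VV_pos hj.1 hj2).ne'⟩

lemma exp_nat_le {a b : ℝ} (h : a ≤ b) : Real.exp a ≤ Real.exp b := Real.exp_le_exp.2 h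

set_option maxHeartbeats 4000000 in
open Classical in
lemma param (lam : ℝ) (hlam : 0 ≤ lam) (hc : ∀ z, Real.exp (-lam) ≤ Hz z) (u a l : ℝ) (K m : ℕ) (hK : 4 ≤ K)
    (ha : (K : ℝ) ^ 2 ≤ a) (hKm : (K : ℝ) ^ 2 * m ≤ 3 * a) (hl : 1 ≤ l)
    (hW : (((K ^ 2).factorial ^ 3 : ℕ) : ℝ) ≤ Real.exp (3 * a))
    (hKl : K * Real.log (K ^ 2) ≤ a) (hmu : u ≤ 2 ^ m)
    (hC : 10 ^ 11 * (1 + lam) * a ≤ u / l) :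
    ∃ T1 T2 : ℕ, (∀ t ∈ Ioc T1 T2, Real.exp u ≤ (((K ^ 2).factorial ^ 3 * t : ℕ) : ℝ) ∧ (((K ^ 2).factorial ^ 3 * t : ℕ) : ℝ) ≤ 2 * Real.exp u) ∧
      Real.exp (u - u / l) ≤ (((Ioc T1 T2).filter (fun t => 5 / 100 * Real.exp (-lam) * K /
        (2 : ℝ) ^ (11 / 10 * (Real.log (1000 * K) + 20) + (100 : ℕ)) ≤ (Jc K (VV (K ^ 2)) t : ℝ))).card : ℝ) := by
  have hKr : (4 : ℝ) ≤ K := by exact_mod_cast hK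
  have hK2r : (16 : ℝ) ≤ (K : ℝ) ^ 2 := by nlinarith
  have hK2n : 16 ≤ K ^ 2 := by nlinarith
  have hK2c : 4 * K ≤ K ^ 2 := by nlinarith
  have ha16 : 16 ≤ a := by linarith
  have hKa : (K : ℝ) ≤ a := by nlinarith
  have hu0 : 0 < u := by
    have h1 : 0 < u / l := lt_of_lt_of_le (by positivity) hC
    by_contra h
    push Not at h
    have := div_nonpos_of_nonpos_of_nonneg h (by linarith : 0 ≤ l)
    linarith
  have hul : u / l ≤ u := div_le_self hu0.le hl
  have hla : lam ≤ lam * a := by nlinarith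
  have hla0 : 0 ≤ lam * a := by positivity
  have hCa : 10 ^ 11 * a + 10 ^ 11 * (lam * a) ≤ u / l := by linarith
  have hCu : 10 ^ 11 * a + 10 ^ 11 * (lam * a) ≤ u := by linarith
  have hm0 : (0 : ℝ) ≤ m := Nat.cast_nonneg _
  have hKm' : (K : ℝ) * m ≤ 3 * a := by nlinarith [mul_nonneg (by linarith : (0:ℝ) ≤ K) hm0]
  have hm3 : (m : ℝ) ≤ 3 * a := by nlinarith
  set W : ℕ := (K ^ 2).factorial ^ 3 with hWd
  have hWpos : 0 < W := by positivity
  have hW0 : (0 : ℝ) < W := by exact_mod_cast hWpos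
  set X := Real.exp u with hX
  have hX0 : 0 < X := Real.exp_pos u
  set z := Real.exp (u / (50000 * K)) with hz
  have hz0 : 0 < z := Real.exp_pos _
  have hz1000 : z ^ (1000 * K) = Real.exp (u / 50) := by
    rw [hz, ← Real.exp_nat_mul]; congr 1; push_cast; field_simp; norm_num
  set T1 := ⌈X / W⌉₊ with hT1
  set T2 := ⌊2 * X / W⌋₊ with hT2
  have hT1l : X / W ≤ T1 := Nat.le_ceil _
  have hT1u : (T1 : ℝ) < X / W + 1 := Nat.ceil_lt_add_one (by positivity)
  have hT2u : (T2 : ℝ) ≤ 2 * X / W := Nat.floor_le (by positivity)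
  have hT2l : 2 * X / W < T2 + 1 := Nat.lt_floor_add_one _
  have e2 : 2 * X / W = 2 * (X / W) := by ring
  have hXW : Real.exp (u - 3 * a) ≤ X / W := by
    rw [Real.exp_sub]; gcongr
  have hXW4 : 4 ≤ X / W := by
    refine le_trans ?_ hXW
    have := Real.add_one_le_exp (u - 3 * a)
    linarith
  have hlen : X / W / 2 ≤ (T2 : ℝ) - T1 := by linarith
  have hlen2 : (T2 : ℝ) - T1 ≤ X / W := by linarith
  have hT12 : (T1 : ℝ) ≤ T2 := by linarith
  -- bounds for x
  have hx : ∀ t ∈ Ioc T1 T2, X ≤ ((W * t : ℕ) : ℝ) ∧ ((W * t : ℕ) : ℝ) ≤ 2 * X := by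
    intro t ht
    rw [mem_Ioc] at ht
    have h1 : (T1 : ℝ) ≤ t := by exact_mod_cast ht.1.le
    have h2 : (t : ℝ) ≤ T2 := by exact_mod_cast ht.2
    push_cast
    constructor
    · have := hT1l.trans h1
      rw [div_le_iff₀ hW0] at this; linarith
    · have := h2.trans hT2u
      rw [le_div_iff₀ hW0] at this; linarith
  have hVT : ∀ j ∈ Ioc 0 K, ((VV (K ^ 2) j * T2 : ℕ) : ℝ) ≤ 2 * X := by
    intro j hj
    rw [mem_Ioc] at hj
    have h1 : VV (K ^ 2) j ≤ W := by
      have := VV_mul hj.1 (hj.2.trans (by omega : K ≤ K ^ 2))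
      rw [← hWd] at this
      rw [← this]
      exact Nat.le_mul_of_pos_left _ (by have := hj.1; positivity)
    rw [le_div_iff₀ hW0] at hT2u
    push_cast
    have h2 : (VV (K ^ 2) j : ℝ) ≤ W := by exact_mod_cast h1
    have h3 : (0 : ℝ) ≤ T2 := Nat.cast_nonneg _
    linarith [mul_le_mul_of_nonneg_right h2 h3]
  have hX8 : 8 ≤ X := by
    have := Real.add_one_le_exp u
    linarith
  have hLf : ∀ j ∈ Ioc 0 K, (Lf (VV (K ^ 2)) j T2 : ℝ) ≤ Real.exp (2 * u) := by
    intro j hj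
    have h1 := hVT j hj
    unfold Lf
    push_cast at h1 ⊢
    have : Real.exp (2 * u) = X ^ 2 := by rw [hX, ← Real.exp_nat_mul]; norm_num
    rw [this]
    linarith [mul_le_mul_of_nonneg_right hX8 hX0.le, sq X]
  -- N ≤ z
  have hNz : ((K ^ 2 : ℕ) : ℝ) ≤ z := by
    push_cast
    rw [hz, ← Real.log_le_iff_le_exp (by positivity), le_div_iff₀ (by positivity)]
    linarith
  have hz16 : 16 ≤ z := by
    refine le_trans ?_ hNz
    push_cast; linarith
  have hexp1 : Real.exp 1 ≤ 3 := by have := Real.exp_one_lt_d9; linarith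
  set R := Real.exp (3 * u / 5) with hR
  have hs : Setup K (K ^ 2) (VV (K ^ 2)) z m T1 T2 R := by
    refine ⟨VV_forms hK, fun j hj => VV_pf hj hK, by omega, by linarith, hK2c, by linarith, Nat.le_floor hNz, ?_,
      by exact_mod_cast hT12, ?_, ?_⟩
    · unfold zz
      rw [hz, ← Real.exp_mul]
      have h1 : u / (50000 * K) * (1 / 2 : ℝ) ^ m ≤ 1 := by
        rw [div_pow, one_pow, mul_one_div, div_le_one (by positivity)]
        refine le_trans ?_ hmu
        exact div_le_self hu0.le (by linarith)
      calc _ ≤ Real.exp 1 := exp_nat_le h1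
        _ ≤ _ := by push_cast; linarith
    · rw [hR]; exact Real.one_le_exp (by positivity)
    · intro j hj
      have h1 := hVT j hj
      have h2 : ((Nat.sqrt (1 + VV (K ^ 2) j * T2) : ℕ) : ℝ) ≤ 3 * Real.exp (u / 2) := by
        rw [← abs_of_nonneg (Nat.cast_nonneg (α := ℝ) (Nat.sqrt (1 + VV (K ^ 2) j * T2)))]
        apply abs_le_of_sq_le_sq _ (by positivity)
        have h3 : (Nat.sqrt (1 + VV (K ^ 2) j * T2)) ^ 2 ≤ 1 + VV (K ^ 2) j * T2 := Nat.sqrt_le' _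
        have h4 : ((Nat.sqrt (1 + VV (K ^ 2) j * T2) : ℕ) : ℝ) ^ 2 ≤ 1 + ((VV (K ^ 2) j * T2 : ℕ) : ℝ) := by exact_mod_cast h3
        have h5 : (3 * Real.exp (u / 2)) ^ 2 = 9 * X := by
          rw [mul_pow, ← Real.exp_nat_mul, hX]; norm_num; congr 1; ring
        rw [h5]; linarith
      have h6 : (1 : ℝ) ≤ Real.exp (u / 2) := Real.one_le_exp (by positivity)
      have h7 : (2 : ℝ) ^ (K ^ 2) ≤ Real.exp a := by
        calc (2 : ℝ) ^ (K ^ 2) ≤ Real.exp 1 ^ (K ^ 2) := by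
              gcongr
              have := Real.add_one_le_exp 1; linarith
          _ = Real.exp ((K ^ 2 : ℕ) : ℝ) := by rw [← Real.exp_nat_mul]; simp
          _ ≤ _ := exp_nat_le (by push_cast; exact ha)
      have h8 : (28 : ℝ) ≤ Real.exp 27 := by have := Real.add_one_le_exp 27; linarith
      calc 7 * 2 ^ (K ^ 2) * ((Nat.sqrt (1 + VV (K ^ 2) j * T2) : ℝ) + 1) ≤ 7 * Real.exp a * (3 * Real.exp (u / 2) + Real.exp (u / 2)) := by gcongr
        _ = 28 * (Real.exp a * Real.exp (u / 2)) := by ring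
        _ ≤ Real.exp 27 * (Real.exp a * Real.exp (u / 2)) := by gcongr
        _ = Real.exp (27 + (a + u / 2)) := by rw [Real.exp_add, Real.exp_add]
        _ ≤ _ := exp_nat_le (by linarith)
  -- PiK
  set Pk := PiK K (K ^ 2) z with hPk
  have hPi := PiK_ge hs
  rw [← hPk] at hPi
  have hPi2 : Real.exp (-(96 * a)) ≤ Pk := le_trans (exp_nat_le (by linarith)) hPi
  have hM : Real.exp (u - 99 * a) / 2 ≤ ((T2 : ℝ) - T1) * Pk := by
    calc Real.exp (u - 99 * a) / 2 = (Real.exp (u - 3 * a) / 2) * Real.exp (-(96 * a)) := by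
          rw [div_mul_eq_mul_div, ← Real.exp_add]; ring_nf
      _ ≤ _ := by
        have : Real.exp (u - 3 * a) / 2 ≤ (T2 : ℝ) - T1 := by linarith
        gcongr
  have hPk0 : 0 < Pk := lt_of_lt_of_le (Real.exp_pos _) hPi
  set v := ⌊Real.exp (u / 50)⌋₊ with hv
  have hv1 : (v : ℝ) ≤ Real.exp (u / 50) := Nat.floor_le (Real.exp_pos _).le
  have hv2 : Real.exp (u / 50) < v + 1 := Nat.lt_floor_add_one _
  have hzv : z ≤ v := by
    have h1 : z * z ≤ Real.exp (u / 50) := by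
      rw [hz, ← Real.exp_add]
      apply exp_nat_le
      have : u / (50000 * K) ≤ u / 100 := by gcongr; linarith
      linarith
    linarith [mul_le_mul_of_nonneg_right hz16 hz0.le]
  have hvpos : 1 ≤ v := by
    have : (1 : ℝ) ≤ v := by linarith
    exact_mod_cast this
  set R0 := Real.log (1000 * K) + 20 with hR0
  have hlK : 0 ≤ Real.log (1000 * K) := Real.log_nonneg (by linarith)
  have hR01 : 1 ≤ R0 := by linarith
  have hrho : ∑ p ∈ Qv z v, rho p ≤ R0 := by
    refine (sum_rho z (by linarith) v hzv).trans ?_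
    rw [hR0]
    have hlz : Real.log z = u / (50000 * K) := Real.log_exp _
    have hlv : Real.log v ≤ u / 50 := by
      rw [← Real.log_exp (u / 50)]; exact Real.log_le_log (by linarith) hv1
    have hlv0 : 0 < Real.log v := Real.log_pos (by linarith)
    have : Real.log (Real.log v / Real.log z) ≤ Real.log (1000 * K) := by
      apply Real.log_le_log
      · apply div_pos hlv0; rw [hlz]; positivity
      · rw [hlz, div_le_iff₀ (by positivity)]
        refine hlv.trans (le_of_eq ?_)
        field_simp; norm_num
    linarith
  set U := 100000 * K with hU
  have hUle : ∀ j ∈ Ioc 0 K, (Lf (VV (K ^ 2)) j T2 : ℝ) ≤ ((⌊z⌋₊ + 1 : ℕ) : ℝ) ^ U := by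
    intro j hj
    refine (hLf j hj).trans ?_
    calc Real.exp (2 * u) = z ^ U := by
          rw [hz, ← Real.exp_nat_mul]; congr 1; rw [hU]; push_cast; field_simp; norm_num
      _ ≤ _ := by
        gcongr
        push_cast; exact (Nat.lt_floor_add_one z).le
  have hAle : ∀ j ∈ Ioc 0 K, (Lf (VV (K ^ 2)) j T2 : ℝ) ≤ ((v + 1 : ℕ) : ℝ) ^ 100 := by
    intro j hj
    refine (hLf j hj).trans ?_
    calc Real.exp (2 * u) = Real.exp (u / 50) ^ 100 := by
          rw [← Real.exp_nat_mul]; congr 1; push_cast; ring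
      _ ≤ _ := by
        gcongr
        push_cast; exact hv2.le
  set E : ℝ := (m + 1) * z ^ (1000 * K) * (z ^ (1000 * K) * R) with hE
  have hEle : E ≤ Real.exp (3 * a + u / 50 + (u / 50 + 3 * u / 5)) := by
    rw [hE, hz1000, hR, Real.exp_add, Real.exp_add, Real.exp_add]
    gcongr
    have := Real.add_one_le_exp (3 * a)
    linarith
  have h2U : (2 : ℝ) ^ U ≤ Real.exp (100000 * K) := by
    calc (2 : ℝ) ^ U ≤ Real.exp 1 ^ U := by
          gcongr
          have := Real.add_one_le_exp 1; linarith
      _ = Real.exp (100000 * K) := by rw [← Real.exp_nat_mul, hU]; push_cast; ring_nf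
  have hexp7 : (600 : ℝ) ≤ Real.exp 7 := by
    have h1 : Real.exp 7 = Real.exp 1 ^ 7 := by rw [← Real.exp_nat_mul]; norm_num
    rw [h1]
    have := Real.exp_one_gt_d9
    calc (600 : ℝ) ≤ 2.7 ^ 7 := by norm_num
      _ ≤ _ := by gcongr; linarith
  set cc := Real.exp (-lam) with hcc
  have hcc0 : 0 < cc := Real.exp_pos _
  have hbase : Real.exp (u - 99 * a - lam - 7) ≤ 1 / 300 * cc * (((T2 : ℝ) - T1) * Pk) := by
    have h1 : Real.exp (-7) ≤ 1 / 600 := by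
      rw [Real.exp_neg, ← one_div]; gcongr
    calc Real.exp (u - 99 * a - lam - 7) = Real.exp (-7) * cc * Real.exp (u - 99 * a) := by
          rw [hcc, ← Real.exp_add, ← Real.exp_add]; ring_nf
      _ ≤ 1 / 600 * cc * Real.exp (u - 99 * a) := by gcongr
      _ = 1 / 300 * cc * (Real.exp (u - 99 * a) / 2) := by ring
      _ ≤ _ := by gcongr
  have herr : (1 + v) * E + 2 ^ U * (2 * ((T2 : ℝ) - T1) / z + v) ≤ 1 / 100 * cc * (((T2 : ℝ) - T1) * Pk) := by
    have p1 : (1 + v) * E ≤ 1 / 300 * cc * (((T2 : ℝ) - T1) * Pk) := by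
      refine le_trans ?_ hbase
      have h1 : (1 : ℝ) + v ≤ Real.exp (1 + u / 50) := by
        rw [Real.exp_add]
        have h2 : (1 : ℝ) ≤ Real.exp (u / 50) := Real.one_le_exp (by positivity)
        have := Real.add_one_le_exp 1
        linarith [mul_le_mul_of_nonneg_right (by linarith : 2 ≤ Real.exp 1) (zero_le_one.trans h2)]
      calc (1 + v) * E ≤ Real.exp (1 + u / 50) * Real.exp (3 * a + u / 50 + (u / 50 + 3 * u / 5)) := by gcongr
        _ = Real.exp (1 + u / 50 + (3 * a + u / 50 + (u / 50 + 3 * u / 5))) := by rw [← Real.exp_add]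
        _ ≤ _ := exp_nat_le (by linarith)
    have p2 : 2 ^ U * (v : ℝ) ≤ 1 / 300 * cc * (((T2 : ℝ) - T1) * Pk) := by
      refine le_trans ?_ hbase
      calc 2 ^ U * (v : ℝ) ≤ Real.exp (100000 * K) * Real.exp (u / 50) := by gcongr
        _ = Real.exp (100000 * K + u / 50) := by rw [← Real.exp_add]
        _ ≤ _ := exp_nat_le (by linarith)
    have p3 : 2 ^ U * (2 * ((T2 : ℝ) - T1) / z) ≤ 1 / 300 * cc * (((T2 : ℝ) - T1) * Pk) := by
      have q1 : 2 ^ U * 2 / z ≤ 1 / 300 * cc * Pk := by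
        have r1 : Real.exp (-6) ≤ 1 / 300 := by
          rw [Real.exp_neg, ← one_div]; gcongr
          have h1 : Real.exp 6 = Real.exp 1 ^ 6 := by rw [← Real.exp_nat_mul]; norm_num
          rw [h1]
          have := Real.exp_one_gt_d9
          calc (300 : ℝ) ≤ 2.7 ^ 6 := by norm_num
            _ ≤ _ := by gcongr; linarith
        have r2 : 100000 * K + 1 + lam + 6 + 32 * K * m ≤ u / (50000 * K) := by
          rw [le_div_iff₀ (by positivity)]
          have s1 : lam * K ≤ lam * a := by gcongr
          linarith
        calc 2 ^ U * 2 / z ≤ Real.exp (100000 * K) * Real.exp 1 / z := by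
              gcongr
              have := Real.add_one_le_exp 1; linarith
          _ = Real.exp (100000 * K + 1 - u / (50000 * K)) := by rw [hz, ← Real.exp_add, ← Real.exp_sub]
          _ ≤ Real.exp (-6 + -lam + -(32 * K * m)) := exp_nat_le (by linarith)
          _ = Real.exp (-6) * cc * Real.exp (-(32 * K * m)) := by rw [hcc, Real.exp_add, Real.exp_add]
          _ ≤ _ := by gcongr
      have e : 2 ^ U * (2 * ((T2 : ℝ) - T1) / z) = ((T2 : ℝ) - T1) * (2 ^ U * 2 / z) := by ring
      rw [e]
      have : 0 ≤ (T2 : ℝ) - T1 := by linarith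
      calc _ ≤ ((T2 : ℝ) - T1) * (1 / 300 * cc * Pk) := by gcongr
        _ = _ := by ring
    have e : 2 ^ U * (2 * ((T2 : ℝ) - T1) / z + v) = 2 ^ U * (2 * ((T2 : ℝ) - T1) / z) + 2 ^ U * (v : ℝ) := by ring
    rw [e]; linarith
  have hfin := assembly hs v 100 U hvpos R0 hR01 hrho hUle hAle E hE cc hcc0
    (by rw [hcc]; exact Real.exp_le_one_iff.2 (by linarith)) (hc z) _ rfl herr
  refine ⟨T1, T2, hx, le_trans ?_ hfin⟩
  set B := (2 : ℝ) ^ (11 / 10 * R0 + (100 : ℕ)) with hB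
  have hB0 : 0 < B := by rw [hB]; positivity
  have hBle : B ≤ Real.exp (K + 1200) := by
    rw [hB, Real.rpow_def_of_pos (by norm_num)]
    apply exp_nat_le
    have h1 := Real.log_two_lt_d9
    have h2 := Real.log_two_gt_d9
    have h3 : Real.log (1000 * K) ≤ 1000 + Real.log K := by
      rw [Real.log_mul (by norm_num) (by positivity)]
      have := Real.log_le_sub_one_of_pos (by norm_num : (0 : ℝ) < 1000)
      linarith
    have h4 : Real.log K ≤ K := by
      have := Real.log_le_sub_one_of_pos (by linarith : (0 : ℝ) < K)
      linarith
    push_cast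
    have h5 : Real.log 2 * (11 / 10 * R0 + 100) ≤ 7 / 10 * (11 / 10 * R0 + 100) := by gcongr; linarith
    linarith
  rw [le_div_iff₀ hB0]
  have h9 : Real.exp (-7) ≤ 9 / 1000 := by
    rw [Real.exp_neg]
    calc (Real.exp 7)⁻¹ ≤ (600 : ℝ)⁻¹ := by gcongr
      _ ≤ _ := by norm_num
  have h10 : Real.exp (-1) ≤ 1 / 2 := by
    rw [Real.exp_neg, ← one_div]; gcongr
    have := Real.add_one_le_exp 1; linarith
  calc Real.exp (u - u / l) * B ≤ Real.exp (u - u / l) * Real.exp (K + 1200) := by gcongr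
    _ = Real.exp (u - u / l + (K + 1200)) := by rw [← Real.exp_add]
    _ ≤ Real.exp (-7 + -lam + ((u - 99 * a) + -1)) := exp_nat_le (by linarith)
    _ = Real.exp (-7) * cc * (Real.exp (u - 99 * a) * Real.exp (-1)) := by rw [hcc, Real.exp_add, Real.exp_add, Real.exp_add]
    _ ≤ 9 / 1000 * cc * (Real.exp (u - 99 * a) * (1 / 2)) := by gcongr
    _ = 9 / 1000 * cc * (Real.exp (u - 99 * a) / 2) := by ring
    _ ≤ _ := by gcongr
end

open Finset

lemma Scount_fin (x : ℝ) : {n : ℕ | (n : ℝ) ≤ x ∧ IsSumTwoSquares n}.Finite := by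
  apply (Set.finite_Iic ⌊x⌋₊).subset
  intro n hn
  exact Nat.le_floor hn.1

lemma Scount_diff (K t : ℕ) (hK : 1 ≤ K) (y : ℝ) (hy : (K : ℝ) ^ 2 ≤ y) :
    (Jc K (VV (K ^ 2)) t : ℝ) ≤ (Scount ((((K ^ 2).factorial ^ 3 * t : ℕ) : ℝ) + y) : ℝ) -
      (Scount (((K ^ 2).factorial ^ 3 * t : ℕ) : ℝ) : ℝ) := by
  classical
  set x := (K ^ 2).factorial ^ 3 * t with hx
  set F := (Ioc 0 K).filter (fun j => rr (Lf (VV (K ^ 2)) j t) ≠ 0) with hF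
  have hJ : Jc K (VV (K ^ 2)) t = (F.image (fun j => x + j ^ 2)).card := by
    rw [card_image_of_injective]
    · rfl
    · intro i j h
      simp only [Nat.add_left_cancel_iff] at h
      exact Nat.pow_left_injective (by norm_num : 2 ≠ 0) h
  have hdisj : Disjoint {n : ℕ | (n : ℝ) ≤ (x : ℝ) ∧ IsSumTwoSquares n} ((F.image (fun j => x + j ^ 2) : Finset ℕ) : Set ℕ) := by
    rw [Set.disjoint_left]
    rintro n ⟨h1, _⟩ h2
    rw [mem_coe, mem_image] at h2
    obtain ⟨j, hj, rfl⟩ := h2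
    have h3 : x + j ^ 2 ≤ x := by exact_mod_cast h1
    have h4 := (mem_Ioc.1 (mem_filter.1 hj).1).1
    have : 0 < j ^ 2 := by positivity
    omega
  have h := Set.ncard_union_eq hdisj (Scount_fin _) (finite_toSet _)
  rw [Set.ncard_coe_finset, ← hJ] at h
  have hsub : {n : ℕ | (n : ℝ) ≤ (x : ℝ) ∧ IsSumTwoSquares n} ∪ ((F.image (fun j => x + j ^ 2) : Finset ℕ) : Set ℕ) ⊆
      {n : ℕ | (n : ℝ) ≤ (x : ℝ) + y ∧ IsSumTwoSquares n} := by
    rintro n (⟨h1, h2⟩ | h1)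
    · exact ⟨by nlinarith, h2⟩
    · rw [mem_coe, mem_image] at h1
      obtain ⟨j, hj, rfl⟩ := h1
      rw [hF, mem_filter, mem_Ioc] at hj
      obtain ⟨⟨h0, h1⟩, h2⟩ := hj
      refine ⟨?_, ?_⟩
      · push_cast
        have : (j : ℝ) ≤ K := by exact_mod_cast h1
        have : (j : ℝ) ^ 2 ≤ (K : ℝ) ^ 2 := by gcongr
        linarith
      · obtain ⟨h3, a, b, h4⟩ := rr_sots _ h2
        refine ⟨by positivity, j * a, j * b, ?_⟩
        rw [hx, ← VV_Lf h0 (by nlinarith), h4]; ring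
  have h5 := Set.ncard_le_ncard hsub (Scount_fin _)
  rw [h] at h5
  have h6 : (Scount (x : ℝ) : ℝ) + Jc K (VV (K ^ 2)) t ≤ Scount ((x : ℝ) + y) := by
    unfold Scount; exact_mod_cast h5
  linarith

lemma large_X (C : ℝ) : ∃ X0 : ℝ, ∀ X, X0 ≤ X → 0 < X ∧ 1 < Real.log X ∧ 1 ≤ Real.log (Real.log X) ∧
    C * (Real.log X ^ ((5 : ℝ) / 9) * Real.log (Real.log X)) ≤ Real.log X / Real.log (Real.log X) := by
  have h1 : ∀ᶠ u : ℝ in Filter.atTop, C * (u ^ ((5 : ℝ) / 9) * Real.log u) ≤ u / Real.log u := by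
    have h := (isLittleO_log_rpow_atTop (by norm_num : (0 : ℝ) < 2 / 9)).bound (c := 1 / (|C| + 1)) (by positivity)
    filter_upwards [h, Filter.eventually_ge_atTop (3 : ℝ)] with u hu hu3
    have hl : 0 < Real.log u := Real.log_pos (by linarith)
    rw [Real.norm_of_nonneg hl.le, Real.norm_of_nonneg (by positivity)] at hu
    set w := u ^ ((2 : ℝ) / 9) with hw
    have hw0 : 0 ≤ w := by positivity
    have hw2 : w * w * u ^ ((5 : ℝ) / 9) = u := by
      rw [hw, ← Real.rpow_add (by linarith), ← Real.rpow_add (by linarith)]; norm_num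
    have hu' : (|C| + 1) * Real.log u ≤ w := by
      rw [div_mul_eq_mul_div, one_mul, le_div_iff₀ (by positivity)] at hu; linarith
    have hC0 := abs_nonneg C
    rw [le_div_iff₀ hl]
    have h5 : Real.log u ≤ w := by nlinarith
    have h6 : C * Real.log u ≤ w := by nlinarith [le_abs_self C]
    have h7 : C * Real.log u * Real.log u ≤ w * w := by
      calc _ ≤ w * Real.log u := by gcongr
        _ ≤ _ := by gcongr
    have h8 : 0 ≤ u ^ ((5 : ℝ) / 9) := by positivity
    calc _ = (C * Real.log u * Real.log u) * u ^ ((5 : ℝ) / 9) := by ring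
      _ ≤ w * w * u ^ ((5 : ℝ) / 9) := by gcongr
      _ = u := hw2
  have h2 : ∀ᶠ X : ℝ in Filter.atTop, 0 < X ∧ 1 < Real.log X ∧ 1 ≤ Real.log (Real.log X) ∧
    C * (Real.log X ^ ((5 : ℝ) / 9) * Real.log (Real.log X)) ≤ Real.log X / Real.log (Real.log X) := by
    filter_upwards [Filter.eventually_gt_atTop 0, Real.tendsto_log_atTop.eventually_gt_atTop 1,
      (Real.tendsto_log_atTop.comp Real.tendsto_log_atTop).eventually_ge_atTop 1, Real.tendsto_log_atTop.eventually h1] with X a b c d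
    exact ⟨a, b, c, d⟩
  exact Filter.eventually_atTop.1 h2

lemma s_bound (c : ℝ) (hc : 0 < c) (y : ℝ) (K : ℕ) (hK : 4 ≤ K) (hy0 : 0 ≤ y) (hy : Real.sqrt y ≤ K + 1) :
    c / (20 * 2 ^ 122 * 1000 * 2) * y ^ ((1 : ℝ) / 10) ≤
      5 / 100 * c * K / (2 : ℝ) ^ (11 / 10 * (Real.log (1000 * K) + 20) + (100 : ℕ)) := by
  have hKr : (4 : ℝ) ≤ K := by exact_mod_cast hK
  have hK0 : (0 : ℝ) < K := by linarith
  have hB : (2 : ℝ) ^ (11 / 10 * (Real.log (1000 * K) + 20) + (100 : ℕ)) ≤ 2 ^ 122 * 1000 * (K : ℝ) ^ ((4 : ℝ) / 5) := by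
    have e : 11 / 10 * (Real.log (1000 * K) + 20) + (100 : ℕ) = 11 / 10 * Real.log (1000 * K) + (122 : ℕ) := by push_cast; ring
    rw [e, Real.rpow_add (by norm_num), Real.rpow_natCast, mul_comm, mul_assoc]
    gcongr
    calc (2 : ℝ) ^ (11 / 10 * Real.log (1000 * K)) = Real.exp (Real.log (1000 * K) * (11 / 10 * Real.log 2)) := by
          rw [Real.rpow_def_of_pos (by norm_num)]; ring_nf
      _ ≤ Real.exp (Real.log (1000 * K) * (4 / 5)) := by
          have := Real.log_two_lt_d9
          have h0 : 0 ≤ Real.log (1000 * K) := Real.log_nonneg (by linarith)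
          apply Real.exp_le_exp.2
          apply mul_le_mul_of_nonneg_left _ h0
          linarith
      _ = (1000 * (K : ℝ)) ^ ((4 : ℝ) / 5) := by rw [Real.rpow_def_of_pos (by positivity)]
      _ = (1000 : ℝ) ^ ((4 : ℝ) / 5) * (K : ℝ) ^ ((4 : ℝ) / 5) := Real.mul_rpow (by norm_num) hK0.le
      _ ≤ (1000 : ℝ) ^ (1 : ℝ) * (K : ℝ) ^ ((4 : ℝ) / 5) := by
          gcongr
          · norm_num
          · norm_num
      _ = _ := by rw [Real.rpow_one]
  have hy1 : y ^ ((1 : ℝ) / 10) ≤ 2 * (K : ℝ) ^ ((1 : ℝ) / 5) := by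
    calc y ^ ((1 : ℝ) / 10) = (Real.sqrt y) ^ ((1 : ℝ) / 5) := by
          rw [Real.sqrt_eq_rpow, ← Real.rpow_mul hy0]; norm_num
      _ ≤ (2 * (K : ℝ)) ^ ((1 : ℝ) / 5) := by
          gcongr; linarith
      _ = (2 : ℝ) ^ ((1 : ℝ) / 5) * (K : ℝ) ^ ((1 : ℝ) / 5) := Real.mul_rpow (by norm_num) hK0.le
      _ ≤ (2 : ℝ) ^ (1 : ℝ) * (K : ℝ) ^ ((1 : ℝ) / 5) := by
          gcongr
          · norm_num
          · norm_num
      _ = _ := by rw [Real.rpow_one]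
  have hKK : (K : ℝ) = (K : ℝ) ^ ((1 : ℝ) / 5) * (K : ℝ) ^ ((4 : ℝ) / 5) := by
    rw [← Real.rpow_add hK0]; norm_num
  rw [le_div_iff₀ (by positivity)]
  calc _ ≤ c / (20 * 2 ^ 122 * 1000 * 2) * (2 * (K : ℝ) ^ ((1 : ℝ) / 5)) * (2 ^ 122 * 1000 * (K : ℝ) ^ ((4 : ℝ) / 5)) := by gcongr
    _ = 5 / 100 * c * ((K : ℝ) ^ ((1 : ℝ) / 5) * (K : ℝ) ^ ((4 : ℝ) / 5)) := by ring
    _ = _ := by rw [← hKK]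

theorem sums_of_two_squares_in_short_intervals :
    ∃ c : ℝ, 0 < c ∧ ∃ c0 : ℝ, 0 < c0 ∧ ∃ X0 : ℝ, ∀ X : ℝ, X0 ≤ X →
      ∀ y : ℝ, c0 ≤ y → y ≤ Real.log X ^ ((5 : ℝ) / 9) →
        X ^ (1 - 1 / Real.log (Real.log X)) ≤
          (({x : ℕ | X ≤ (x : ℝ) ∧ (x : ℝ) ≤ 2 * X ∧
            c * y ^ ((1 : ℝ) / 10) ≤ (Scount ((x : ℝ) + y) : ℝ) - (Scount (x : ℝ) : ℝ)}).ncard : ℝ) := by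
  classical
  obtain ⟨c, hc0, hc1, hc⟩ := Hz_lower
  set lam := -Real.log c with hlamd
  have hlam : 0 ≤ lam := by
    have := Real.log_nonpos hc0.le hc1
    linarith
  have hexp : Real.exp (-lam) = c := by rw [hlamd, neg_neg, Real.exp_log hc0]
  obtain ⟨X0, hX0⟩ := large_X (10 ^ 11 * (1 + lam))
  refine ⟨c / (20 * 2 ^ 122 * 1000 * 2), by positivity, 16, by norm_num, X0, ?_⟩
  intro X hX y hy1 hy2
  obtain ⟨hXp, hu1, hl, hC⟩ := hX0 X hX
  set u := Real.log X with hu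
  set l := Real.log u with hld
  have hXe : Real.exp u = X := Real.exp_log hXp
  set K := ⌊Real.sqrt y⌋₊ with hKd
  have hs4 : 4 ≤ Real.sqrt y := Real.le_sqrt_of_sq_le (by linarith)
  have hK : 4 ≤ K := Nat.le_floor (by exact_mod_cast hs4)
  have hKr : (4 : ℝ) ≤ K := by exact_mod_cast hK
  have hKs : (K : ℝ) ≤ Real.sqrt y := Nat.floor_le (Real.sqrt_nonneg y)
  have hK2 : (K : ℝ) ^ 2 ≤ y := by
    calc (K : ℝ) ^ 2 ≤ Real.sqrt y ^ 2 := by gcongr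
      _ = y := Real.sq_sqrt (by linarith)
  set b := u ^ ((5 : ℝ) / 9) with hb
  have hK2b : (K : ℝ) ^ 2 ≤ b := hK2.trans hy2
  have hb0 : 0 ≤ b := by positivity
  have hbu : b ≤ u := by
    calc b ≤ u ^ (1 : ℝ) := Real.rpow_le_rpow_of_exponent_le hu1.le (by norm_num)
      _ = u := Real.rpow_one u
  have hlogN : Real.log ((K : ℝ) ^ 2) ≤ l := Real.log_le_log (by positivity) (hK2b.trans hbu)
  have hba : b ≤ b * l := by nlinarith
  set m := ⌈2 * l⌉₊ with hm
  have hm1 : 2 * l ≤ m := Nat.le_ceil _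
  have hm2 : (m : ℝ) ≤ 3 * l := by
    have := Nat.ceil_lt_add_one (by linarith : 0 ≤ 2 * l)
    linarith
  have hW : (((K ^ 2).factorial ^ 3 : ℕ) : ℝ) ≤ Real.exp (3 * (b * l)) := by
    have h1 : (((K ^ 2).factorial : ℕ) : ℝ) ≤ Real.exp (b * l) := by
      calc (((K ^ 2).factorial : ℕ) : ℝ) ≤ ((K ^ 2) ^ (K ^ 2) : ℕ) := by exact_mod_cast Nat.factorial_le_pow _
        _ = Real.exp (((K ^ 2 : ℕ) : ℝ) * Real.log ((K : ℝ) ^ 2)) := by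
            rw [Real.exp_nat_mul, Real.exp_log (by positivity)]; push_cast; rfl
        _ ≤ _ := by
            apply Real.exp_le_exp.2
            push_cast
            calc _ ≤ (K : ℝ) ^ 2 * l := by gcongr
              _ ≤ _ := by gcongr
    push_cast
    calc _ ≤ Real.exp (b * l) ^ 3 := by gcongr
      _ = _ := by rw [← Real.exp_nat_mul]; norm_num
  have hmu : u ≤ 2 ^ m := by
    calc u = Real.exp l := (Real.exp_log (by linarith)).symm
      _ ≤ Real.exp (m * Real.log 2) := by
          apply Real.exp_le_exp.2
          have := Real.log_two_gt_d9
          nlinarith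
      _ = 2 ^ m := by rw [Real.exp_nat_mul, Real.exp_log (by norm_num)]
  obtain ⟨T1, T2, hx, hcard⟩ := param lam hlam (by rw [hexp]; exact hc) u (b * l) l K m hK (hK2b.trans hba)
    (by
      calc (K : ℝ) ^ 2 * m ≤ b * (3 * l) := by gcongr
        _ = _ := by ring) hl hW
    (by
      calc K * Real.log ((K : ℝ) ^ 2) ≤ K * l := by gcongr
        _ ≤ b * l := by
          gcongr
          nlinarith) hmu hC
  rw [hXe] at hx
  rw [hexp] at hcard
  have e1 : X ^ (1 - 1 / l) = Real.exp (u - u / l) := by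
    rw [Real.rpow_def_of_pos hXp]; congr 1; ring
  rw [e1]
  refine hcard.trans ?_
  have hWpos : 0 < (K ^ 2).factorial ^ 3 := by positivity
  set F := (Ioc T1 T2).filter (fun t => 5 / 100 * c * K /
        (2 : ℝ) ^ (11 / 10 * (Real.log (1000 * K) + 20) + (100 : ℕ)) ≤ (Jc K (VV (K ^ 2)) t : ℝ)) with hF
  have hinj : F.card = (F.image (fun t => (K ^ 2).factorial ^ 3 * t)).card := by
    rw [card_image_of_injective]
    intro s t h
    exact Nat.eq_of_mul_eq_mul_left hWpos h
  rw [hinj, ← Set.ncard_coe_finset]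
  rw [Nat.cast_le]
  apply Set.ncard_le_ncard
  · intro n hn
    rw [mem_coe, mem_image] at hn
    obtain ⟨t, ht, rfl⟩ := hn
    rw [hF, mem_filter] at ht
    obtain ⟨h1, h2⟩ := hx t ht.1
    refine ⟨h1, h2, ?_⟩
    exact ((s_bound c hc0 y K hK (by linarith) (Nat.lt_floor_add_one _).le).trans ht.2).trans (Scount_diff K t (by omega) y hK2)
  · apply (Set.finite_Iic ⌊2 * X⌋₊).subset
    intro n hn
    exact Nat.le_floor hn.2.1
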